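/- Let B be the open unit ball of ℝ⁴ and B̄ its closure. Let Λ > 0, let (ρ_k) be a sequence of reals with 0 < ρ_k ≤ Λ, and let (u_k) be a sequence of solutions of the Dirichlet mean field problem on B with parameters ρ_k such that sup_{x ∈ B̄} u_k(x) → +∞. Then, after passing to a subsequence, there exist a positive integer m and m distinct points x₁, …, x_m in the open ball B such that: (i) u_k converges to u₀ := 64π²·∑_{j=1}^m G(·, x_j) uniformly on every compact subset of B̄ ∖ {x₁,…,x_m}, where G is Boggio's Green function on the unit ball; and (ii) for each j ∈ {1,…,m}, the Fréchet derivative at x_j of the map x ↦ R(x, x_j) + ∑_{l ≠ j} G(x, x_l) is the zero linear map, where R(x,y) = G(x,y) + log‖x−y‖/(8π²) is the regular part extended smoothly across the diagonal. -/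

import Mathlib

open MeasureTheory Metric Filter

noncomputable section

/-- The Laplacian of `f : ℝ⁴ → ℝ` at `x`: the trace of the second derivative. -/
def lap (f : EuclideanSpace ℝ (Fin 4) → ℝ) (x : EuclideanSpace ℝ (Fin 4)) : ℝ :=
  ∑ i : Fin 4,
    fderiv ℝ (fun y => fderiv ℝ f y (EuclideanSpace.single i (1:ℝ))) x
      (EuclideanSpace.single i (1:ℝ))

/-- `u` is a solution of the Dirichlet mean field problem on the open unit ball of `ℝ⁴`
with parameter `ρ`. -/
def IsMFSolution (ρ : ℝ) (u : EuclideanSpace ℝ (Fin 4) → ℝ) : Prop :=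
  ContDiffOn ℝ 4 u (closedBall (0 : EuclideanSpace ℝ (Fin 4)) 1) ∧
  (∀ x ∈ ball (0 : EuclideanSpace ℝ (Fin 4)) 1,
    lap (lap u) x
      = ρ * Real.exp (u x) /
          ∫ y in ball (0 : EuclideanSpace ℝ (Fin 4)) 1, Real.exp (u y)) ∧
  (∀ x : EuclideanSpace ℝ (Fin 4), ‖x‖ = 1 →
    u x = 0 ∧ fderivWithin ℝ u (closedBall (0 : EuclideanSpace ℝ (Fin 4)) 1) x = 0)

/-- Boggio's auxiliary quantity `[x,y] = √(‖x−y‖² + (1−‖x‖²)(1−‖y‖²))`. -/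
def brkt (x y : EuclideanSpace ℝ (Fin 4)) : ℝ :=
  Real.sqrt (‖x - y‖ ^ 2 + (1 - ‖x‖ ^ 2) * (1 - ‖y‖ ^ 2))

/-- Boggio's Green function of the bilaplacian with Dirichlet boundary conditions on the
unit ball of `ℝ⁴`. -/
def boggioG (x y : EuclideanSpace ℝ (Fin 4)) : ℝ :=
  (1 / (8 * Real.pi ^ 2)) * ∫ v in (1:ℝ)..(brkt x y / ‖x - y‖), (v ^ 2 - 1) / v ^ 3

/-- The regular part of Boggio's Green function, extended smoothly across the diagonal:
`R(x,y) = (1/(8π²))( log [x,y] + ‖x−y‖²/(2[x,y]²) − 1/2 )`. -/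
def regR (x y : EuclideanSpace ℝ (Fin 4)) : ℝ :=
  (1 / (8 * Real.pi ^ 2)) *
    (Real.log (brkt x y) + ‖x - y‖ ^ 2 / (2 * brkt x y ^ 2) - 1 / 2)

/-!
Boggio's representation formula turns the boundary value problem into an integral equation whose
kernel is explicit and decreases under reflection away from the origin, so the method of moving
planes applies: every solution is radial and radially decreasing, and blow-up can only occur at the
origin. In the logarithmic time `t = log r` the radial equation becomes a first-order system with a
conserved Pohozaev-type quantity. Because the mass is bounded by `Λ`, the part of it carried by
`r ≥ d` tends to zero, and conservation then forces the mass concentrating at the origin to be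
`64 π²`. Hence the whole family converges to `64 π² G(·, 0) = -8 log ‖·‖ - 4 + 4 ‖·‖ ^ 2`, and the
balancing condition holds because `R(·, 0)` is a quadratic function of the norm.
-/

open Set Topology InnerProductSpace Laplacian
open scoped RealInnerProductSpace

/-! ### Calculus of the Laplacian -/

section LaplacianCalculus

variable {E : Type*} [NormedAddCommGroup E] [InnerProductSpace ℝ E]

lemma hasFDerivAt_fderiv_of_contDiffAt_two {f : E → ℝ} {x : E} (hf : ContDiffAt ℝ 2 f x) :
    (∀ᶠ y in 𝓝 x, HasFDerivAt f (fderiv ℝ f y) y) ∧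
      HasFDerivAt (fderiv ℝ f) (fderiv ℝ (fderiv ℝ f) x) x :=
  ⟨(hf.eventually (by norm_num)).mono fun _ hy => (hy.differentiableAt two_ne_zero).hasFDerivAt,
    ((hf.fderiv_right (m := 1) (by norm_num)).differentiableAt one_ne_zero).hasFDerivAt⟩

lemma hasFDerivAt_norm {x : E} (hx : x ≠ 0) :
    HasFDerivAt (fun y : E => ‖y‖) (innerSL ℝ (‖x‖⁻¹ • x)) x := by
  have h := (hasStrictFDerivAt_norm_sq x).hasFDerivAt.sqrt (by positivity)
  simp only [Real.sqrt_sq (norm_nonneg _)] at h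
  refine h.congr_fderiv ?_
  ext v
  simp
  field_simp

/-- The isotropic quadratic function `y ↦ a‖y‖² + ⟪c, y⟫ + b`. -/
def quad (a : ℝ) (c : E) (b : ℝ) (y : E) : ℝ := a * ‖y‖ ^ 2 + ⟪c, y⟫ + b

lemma contDiff_quad (a : ℝ) (c : E) (b : ℝ) {n : WithTop ℕ∞} : ContDiff ℝ n (quad a c b) :=
  ((contDiff_const.mul (contDiff_norm_sq ℝ)).add (innerSL ℝ c).contDiff).add contDiff_const

lemma hasFDerivAt_quad (a : ℝ) (c : E) (b : ℝ) (y : E) :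
    HasFDerivAt (quad a c b) (innerSL ℝ ((2 * a) • y + c)) y := by
  have h := (((hasStrictFDerivAt_norm_sq y).hasFDerivAt.const_mul a).add
    (innerSL ℝ c).hasFDerivAt).add_const b
  refine h.congr_fderiv ?_
  ext v
  simp
  ring

lemma norm_sq_grad_quad (a : ℝ) (c : E) (b : ℝ) (y : E) :
    ‖(2 * a) • y + c‖ ^ 2 = 4 * a * quad a c b y + (‖c‖ ^ 2 - 4 * a * b) := by
  rw [norm_add_sq_real, norm_smul, inner_smul_left, real_inner_comm, quad, mul_pow,
    Real.norm_eq_abs, sq_abs]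
  simp
  ring

lemma inner_grad_quad (a a' : ℝ) (c c' y : E) : ⟪(2 * a') • y + c', (2 * a) • y + c⟫ =
    4 * a * a' * ‖y‖ ^ 2 + 2 * a * ⟪c', y⟫ + 2 * a' * ⟪c, y⟫ + ⟪c', c⟫ := by
  simp only [inner_add_left, inner_add_right, inner_smul_left, inner_smul_right,
    real_inner_self_eq_norm_sq, real_inner_comm c y]
  simp
  ring

variable [FiniteDimensional ℝ E]

lemma laplacian_eq_sum_of_hasFDerivAt {ι : Type*} [Fintype ι] (b : OrthonormalBasis ι ℝ E)
    {f : E → ℝ} {f' : E → E →L[ℝ] ℝ} {f'' : E →L[ℝ] E →L[ℝ] ℝ} {x : E}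
    (hf : ∀ᶠ y in 𝓝 x, HasFDerivAt f (f' y) y) (hf' : HasFDerivAt f' f'' x) :
    Δ f x = ∑ i, f'' (b i) (b i) := by
  have hfderiv : fderiv ℝ f =ᶠ[𝓝 x] f' := hf.mono fun y hy => hy.fderiv
  simp [laplacian_eq_iteratedFDeriv_orthonormalBasis f b, iteratedFDeriv_two_apply,
    hfderiv.fderiv_eq, hf'.fderiv]

lemma sum_fderiv_fderiv_eq_laplacian {ι : Type*} [Fintype ι] (b : OrthonormalBasis ι ℝ E)
    (f : E → ℝ) (x : E) : ∑ i, fderiv ℝ (fderiv ℝ f) x (b i) (b i) = Δ f x := by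
  simp [laplacian_eq_iteratedFDeriv_orthonormalBasis f b, iteratedFDeriv_two_apply]

/-- `f` is twice continuously differentiable at `x` and has Laplacian `l` there; this bundles
the smoothness side conditions of sums, products and compositions. -/
def HasLaplacianAt (f : E → ℝ) (l : ℝ) (x : E) : Prop := ContDiffAt ℝ 2 f x ∧ Δ f x = l

namespace HasLaplacianAt

variable {f g : E → ℝ} {l m : ℝ} {x : E}

lemma add (hf : HasLaplacianAt f l x) (hg : HasLaplacianAt g m x) :
    HasLaplacianAt (fun y => f y + g y) (l + m) x :=
  ⟨hf.1.add hg.1, by rw [← hf.2, ← hg.2]; exact hf.1.laplacian_add hg.1⟩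

lemma const_mul (c : ℝ) (hf : HasLaplacianAt f l x) :
    HasLaplacianAt (fun y => c * f y) (c * l) x :=
  ⟨contDiffAt_const.mul hf.1, by rw [← hf.2]; exact laplacian_smul c hf.1⟩

lemma mul (hf : HasLaplacianAt f l x) (hg : HasLaplacianAt g m x) {F G : E}
    (hF : HasFDerivAt f (innerSL ℝ F) x) (hG : HasFDerivAt g (innerSL ℝ G) x) :
    HasLaplacianAt (fun y => f y * g y) (f x * m + 2 * ⟪F, G⟫ + l * g x) x := by
  refine ⟨hf.1.mul hg.1, ?_⟩
  obtain ⟨hf₁, hf₂⟩ := hasFDerivAt_fderiv_of_contDiffAt_two hf.1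
  obtain ⟨hg₁, hg₂⟩ := hasFDerivAt_fderiv_of_contDiffAt_two hg.1
  have hfg₁ : ∀ᶠ y in 𝓝 x,
      HasFDerivAt (fun y => f y * g y) (f y • fderiv ℝ g y + g y • fderiv ℝ f y) y := by
    filter_upwards [hf₁, hg₁] with y hfy hgy using hfy.mul hgy
  have hfg₂ := (hF.smul hg₂).add (hG.smul hf₂)
  set b := stdOrthonormalBasis ℝ E
  rw [laplacian_eq_sum_of_hasFDerivAt b hfg₁ hfg₂, ← hf.2, ← hg.2,
    ← sum_fderiv_fderiv_eq_laplacian b f, ← sum_fderiv_fderiv_eq_laplacian b g,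
    ← b.sum_inner_mul_inner F G, Finset.mul_sum, Finset.mul_sum, Finset.sum_mul,
    ← Finset.sum_add_distrib, ← Finset.sum_add_distrib]
  refine Finset.sum_congr rfl fun i _ => ?_
  simp [hF.fderiv, hG.fderiv, real_inner_comm G]
  ring

lemma comp {φ φ' : ℝ → ℝ} {φ'' : ℝ} (hφ : ContDiffAt ℝ 2 φ (f x))
    (hφ₁ : ∀ᶠ s in 𝓝 (f x), HasDerivAt φ (φ' s) s) (hφ₂ : HasDerivAt φ' φ'' (f x))
    (hf : HasLaplacianAt f l x) {F : E} (hF : HasFDerivAt f (innerSL ℝ F) x) :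
    HasLaplacianAt (fun y => φ (f y)) (φ'' * ‖F‖ ^ 2 + φ' (f x) * l) x := by
  refine ⟨hφ.comp x hf.1, ?_⟩
  obtain ⟨hf₁, hf₂⟩ := hasFDerivAt_fderiv_of_contDiffAt_two hf.1
  have hφf₁ : ∀ᶠ y in 𝓝 x, HasFDerivAt (fun y => φ (f y)) (φ' (f y) • fderiv ℝ f y) y := by
    filter_upwards [hf₁, hF.continuousAt.eventually hφ₁] with y hfy hφy
      using hφy.comp_hasFDerivAt y hfy
  have hφf₂ := (hφ₂.comp_hasFDerivAt x hF).smul hf₂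
  set b := stdOrthonormalBasis ℝ E
  rw [laplacian_eq_sum_of_hasFDerivAt b hφf₁ hφf₂, ← hf.2, ← sum_fderiv_fderiv_eq_laplacian b f,
    ← real_inner_self_eq_norm_sq, ← b.sum_inner_mul_inner F F, Finset.mul_sum, Finset.mul_sum,
    ← Finset.sum_add_distrib]
  refine Finset.sum_congr rfl fun i _ => ?_
  simp [hF.fderiv, real_inner_comm F]
  ring

end HasLaplacianAt

lemma hasLaplacianAt_quad (a : ℝ) (c : E) (b : ℝ) (x : E) :
    HasLaplacianAt (quad a c b) (2 * a * Module.finrank ℝ E) x := by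
  refine ⟨(contDiff_quad a c b).contDiffAt, ?_⟩
  have h : HasFDerivAt (fun y => innerSL ℝ ((2 * a) • y + c)) ((2 * a) • innerSL ℝ (E := E)) x :=
    (innerSL ℝ (E := E)).hasFDerivAt.comp x (((hasFDerivAt_id x).const_smul (2 * a)).add_const c)
      |>.congr_fderiv (by ext; simp)
  rw [laplacian_eq_sum_of_hasFDerivAt (stdOrthonormalBasis ℝ E)
    (Eventually.of_forall (hasFDerivAt_quad a c b)) h]
  have hdiag : ∀ i, ((2 * a) • innerSL ℝ (E := E)) (stdOrthonormalBasis ℝ E i)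
      (stdOrthonormalBasis ℝ E i) = 2 * a := fun i => by
    change 2 * a * ⟪stdOrthonormalBasis ℝ E i, stdOrthonormalBasis ℝ E i⟫ = 2 * a
    simp
  rw [Finset.sum_congr rfl fun i _ => hdiag i]
  simp [mul_comm]

lemma hasLaplacianAt_quad_mul_comp_quad {a a' b b' : ℝ} {c c' x : E} {φ φ' : ℝ → ℝ} {φ'' : ℝ}
    (hφ : ContDiffAt ℝ 2 φ (quad a c b x))
    (hφ₁ : ∀ᶠ s in 𝓝 (quad a c b x), HasDerivAt φ (φ' s) s)
    (hφ₂ : HasDerivAt φ' φ'' (quad a c b x)) :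
    HasLaplacianAt (fun y => quad a' c' b' y * φ (quad a c b y))
      (quad a' c' b' x * (φ'' * (4 * a * quad a c b x + (‖c‖ ^ 2 - 4 * a * b))
          + φ' (quad a c b x) * (2 * a * Module.finrank ℝ E))
        + 2 * (φ' (quad a c b x) *
          (4 * a * a' * ‖x‖ ^ 2 + 2 * a * ⟪c', x⟫ + 2 * a' * ⟪c, x⟫ + ⟪c', c⟫))
        + 2 * a' * Module.finrank ℝ E * φ (quad a c b x)) x := by
  have hgrad := hasFDerivAt_quad a c b x
  have hcomp : HasFDerivAt (fun y => φ (quad a c b y))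
      (innerSL ℝ (φ' (quad a c b x) • ((2 * a) • x + c))) x :=
    (hφ₁.self_of_nhds.comp_hasFDerivAt x hgrad).congr_fderiv (map_smul _ _ _).symm
  have h := (hasLaplacianAt_quad a' c' b' x).mul
    ((hasLaplacianAt_quad a c b x).comp hφ hφ₁ hφ₂ hgrad) (hasFDerivAt_quad a' c' b' x) hcomp
  rwa [norm_sq_grad_quad a c b, inner_smul_right, inner_grad_quad] at h

lemma hasLaplacianAt_norm {x : E} (hx : x ≠ 0) :
    HasLaplacianAt (fun y : E => ‖y‖) ((Module.finrank ℝ E - 1) / ‖x‖) x := by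
  have hpos : 0 < ‖x‖ := norm_pos_iff.2 hx
  have hq : ∀ y : E, quad 1 0 0 y = ‖y‖ ^ 2 := fun y => by simp [quad]
  have hq0 : quad 1 0 0 x ≠ 0 := by rw [hq]; positivity
  have hsqrt₁ : ∀ᶠ s in 𝓝 (quad 1 0 0 x), HasDerivAt Real.sqrt (1 / (2 * √s)) s := by
    filter_upwards [isOpen_ne.mem_nhds hq0] with s hs using Real.hasDerivAt_sqrt hs
  have hsqrt₂ : HasDerivAt (fun s => 1 / (2 * √s)) (-1 / (4 * ‖x‖ ^ 3)) (quad 1 0 0 x) := by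
    refine (((Real.hasDerivAt_sqrt hq0).const_mul 2).fun_inv ?_).congr_deriv ?_
      |>.congr_of_eventuallyEq (Eventually.of_forall fun s => one_div _)
    · rw [hq, Real.sqrt_sq hpos.le]; positivity
    · rw [hq, Real.sqrt_sq hpos.le]; field_simp; norm_num
  have h := (hasLaplacianAt_quad 1 0 0 x).comp (Real.contDiffAt_sqrt hq0) hsqrt₁ hsqrt₂
    (hasFDerivAt_quad 1 0 0 x)
  rw [norm_sq_grad_quad 1 0 0] at h
  simp only [hq, Real.sqrt_sq (norm_nonneg _)] at h
  convert h using 1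
  simp
  field_simp
  ring

lemma hasLaplacianAt_radial {W W' : ℝ → ℝ} {w : ℝ} {x : E} (hx : x ≠ 0)
    (hW : ContDiffAt ℝ 2 W ‖x‖) (hW₁ : ∀ᶠ r in 𝓝 ‖x‖, HasDerivAt W (W' r) r)
    (hW₂ : HasDerivAt W' w ‖x‖) :
    HasLaplacianAt (fun y : E => W ‖y‖) (w + (Module.finrank ℝ E - 1) / ‖x‖ * W' ‖x‖) x := by
  have h := (hasLaplacianAt_norm hx).comp (f := fun y : E => ‖y‖) hW hW₁ hW₂ (hasFDerivAt_norm hx)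
  rw [norm_smul, norm_inv, norm_norm, inv_mul_cancel₀ (norm_ne_zero_iff.2 hx)] at h
  convert h using 1
  ring

lemma contDiffAt_laplacian {f : E → ℝ} {x : E} {n : WithTop ℕ∞} (hf : ContDiffAt ℝ (n + 2) f x) :
    ContDiffAt ℝ n (Δ f) x := by
  have h₁ : ContDiffAt ℝ (n + 1) (fderiv ℝ f) x := hf.fderiv_right (by rw [add_assoc]; norm_num)
  have h₂ : ContDiffAt ℝ n (fderiv ℝ (fderiv ℝ f)) x := h₁.fderiv_right le_rfl
  rw [← funext (sum_fderiv_fderiv_eq_laplacian (stdOrthonormalBasis ℝ E) f)]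
  exact ContDiffAt.sum fun i _ => (h₂.clm_apply contDiffAt_const).clm_apply contDiffAt_const

end LaplacianCalculus

section CoordinateLaplacian

variable {f : EuclideanSpace ℝ (Fin 4) → ℝ} {x : EuclideanSpace ℝ (Fin 4)}

lemma lap_eq_laplacian (hf : ContDiffAt ℝ 2 f x) : lap f x = Δ f x := by
  rw [lap, ← sum_fderiv_fderiv_eq_laplacian (EuclideanSpace.basisFun (Fin 4) ℝ)]
  refine Finset.sum_congr rfl fun i _ => ?_
  have h := (hasFDerivAt_fderiv_of_contDiffAt_two hf).2.clm_apply
    (hasFDerivAt_const (EuclideanSpace.single i (1 : ℝ)) x)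
  rw [h.fderiv]
  simp

lemma lap_congr {g : EuclideanSpace ℝ (Fin 4) → ℝ} (h : f =ᶠ[𝓝 x] g) : lap f x = lap g x := by
  refine Finset.sum_congr rfl fun i _ => ?_
  have hfderiv : (fun y => fderiv ℝ f y (EuclideanSpace.single i (1 : ℝ))) =ᶠ[𝓝 x]
      fun y => fderiv ℝ g y (EuclideanSpace.single i (1 : ℝ)) := by
    filter_upwards [h.fderiv (𝕜 := ℝ)] with y hy using by rw [hy]
  rw [hfderiv.fderiv_eq]

lemma lap_lap_eq_laplacian_laplacian (hf : ContDiffAt ℝ 4 f x) :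
    lap (lap f) x = Δ (Δ f) x := by
  have hlap : lap f =ᶠ[𝓝 x] Δ f := by
    filter_upwards [hf.eventually (by norm_num)] with y hy
      using lap_eq_laplacian (hy.of_le (by norm_num))
  rw [lap_congr hlap, lap_eq_laplacian (contDiffAt_laplacian (hf.of_le (by norm_num)))]

end CoordinateLaplacian

/-! ### Green's identities on a convex body -/

lemma integrableOn_interior {X : Type*} [TopologicalSpace X] [T2Space X] [MeasurableSpace X]
    [OpensMeasurableSpace X] {μ : Measure X} [IsFiniteMeasureOnCompacts μ] {K : Set X} {f : X → ℝ}
    (hK : IsCompact K) (hf : ContinuousOn f K) : IntegrableOn f (interior K) μ :=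
  (hf.integrableOn_compact hK).mono_set interior_subset

section ConvexBody

variable {E : Type*} [NormedAddCommGroup E] [NormedSpace ℝ E] {K : Set E} {f g : E → ℝ}

lemma exists_mem_frontier_norm_sub_le (hK : IsClosed K) {x y : E} (hx : x ∈ K) (hy : y ∉ K) :
    ∃ z ∈ frontier K, ‖x - z‖ ≤ ‖x - y‖ := by
  obtain ⟨z, hz, hzK⟩ : (segment ℝ x y ∩ frontier K).Nonempty := by
    by_contra! hempty
    have hint : ∀ z ∈ segment ℝ x y, z ∈ K → z ∈ interior K := fun z hz hzK => by
      by_contra hzi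
      exact hempty.subset ⟨hz, hK.frontier_eq ▸ ⟨hzK, hzi⟩⟩
    obtain ⟨z, -, hzi, hzc⟩ := (convex_segment x y).isPreconnected _ _ isOpen_interior
      hK.isOpen_compl (fun z hz => (em (z ∈ K)).imp_left (hint z hz))
      ⟨x, left_mem_segment ℝ x y, hint x (left_mem_segment ℝ x y) hx⟩
      ⟨y, right_mem_segment ℝ x y, hy⟩
    exact hzc (interior_subset hzi)
  refine ⟨z, hzK, ?_⟩
  have := dist_add_dist_of_mem_segment hz
  rw [← dist_eq_norm, ← dist_eq_norm]
  linarith [dist_nonneg (x := z) (y := y)]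

lemma lipschitzWith_indicator {C : NNReal} (hK : IsClosed K) (hf : LipschitzOnWith C f K)
    (hf₀ : ∀ x ∈ frontier K, f x = 0) : LipschitzWith C (K.indicator f) := by
  have hmix : ∀ x ∈ K, ∀ y ∉ K, |f x| ≤ C * dist x y := by
    intro x hx y hy
    obtain ⟨z, hz, hxz⟩ := exists_mem_frontier_norm_sub_le hK hx hy
    have h := hf.dist_le_mul x hx z (hK.frontier_subset hz)
    rw [hf₀ z hz, Real.dist_eq, sub_zero] at h
    exact h.trans (by rw [dist_eq_norm, dist_eq_norm]; gcongr)
  refine LipschitzWith.of_dist_le_mul fun x y => ?_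
  by_cases hx : x ∈ K <;> by_cases hy : y ∈ K
  · simpa only [indicator_of_mem hx, indicator_of_mem hy] using hf.dist_le_mul x hx y hy
  · simpa [hx, hy, Real.dist_eq] using hmix x hx y hy
  · simpa [hx, hy, Real.dist_eq, dist_comm] using hmix y hy x hx
  · simp only [indicator_of_notMem hx, indicator_of_notMem hy, dist_self]
    positivity

/-- The derivative of `f` along `K` in the direction `v`, which makes sense up to the boundary
of `K`. -/
def dirDerivWithin (K : Set E) (v : E) (f : E → ℝ) (y : E) : ℝ := fderivWithin ℝ f K y v

lemma contDiffOn_dirDerivWithin {n m : WithTop ℕ∞} (hK : UniqueDiffOn ℝ K)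
    (hf : ContDiffOn ℝ n f K) (h : m + 1 ≤ n) (v : E) :
    ContDiffOn ℝ m (dirDerivWithin K v f) K :=
  (hf.fderivWithin hK h).clm_apply contDiffOn_const

lemma dirDerivWithin_mul (hK : UniqueDiffOn ℝ K) (hf : DifferentiableOn ℝ f K)
    (hg : DifferentiableOn ℝ g K) {x : E} (hx : x ∈ K) (v : E) :
    dirDerivWithin K v (fun y => f y * g y) x =
      f x * dirDerivWithin K v g x + dirDerivWithin K v f x * g x := by
  rw [dirDerivWithin, fderivWithin_fun_mul (hK x hx) (hf x hx) (hg x hx)]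
  simp [dirDerivWithin, mul_comm]

variable [FiniteDimensional ℝ E] [MeasurableSpace E] [BorelSpace E]
  (μ : Measure E) [μ.IsAddHaarMeasure]

lemma setIntegral_interior_eq (hKc : Convex ℝ K) (hK : IsClosed K) (h : E → ℝ) :
    ∫ y in interior K, h y ∂μ = ∫ y in K, h y ∂μ := by
  refine setIntegral_congr_set (interior_subset.eventuallyLE.antisymm ?_)
  rw [ae_le_set, ← hK.frontier_eq]
  exact hKc.addHaar_frontier μ

lemma integral_dirDerivWithin_eq_zero (hKc : Convex ℝ K) (hK : IsCompact K)
    (hKi : (interior K).Nonempty) (hf : ContDiffOn ℝ 1 f K) (hf₀ : ∀ x ∈ frontier K, f x = 0)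
    (v : E) : ∫ y in interior K, dirDerivWithin K v f y ∂μ = 0 := by
  obtain ⟨C, hC⟩ := hK.exists_bound_of_continuousOn
    (hf.continuousOn_fderivWithin (uniqueDiffOn_convex hKc hKi) le_rfl)
  have hLip : LipschitzWith C.toNNReal (K.indicator f) :=
    lipschitzWith_indicator hK.isClosed (hKc.lipschitzOnWith_of_nnnorm_fderivWithin_le
      (hf.differentiableOn one_ne_zero) fun x hx => NNReal.coe_le_coe.1
        ((hC x hx).trans (Real.le_coe_toNNReal C))) hf₀
  have hsupp : HasCompactSupport (K.indicator f) :=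
    HasCompactSupport.intro hK fun x hx => indicator_of_notMem hx _
  have hzero : ∫ x, lineDeriv ℝ (K.indicator f) x v ∂μ = 0 := by
    have h := (LipschitzWith.const (1 : ℝ)).integral_lineDeriv_mul_eq (μ := μ) hLip hsupp (-v)
    simpa [lineDeriv, eq_comm] using h
  have hout : ∀ x ∉ K, lineDeriv ℝ (K.indicator f) x v = 0 := fun x hx => by
    have : K.indicator f =ᶠ[𝓝 x] fun _ => 0 := by
      filter_upwards [hK.isClosed.isOpen_compl.mem_nhds hx] with y hy
        using indicator_of_notMem hy _
    rw [this.lineDeriv_eq]; simp [lineDeriv]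
  rw [← hzero, ← setIntegral_eq_integral_of_forall_compl_eq_zero hout,
    ← setIntegral_interior_eq μ hKc hK.isClosed]
  refine setIntegral_congr_fun isOpen_interior.measurableSet fun x hx => ?_
  have hxK : K ∈ 𝓝 x := mem_interior_iff_mem_nhds.1 hx
  have hind : K.indicator f =ᶠ[𝓝 x] f := by
    filter_upwards [hxK] with y hy using indicator_of_mem hy _
  simp only [dirDerivWithin, fderivWithin_of_mem_nhds hxK, hind.lineDeriv_eq,
    ((hf.differentiableOn one_ne_zero).differentiableAt hxK).lineDeriv_eq_fderiv]

lemma integral_mul_dirDerivWithin (hKc : Convex ℝ K) (hK : IsCompact K)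
    (hKi : (interior K).Nonempty) (hf : ContDiffOn ℝ 1 f K) (hg : ContDiffOn ℝ 1 g K)
    (hf₀ : ∀ x ∈ frontier K, f x = 0) (v : E) :
    ∫ y in interior K, f y * dirDerivWithin K v g y ∂μ =
      -∫ y in interior K, dirDerivWithin K v f y * g y ∂μ := by
  have hKu := uniqueDiffOn_convex hKc hKi
  have hf' := (contDiffOn_dirDerivWithin (m := 0) hKu hf (by simp) v).continuousOn
  have hg' := (contDiffOn_dirDerivWithin (m := 0) hKu hg (by simp) v).continuousOn
  have h := integral_dirDerivWithin_eq_zero μ hKc hK hKi (hf.mul hg)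
    (fun x hx => by simp [hf₀ x hx]) v
  rw [setIntegral_congr_fun isOpen_interior.measurableSet fun x hx =>
      dirDerivWithin_mul hKu (hf.differentiableOn one_ne_zero) (hg.differentiableOn one_ne_zero)
        (interior_subset hx) v,
    integral_add (f := fun y => f y * dirDerivWithin K v g y)
      (g := fun y => dirDerivWithin K v f y * g y)
      (integrableOn_interior hK (hf.continuousOn.mul hg'))
      (integrableOn_interior hK (hf'.mul hg.continuousOn))] at h
  exact eq_neg_of_add_eq_zero_left h

end ConvexBody

section Green

variable {E : Type*} [NormedAddCommGroup E] [InnerProductSpace ℝ E] [FiniteDimensional ℝ E]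
  {K : Set E} {f g : E → ℝ}

lemma laplacianWithin_eq_sum_dirDerivWithin {ι : Type*} [Fintype ι] (b : OrthonormalBasis ι ℝ E)
    (hK : UniqueDiffOn ℝ K) (hf : ContDiffOn ℝ 2 f K) {x : E} (hx : x ∈ K) :
    (Δ[K] f) x = ∑ i, dirDerivWithin K (b i) (dirDerivWithin K (b i) f) x := by
  rw [laplacianWithin_eq_iteratedFDerivWithin_orthonormalBasis f hK hx b]
  refine Finset.sum_congr rfl fun i _ => ?_
  have hdiff : DifferentiableWithinAt ℝ (fderivWithin ℝ f K) K x :=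
    (hf.fderivWithin hK (m := 1) (by norm_num)).differentiableOn one_ne_zero x hx
  have h := fderivWithin_clm_apply (hK x hx) hdiff (differentiableWithinAt_const (b i))
  rw [iteratedFDerivWithin_two_apply f hK hx]
  change _ = fderivWithin ℝ (fun y => fderivWithin ℝ f K y (b i)) K x (b i)
  rw [h]
  simp

lemma contDiffOn_laplacianWithin {n : WithTop ℕ∞} (hK : UniqueDiffOn ℝ K)
    (hf : ContDiffOn ℝ (n + 2) f K) : ContDiffOn ℝ n (Δ[K] f) K := by
  have hsum := fun x (hx : x ∈ K) => laplacianWithin_eq_sum_dirDerivWithin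
    (stdOrthonormalBasis ℝ E) hK (hf.of_le le_add_self) hx
  refine ContDiffOn.congr (ContDiffOn.sum fun i _ => ?_) hsum
  exact contDiffOn_dirDerivWithin hK (contDiffOn_dirDerivWithin (m := n + 1) hK hf
    (by rw [add_assoc]; norm_num) _) le_rfl _

lemma laplacianWithin_eqOn_interior (hK : UniqueDiffOn ℝ K) :
    EqOn (Δ[K] f) (Δ f) (interior K) := fun x hx => by
  have hKx : K =ᶠ[𝓝 x] univ := eventuallyEq_univ.2 (mem_interior_iff_mem_nhds.1 hx)
  rw [laplacianWithin_eq_iteratedFDerivWithin_stdOrthonormalBasis f hK (interior_subset hx),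
    laplacian_eq_iteratedFDeriv_stdOrthonormalBasis, iteratedFDerivWithin_congr_set hKx,
    iteratedFDerivWithin_univ]

variable [MeasurableSpace E] [BorelSpace E] (μ : Measure E) [μ.IsAddHaarMeasure]

lemma integral_mul_laplacianWithin (hKc : Convex ℝ K) (hK : IsCompact K)
    (hKi : (interior K).Nonempty) (hf : ContDiffOn ℝ 2 f K) (hg : ContDiffOn ℝ 2 g K)
    (hf₀ : ∀ x ∈ frontier K, f x = 0 ∧ fderivWithin ℝ f K x = 0) :
    ∫ y in interior K, f y * (Δ[K] g) y ∂μ = ∫ y in interior K, (Δ[K] f) y * g y ∂μ := by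
  have hKu := uniqueDiffOn_convex hKc hKi
  set b := stdOrthonormalBasis ℝ E
  have hd : ∀ {h : E → ℝ}, ContDiffOn ℝ 2 h K → ∀ i,
      ContDiffOn ℝ 1 (dirDerivWithin K (b i) h) K := fun hh i =>
    contDiffOn_dirDerivWithin hKu hh (by norm_num) (b i)
  have hdd : ∀ {h : E → ℝ}, ContDiffOn ℝ 2 h K → ∀ i,
      ContinuousOn (dirDerivWithin K (b i) (dirDerivWithin K (b i) h)) K := fun hh i =>
    (contDiffOn_dirDerivWithin (m := 0) hKu (hd hh i) (by simp) (b i)).continuousOn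
  have hsum : ∀ {h : E → ℝ}, ContDiffOn ℝ 2 h K → ∀ y ∈ interior K,
      (Δ[K] h) y = ∑ i, dirDerivWithin K (b i) (dirDerivWithin K (b i) h) y := fun hh y hy =>
    laplacianWithin_eq_sum_dirDerivWithin b hKu hh (interior_subset hy)
  calc
    _ = ∫ y in interior K,
        ∑ i, f y * dirDerivWithin K (b i) (dirDerivWithin K (b i) g) y ∂μ :=
      setIntegral_congr_fun isOpen_interior.measurableSet fun y hy => by
        simp only [hsum hg y hy, Finset.mul_sum]
    _ = ∑ i, ∫ y in interior K, f y * dirDerivWithin K (b i) (dirDerivWithin K (b i) g) y ∂μ :=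
      integral_finsetSum _ fun i _ =>
        integrableOn_interior hK (hf.continuousOn.mul (hdd hg i))
    _ = ∑ i, ∫ y in interior K, dirDerivWithin K (b i) (dirDerivWithin K (b i) f) y * g y ∂μ :=
      Finset.sum_congr rfl fun i _ => by
        rw [integral_mul_dirDerivWithin μ hKc hK hKi (hf.of_le one_le_two) (hd hg i)
            (fun x hx => (hf₀ x hx).1),
          integral_mul_dirDerivWithin μ hKc hK hKi (hd hf i) (hg.of_le one_le_two)
            (fun x hx => by simp [dirDerivWithin, (hf₀ x hx).2]), neg_neg]
    _ = ∫ y in interior K, ∑ i, dirDerivWithin K (b i) (dirDerivWithin K (b i) f) y * g y ∂μ :=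
      (integral_finsetSum _ fun i _ =>
        integrableOn_interior hK ((hdd hf i).mul hg.continuousOn)).symm
    _ = _ := setIntegral_congr_fun isOpen_interior.measurableSet fun y hy => by
        simp only [hsum hf y hy, Finset.sum_mul]

lemma integral_mul_bilaplacian_comm (hKc : Convex ℝ K) (hK : IsCompact K)
    (hKi : (interior K).Nonempty) (hf : ContDiffOn ℝ 4 f K) (hg : ContDiffOn ℝ 4 g K)
    (hf₀ : ∀ x ∈ frontier K, f x = 0 ∧ fderivWithin ℝ f K x = 0)
    (hg₀ : ∀ x ∈ frontier K, g x = 0 ∧ fderivWithin ℝ g K x = 0) :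
    ∫ y in interior K, f y * Δ (Δ g) y ∂μ = ∫ y in interior K, g y * Δ (Δ f) y ∂μ := by
  have hKu := uniqueDiffOn_convex hKc hKi
  have hΔ : ∀ {h : E → ℝ}, ContDiffOn ℝ 4 h K → ContDiffOn ℝ 2 (Δ[K] h) K := fun hh =>
    contDiffOn_laplacianWithin hKu (hh.of_le (by norm_num))
  have hΔΔ : ∀ h : E → ℝ, EqOn (Δ[K] (Δ[K] h)) (Δ (Δ h)) (interior K) := fun h y hy => by
    rw [laplacianWithin_eqOn_interior hKu hy]
    exact (laplacian_congr_nhds ((laplacianWithin_eqOn_interior hKu).eventuallyEq_of_mem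
      (isOpen_interior.mem_nhds hy))).self_of_nhds
  calc
    _ = ∫ y in interior K, f y * (Δ[K] (Δ[K] g)) y ∂μ :=
      setIntegral_congr_fun isOpen_interior.measurableSet fun y hy => by
        simp only [hΔΔ g hy]
    _ = ∫ y in interior K, g y * (Δ[K] (Δ[K] f)) y ∂μ := by
      rw [integral_mul_laplacianWithin μ hKc hK hKi (hf.of_le (by norm_num)) (hΔ hg) hf₀,
        integral_mul_laplacianWithin μ hKc hK hKi (hg.of_le (by norm_num)) (hΔ hf) hg₀]
      simp only [mul_comm]
    _ = _ := setIntegral_congr_fun isOpen_interior.measurableSet fun y hy => by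
        simp only [hΔΔ f hy]

end Green

/-! ### Boggio's representation formula -/

section Profile

/-- The profile `Φ` of Boggio's kernel in dimension four: the Green function of the ball is a
multiple of `Φ((1 - ‖x‖²)(1 - ‖y‖²) / ‖x - y‖²)`. -/
def boggioProfile (t : ℝ) : ℝ := Real.log (1 + t) - t / (1 + t)

lemma hasDerivAt_boggioProfile {t : ℝ} (ht : -1 < t) :
    HasDerivAt boggioProfile (t / (1 + t) ^ 2) t := by
  have h1 : 1 + t ≠ 0 := by linarith
  have hd : HasDerivAt (fun t : ℝ => 1 + t) 1 t := (hasDerivAt_id t).const_add 1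
  refine ((hd.log h1).sub ((hasDerivAt_id t).div hd h1)).congr_deriv ?_
  simp only [id]
  field_simp
  ring

lemma contDiffAt_boggioProfile {t : ℝ} (ht : -1 < t) {n : WithTop ℕ∞} :
    ContDiffAt ℝ n boggioProfile t := by
  have h1 : 1 + t ≠ 0 := by linarith
  have hd : ContDiffAt ℝ n (fun t : ℝ => 1 + t) t := contDiffAt_const.add contDiffAt_id
  exact (hd.log h1).sub (contDiffAt_id.div hd h1)

lemma boggioProfile_zero : boggioProfile 0 = 0 := by simp [boggioProfile]

lemma strictMonoOn_boggioProfile : StrictMonoOn boggioProfile (Ici 0) := by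
  have hpos : ∀ {t : ℝ}, 0 ≤ t → -1 < t := fun ht => by linarith
  refine strictMonoOn_of_deriv_pos (convex_Ici 0) (fun t ht =>
    (hasDerivAt_boggioProfile (hpos ht)).continuousAt.continuousWithinAt) fun t ht => ?_
  rw [interior_Ici, mem_Ioi] at ht
  rw [(hasDerivAt_boggioProfile (hpos ht.le)).deriv]
  positivity

lemma boggioProfile_nonneg {t : ℝ} (ht : 0 ≤ t) : 0 ≤ boggioProfile t :=
  boggioProfile_zero.symm.trans_le (strictMonoOn_boggioProfile.monotoneOn self_mem_Ici ht ht)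

lemma boggioProfile_le_log {t : ℝ} (ht : 0 ≤ t) : boggioProfile t ≤ Real.log (1 + t) :=
  sub_le_self _ (by positivity)

lemma boggioProfile_le_self {t : ℝ} (ht : 0 ≤ t) : boggioProfile t ≤ t := by
  linarith [boggioProfile_le_log ht, Real.log_le_sub_one_of_pos (show 0 < 1 + t by linarith)]

lemma boggioProfile_sq_le {s : ℝ} (hs : 0 ≤ s) : boggioProfile (s ^ 2) ≤ 2 * s :=
  calc boggioProfile (s ^ 2) ≤ Real.log (1 + s ^ 2) := boggioProfile_le_log (sq_nonneg s)
    _ ≤ Real.log ((1 + s) ^ 2) := Real.log_le_log (by positivity) (by nlinarith)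
    _ = 2 * Real.log (1 + s) := by rw [Real.log_pow]; norm_num
    _ ≤ 2 * s := by linarith [Real.log_le_sub_one_of_pos (show 0 < 1 + s by linarith)]

lemma measurable_boggioProfile : Measurable boggioProfile := by
  unfold boggioProfile
  fun_prop

end Profile

section Kernel

variable {E : Type*} [NormedAddCommGroup E] {x y : E}

lemma one_sub_norm_sq_nonneg (hx : x ∈ closedBall (0 : E) 1) : 0 ≤ 1 - ‖x‖ ^ 2 := by
  have hx := mem_closedBall_zero_iff.1 hx
  nlinarith [norm_nonneg x]

lemma one_sub_norm_sq_pos (hx : x ∈ ball (0 : E) 1) : 0 < 1 - ‖x‖ ^ 2 := by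
  have hx := mem_ball_zero_iff.1 hx
  nlinarith [norm_nonneg x]

/-- The regularisation of Boggio's kernel in which `‖x‖²` is replaced by `a` and `‖x - y‖²` by
`‖x - y‖² + ε`. -/
def regBoggioKernel (x : E) (a ε : ℝ) (y : E) : ℝ :=
  boggioProfile ((1 - a) * (1 - ‖y‖ ^ 2) / (‖x - y‖ ^ 2 + ε))

/-- Boggio's kernel on the unit ball; in dimension four it is `16π²` times the Green function of
the bilaplacian with Dirichlet data. -/
def boggioKernel (x y : E) : ℝ :=
  boggioProfile ((1 - ‖x‖ ^ 2) * (1 - ‖y‖ ^ 2) / ‖x - y‖ ^ 2)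

lemma regBoggioKernel_arg_nonneg {a ε : ℝ} (ha : a ≤ 1) (hε : 0 ≤ ε)
    (hy : y ∈ closedBall (0 : E) 1) : 0 ≤ (1 - a) * (1 - ‖y‖ ^ 2) / (‖x - y‖ ^ 2 + ε) :=
  div_nonneg (mul_nonneg (sub_nonneg.2 ha) (one_sub_norm_sq_nonneg hy)) (by positivity)

lemma regBoggioKernel_arg_le {a ε : ℝ} (ha₀ : 0 ≤ a) (ha : a ≤ 1) (hε : 0 ≤ ε) (hxy : x ≠ y) :
    (1 - a) * (1 - ‖y‖ ^ 2) / (‖x - y‖ ^ 2 + ε) ≤ (‖x - y‖ ^ 2)⁻¹ := by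
  have hd : 0 < ‖x - y‖ := norm_pos_iff.2 (sub_ne_zero.2 hxy)
  rw [inv_eq_one_div]
  gcongr
  · nlinarith [sq_nonneg ‖y‖]
  · linarith

lemma regBoggioKernel_zero (x y : E) : regBoggioKernel x (‖x‖ ^ 2) 0 y = boggioKernel x y := by
  rw [regBoggioKernel, boggioKernel, add_zero]

lemma regBoggioKernel_nonneg {a ε : ℝ} (ha : a ≤ 1) (hε : 0 ≤ ε)
    (hy : y ∈ closedBall (0 : E) 1) : 0 ≤ regBoggioKernel x a ε y :=
  boggioProfile_nonneg (regBoggioKernel_arg_nonneg ha hε hy)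

lemma regBoggioKernel_le {a ε : ℝ} (ha₀ : 0 ≤ a) (ha : a ≤ 1) (hε : 0 ≤ ε)
    (hy : y ∈ closedBall (0 : E) 1) (hxy : x ≠ y) :
    regBoggioKernel x a ε y ≤ (‖x - y‖ ^ 2)⁻¹ :=
  (boggioProfile_le_self (regBoggioKernel_arg_nonneg ha hε hy)).trans
    (regBoggioKernel_arg_le ha₀ ha hε hxy)

lemma boggioKernel_arg_nonneg (hx : x ∈ closedBall (0 : E) 1) (hy : y ∈ closedBall (0 : E) 1) :
    0 ≤ (1 - ‖x‖ ^ 2) * (1 - ‖y‖ ^ 2) / ‖x - y‖ ^ 2 :=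
  div_nonneg (mul_nonneg (one_sub_norm_sq_nonneg hx) (one_sub_norm_sq_nonneg hy)) (sq_nonneg _)

lemma boggioKernel_nonneg (hx : x ∈ closedBall (0 : E) 1) (hy : y ∈ closedBall (0 : E) 1) :
    0 ≤ boggioKernel x y := boggioProfile_nonneg (boggioKernel_arg_nonneg hx hy)

lemma boggioKernel_self (x : E) : boggioKernel x x = 0 := by
  simp [boggioKernel, boggioProfile_zero]

lemma boggioKernel_le_inv_sq (hx : x ∈ closedBall (0 : E) 1) (hy : y ∈ closedBall (0 : E) 1) :
    boggioKernel x y ≤ (‖x - y‖ ^ 2)⁻¹ := by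
  rcases eq_or_ne x y with rfl | hxy
  · simp [boggioKernel_self]
  · rw [← regBoggioKernel_zero]
    exact regBoggioKernel_le (sq_nonneg _) (sub_nonneg.1 (one_sub_norm_sq_nonneg hx)) le_rfl hy hxy

lemma boggioKernel_le_inv (hx : x ∈ closedBall (0 : E) 1) (hy : y ∈ closedBall (0 : E) 1) :
    boggioKernel x y ≤ 2 * ‖x - y‖⁻¹ := by
  rcases eq_or_ne x y with rfl | hxy
  · simp [boggioKernel_self]
  · have harg := regBoggioKernel_arg_le (sq_nonneg ‖x‖)
      (sub_nonneg.1 (one_sub_norm_sq_nonneg hx)) le_rfl hxy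
    rw [add_zero, ← inv_pow] at harg
    exact (strictMonoOn_boggioProfile.monotoneOn (boggioKernel_arg_nonneg hx hy)
      (mem_Ici.2 (sq_nonneg _)) harg).trans (boggioProfile_sq_le (by positivity))

lemma measurable_regBoggioKernel [MeasurableSpace E] [BorelSpace E]
    (x : E) (a ε : ℝ) : Measurable (regBoggioKernel x a ε) :=
  measurable_boggioProfile.comp (by fun_prop)

lemma measurable_boggioKernel [MeasurableSpace E] [BorelSpace E] (x : E) :
    Measurable (boggioKernel x) :=
  measurable_boggioProfile.comp (by fun_prop)

end Kernel

section RegularizedGreen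

variable {E : Type*} [NormedAddCommGroup E] [InnerProductSpace ℝ E] {x y : E} {a b ε : ℝ}

lemma contDiffAt_regBoggioKernel {n : WithTop ℕ∞} (ha : a ≤ 1) (hε : 0 < ε)
    (hy : y ∈ closedBall (0 : E) 1) : ContDiffAt ℝ n (regBoggioKernel x a ε) y :=
  (contDiffAt_boggioProfile (neg_one_lt_zero.trans_le
    (regBoggioKernel_arg_nonneg ha hε.le hy))).comp y
    (ContDiffAt.div (contDiff_const.mul (contDiff_const.sub (contDiff_norm_sq ℝ))).contDiffAt
      (((contDiff_const.sub contDiff_id).norm_sq ℝ).add contDiff_const).contDiffAt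
      (by positivity))

lemma regBoggioKernel_dirichlet (hε : 0 < ε) (hy : ‖y‖ = 1) :
    regBoggioKernel x a ε y = 0 ∧ fderiv ℝ (regBoggioKernel x a ε) y = 0 := by
  have harg : (1 - a) * (1 - ‖y‖ ^ 2) / (‖x - y‖ ^ 2 + ε) = 0 := by simp [hy]
  refine ⟨by rw [regBoggioKernel, harg, boggioProfile_zero], ?_⟩
  have hw : DifferentiableAt ℝ
      (fun z : E => (1 - a) * (1 - ‖z‖ ^ 2) / (‖x - z‖ ^ 2 + ε)) y :=
    (ContDiffAt.div (n := 1)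
      (contDiff_const.mul (contDiff_const.sub (contDiff_norm_sq ℝ))).contDiffAt
      (((contDiff_const.sub contDiff_id).norm_sq ℝ).add contDiff_const).contDiffAt
      (by positivity)).differentiableAt one_ne_zero
  have hΦ : HasDerivAt boggioProfile 0
      ((1 - a) * (1 - ‖y‖ ^ 2) / (‖x - y‖ ^ 2 + ε)) := by
    simpa [harg] using hasDerivAt_boggioProfile neg_one_lt_zero
  exact (hΦ.comp_hasFDerivAt y hw.hasFDerivAt).fderiv.trans (zero_smul ℝ _)

lemma quad_eq_norm_sub_sq_add (x y : E) (ε : ℝ) :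
    quad 1 ((-2 : ℝ) • x) (‖x‖ ^ 2 + ε) y = ‖x - y‖ ^ 2 + ε := by
  rw [norm_sub_sq_real, quad, real_inner_smul_left]
  ring

lemma quad_eq_quad_add (hb : b = ‖x‖ ^ 2 + ε + 1 - a) (y : E) :
    quad a ((-2 : ℝ) • x) b y =
      quad 1 ((-2 : ℝ) • x) (‖x‖ ^ 2 + ε) y + (1 - a) * (1 - ‖y‖ ^ 2) := by
  rw [quad, quad, hb]
  ring

lemma regBoggioKernel_eq_log (hb : b = ‖x‖ ^ 2 + ε + 1 - a) (hε : 0 < ε)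
    (hQ : 0 < quad a ((-2 : ℝ) • x) b y) :
    regBoggioKernel x a ε y =
      Real.log (quad a ((-2 : ℝ) • x) b y)
        + ((-1) * Real.log (quad 1 ((-2 : ℝ) • x) (‖x‖ ^ 2 + ε) y)
        + (a - 1) * (quad (-1) 0 1 y * (quad a ((-2 : ℝ) • x) b y ^ 1)⁻¹)) := by
  have hp : quad (-1) 0 1 y = 1 - ‖y‖ ^ 2 := by simp [quad]; ring
  rw [quad_eq_quad_add hb] at hQ ⊢
  rw [quad_eq_norm_sub_sq_add, hp, regBoggioKernel, boggioProfile] at *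
  have hq : 0 < ‖x - y‖ ^ 2 + ε := by positivity
  generalize ‖x - y‖ ^ 2 + ε = q at *
  have harg : 1 + (1 - a) * (1 - ‖y‖ ^ 2) / q = (q + (1 - a) * (1 - ‖y‖ ^ 2)) / q := by
    field_simp
  rw [harg, Real.log_div hQ.ne' hq.ne']
  field_simp
  ring

variable [FiniteDimensional ℝ E]

lemma hasLaplacianAt_log_quad {c : E} (hq : 0 < quad a c b x) :
    HasLaplacianAt (fun y => Real.log (quad a c b y))
      (2 * a * Module.finrank ℝ E / quad a c b x
        - (4 * a * quad a c b x + (‖c‖ ^ 2 - 4 * a * b)) / quad a c b x ^ 2) x := by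
  have h := (hasLaplacianAt_quad a c b x).comp (Real.contDiffAt_log.2 hq.ne')
    ((eventually_ne_nhds hq.ne').mono fun s hs => Real.hasDerivAt_log hs)
    (hasDerivAt_inv hq.ne') (hasFDerivAt_quad a c b x)
  rw [norm_sq_grad_quad a c b] at h
  convert h using 1
  field_simp
  ring

lemma hasDerivAt_inv_pow {s : ℝ} (hs : s ≠ 0) (k : ℕ) :
    HasDerivAt (fun s : ℝ => (s ^ k)⁻¹) (-k * (s ^ (k + 1))⁻¹) s := by
  refine ((hasDerivAt_pow k s).inv (pow_ne_zero k hs)).congr_deriv ?_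
  rcases k with - | k
  · simp
  · rw [Nat.add_sub_cancel]
    field_simp
    ring

lemma hasLaplacianAt_quad_mul_inv_quad_pow {a' b' : ℝ} {c c' : E} (hq : 0 < quad a c b x)
    (k : ℕ) :
    HasLaplacianAt (fun y => quad a' c' b' y * (quad a c b y ^ k)⁻¹)
      (quad a' c' b' x * (k * (k + 1) * (quad a c b x ^ (k + 2))⁻¹ *
            (4 * a * quad a c b x + (‖c‖ ^ 2 - 4 * a * b))
          + -k * (quad a c b x ^ (k + 1))⁻¹ * (2 * a * Module.finrank ℝ E))
        + 2 * (-k * (quad a c b x ^ (k + 1))⁻¹ *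
          (4 * a * a' * ‖x‖ ^ 2 + 2 * a * ⟪c', x⟫ + 2 * a' * ⟪c, x⟫ + ⟪c', c⟫))
        + 2 * a' * Module.finrank ℝ E * (quad a c b x ^ k)⁻¹) x := by
  refine hasLaplacianAt_quad_mul_comp_quad
    (φ := fun s => (s ^ k)⁻¹) (φ' := fun s => -k * (s ^ (k + 1))⁻¹)
    ((contDiffAt_id.pow k).inv (pow_ne_zero k hq.ne'))
    ((eventually_ne_nhds hq.ne').mono fun s hs => hasDerivAt_inv_pow hs k) ?_
  refine ((hasDerivAt_inv_pow hq.ne' (k + 1)).const_mul (-k : ℝ)).congr_deriv ?_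
  push_cast
  ring

lemma hasLaplacianAt_inv_quad_pow {c : E} (hq : 0 < quad a c b x) (k : ℕ) :
    HasLaplacianAt (fun y => (quad a c b y ^ k)⁻¹)
      (k * (k + 1) * (quad a c b x ^ (k + 2))⁻¹ * (4 * a * quad a c b x + (‖c‖ ^ 2 - 4 * a * b))
        - k * (quad a c b x ^ (k + 1))⁻¹ * (2 * a * Module.finrank ℝ E)) x := by
  have hone : ∀ y : E, quad 0 0 1 y = 1 := fun y => by simp [quad]
  have h := hasLaplacianAt_quad_mul_inv_quad_pow (a' := 0) (b' := 1) (c' := 0) hq k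
  simp only [hone, one_mul, mul_zero, zero_mul, inner_zero_left, add_zero] at h
  exact ⟨h.1, h.2.trans (by ring)⟩

lemma hasLaplacianAt_regBoggioKernel (hE : Module.finrank ℝ E = 4) (hab : a * b = ‖x‖ ^ 2)
    (hb : b = ‖x‖ ^ 2 + ε + 1 - a) (hε : 0 < ε) (hQ : 0 < quad a ((-2 : ℝ) • x) b y) :
    HasLaplacianAt (regBoggioKernel x a ε)
      (4 * a * (quad a ((-2 : ℝ) • x) b y ^ 1)⁻¹
        + ((-4) * (quad 1 ((-2 : ℝ) • x) (‖x‖ ^ 2 + ε) y ^ 1)⁻¹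
        + ((-4 * ε) * (quad 1 ((-2 : ℝ) • x) (‖x‖ ^ 2 + ε) y ^ 2)⁻¹
        + 8 * (a - 1) * (quad 0 x (-b) y * (quad a ((-2 : ℝ) • x) b y ^ 2)⁻¹)))) y := by
  have hq : 0 < quad 1 ((-2 : ℝ) • x) (‖x‖ ^ 2 + ε) y := by
    rw [quad_eq_norm_sub_sq_add]
    positivity
  have hlog : regBoggioKernel x a ε =ᶠ[𝓝 y] fun z =>
      Real.log (quad a ((-2 : ℝ) • x) b z)
        + ((-1) * Real.log (quad 1 ((-2 : ℝ) • x) (‖x‖ ^ 2 + ε) z)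
        + (a - 1) * (quad (-1) 0 1 z * (quad a ((-2 : ℝ) • x) b z ^ 1)⁻¹)) := by
    filter_upwards [(contDiff_quad (n := 0) a _ b).continuous.continuousAt.eventually_const_lt hQ]
      with z hz using regBoggioKernel_eq_log hb hε hz
  have h := (hasLaplacianAt_log_quad hQ).add (((hasLaplacianAt_log_quad hq).const_mul (-1)).add
    ((hasLaplacianAt_quad_mul_inv_quad_pow (a' := -1) (b' := 1) (c' := 0) hQ 1).const_mul (a - 1)))
  refine ⟨h.1.congr_of_eventuallyEq hlog, ?_⟩
  rw [(laplacian_congr_nhds hlog).self_of_nhds, h.2]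
  have hnorm : ‖(-2 : ℝ) • x‖ ^ 2 = 4 * (a * b) := by rw [norm_smul, mul_pow, hab]; norm_num
  have hy : a * ‖y‖ ^ 2 = quad a ((-2 : ℝ) • x) b y + 2 * ⟪x, y⟫ - b := by
    rw [quad, real_inner_smul_left]; ring
  have hp : quad (-1) 0 1 y = 1 - ‖y‖ ^ 2 := by simp [quad]; ring
  have hl : quad 0 x (-b) y = ⟪x, y⟫ - b := by simp [quad]; ring
  rw [hnorm, hE, hp, hl, ← hab]
  simp only [inner_zero_left, real_inner_smul_left]
  rw [← hab] at hq
  generalize quad a ((-2 : ℝ) • x) b y = Q at *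
  generalize quad 1 ((-2 : ℝ) • x) (a * b + ε) y = q at *
  push_cast
  field_simp
  linear_combination (8 * (a - 1) * Q * q ^ 2) * hy

lemma laplacian_laplacian_regBoggioKernel (hE : Module.finrank ℝ E = 4) (hab : a * b = ‖x‖ ^ 2)
    (hb : b = ‖x‖ ^ 2 + ε + 1 - a) (hε : 0 < ε) (hQ : 0 < quad a ((-2 : ℝ) • x) b y) :
    Δ (Δ (regBoggioKernel x a ε)) y = 96 * ε ^ 2 / (‖x - y‖ ^ 2 + ε) ^ 4 := by
  rw [← quad_eq_norm_sub_sq_add]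
  have hq : 0 < quad 1 ((-2 : ℝ) • x) (‖x‖ ^ 2 + ε) y := by
    rw [quad_eq_norm_sub_sq_add]
    positivity
  have hlap :=
    ((contDiff_quad (n := 0) a _ b).continuous.continuousAt.eventually_const_lt hQ).mono
      fun z hz => (hasLaplacianAt_regBoggioKernel hE hab hb hε hz).2
  have h := ((hasLaplacianAt_inv_quad_pow hQ 1).const_mul (4 * a)).add
    (((hasLaplacianAt_inv_quad_pow hq 1).const_mul (-4)).add
    (((hasLaplacianAt_inv_quad_pow hq 2).const_mul (-4 * ε)).add
    ((hasLaplacianAt_quad_mul_inv_quad_pow (a' := 0) (b' := -b) (c' := x) hQ 2).const_mul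
      (8 * (a - 1)))))
  refine ((laplacian_congr_nhds hlap).self_of_nhds.trans h.2).trans ?_
  have hnorm : ‖(-2 : ℝ) • x‖ ^ 2 = 4 * (a * b) := by rw [norm_smul, mul_pow, hab]; norm_num
  have hl : quad 0 x (-b) y = ⟪x, y⟫ - b := by simp [quad]; ring
  have hx : ⟪x, (-2 : ℝ) • x⟫ = -2 * (a * b) := by
    rw [real_inner_smul_right, real_inner_self_eq_norm_sq, hab]
  rw [hnorm, hE, hl, hx, ← hab]
  rw [← hab] at hq
  generalize quad a ((-2 : ℝ) • x) b y = Q at *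
  generalize quad 1 ((-2 : ℝ) • x) (a * b + ε) y = q at *
  push_cast
  field_simp
  ring

end RegularizedGreen

section Integrability

variable {E : Type*} [NormedAddCommGroup E] [InnerProductSpace ℝ E] [FiniteDimensional ℝ E]

lemma tendsto_norm_pow_mul_bubble [Nontrivial E] :
    Tendsto (fun z : E => ‖z‖ ^ Module.finrank ℝ E * ((1 + ‖z‖ ^ 2) ^ Module.finrank ℝ E)⁻¹)
      (Bornology.cobounded E) (𝓝 0) := by
  have hlim : Tendsto (fun z : E => (‖z‖ ^ Module.finrank ℝ E)⁻¹) (Bornology.cobounded E) (𝓝 0) :=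
    tendsto_inv_atTop_zero.comp
      ((tendsto_pow_atTop Module.finrank_pos.ne').comp tendsto_norm_cobounded_atTop)
  refine squeeze_zero (fun z => by positivity) (fun z => ?_) hlim
  rcases eq_or_ne z 0 with rfl | hz
  · simp [Module.finrank_pos.ne']
  have hz : 0 < ‖z‖ := norm_pos_iff.2 hz
  rw [← inv_pow, ← inv_pow, ← mul_pow]
  refine pow_le_pow_left₀ (by positivity) ?_ _
  rw [← div_eq_mul_inv, div_le_iff₀ (by positivity), inv_mul_eq_div, le_div_iff₀ hz]
  nlinarith

variable [MeasurableSpace E] [BorelSpace E]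

lemma integrableOn_inv_norm_sq_ball (hE : 2 < Module.finrank ℝ E) (r : ℝ) :
    IntegrableOn (fun z : E => (‖z‖ ^ 2)⁻¹) (ball 0 r) := by
  have : Nontrivial E := Module.nontrivial_of_finrank_pos (R := ℝ) (by omega)
  refine (integrableOn_fun_norm_addHaar (F := ℝ) volume (f := fun s => (s ^ 2)⁻¹)).2 ?_
  have hpow : IntegrableOn (fun y : ℝ => y ^ (Module.finrank ℝ E - 3)) (Ioo 0 r) :=
    ((continuous_pow _).continuousOn.integrableOn_compact isCompact_Icc).mono_set
      Ioo_subset_Icc_self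
  refine hpow.congr_fun (fun y hy => ?_) measurableSet_Ioo
  have hy₀ : y ≠ 0 := hy.1.ne'
  rw [smul_eq_mul, show Module.finrank ℝ E - 1 = Module.finrank ℝ E - 3 + 2 by omega, pow_add]
  field_simp

lemma integrableOn_inv_norm_sub_sq (hE : 2 < Module.finrank ℝ E) {x : E}
    (hx : x ∈ closedBall (0 : E) 1) :
    IntegrableOn (fun y : E => (‖x - y‖ ^ 2)⁻¹) (ball 0 1) ∧
      ∫ y in ball (0 : E) 1, (‖x - y‖ ^ 2)⁻¹ ≤ ∫ z in ball (0 : E) 2, (‖z‖ ^ 2)⁻¹ := by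
  have hmp := Measure.measurePreserving_sub_left (volume : Measure E) x
  have hme : MeasurableEmbedding fun y : E => x - y := (Homeomorph.subLeft x).measurableEmbedding
  have hpre : (fun y : E => x - y) ⁻¹' ball 0 2 = ball x 2 := by
    ext y
    simp [dist_eq_norm, norm_sub_rev]
  have hsub : ball (0 : E) 1 ⊆ ball x 2 := ball_subset_ball' (by
    rw [dist_zero_left]
    linarith [mem_closedBall_zero_iff.1 hx])
  have hint : IntegrableOn (fun y : E => (‖x - y‖ ^ 2)⁻¹) (ball x 2) := by
    have h := (hmp.integrableOn_comp_preimage hme).2 (integrableOn_inv_norm_sq_ball hE 2)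
    rwa [hpre] at h
  refine ⟨hint.mono_set hsub, ?_⟩
  have h := hmp.setIntegral_preimage_emb hme (fun z : E => (‖z‖ ^ 2)⁻¹) (ball 0 2)
  rw [hpre] at h
  rw [← h]
  exact setIntegral_mono_set hint (Eventually.of_forall fun y => by positivity) hsub.eventuallyLE

lemma integrable_inv_one_add_norm_sq_pow [Nontrivial E] :
    Integrable fun z : E => ((1 + ‖z‖ ^ 2) ^ Module.finrank ℝ E)⁻¹ := by
  have hdim : (0 : ℝ) < Module.finrank ℝ E := by exact_mod_cast Module.finrank_pos
  refine (integrable_rpow_neg_one_add_norm_sq (E := E) (μ := volume)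
    (r := 2 * Module.finrank ℝ E) (by linarith)).congr (Eventually.of_forall fun z => ?_)
  simp only
  rw [show -(2 * (Module.finrank ℝ E : ℝ)) / 2 = -(Module.finrank ℝ E : ℝ) by ring,
    Real.rpow_neg (by positivity), Real.rpow_natCast]

variable (E) in
/-- The total mass of the bubble `(1 + ‖z‖²)⁻ⁿ`, where `n` is the dimension of `E`. -/
def bubbleMass : ℝ := ∫ z : E, ((1 + ‖z‖ ^ 2) ^ Module.finrank ℝ E)⁻¹

lemma bubbleMass_pos [Nontrivial E] : 0 < bubbleMass E := by
  rw [bubbleMass, integral_pos_iff_support_of_nonneg (fun z => by positivity)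
    integrable_inv_one_add_norm_sq_pow]
  have hsupp : (Function.support fun z : E => ((1 + ‖z‖ ^ 2) ^ Module.finrank ℝ E)⁻¹) = univ :=
    eq_univ_of_forall fun z => by
      rw [Function.mem_support]
      positivity
  simp [hsupp]

lemma tendsto_setIntegral_mul_bubble [Nontrivial E] {s : Set E} (hs : MeasurableSet s)
    {u : E → ℝ} (hu : IntegrableOn u s) {x : E} (hx : s ∈ 𝓝 x) (hux : ContinuousAt u x) :
    Tendsto (fun c : ℝ => ∫ y in s, u y *
        (c ^ Module.finrank ℝ E * ((1 + ‖c • (x - y)‖ ^ 2) ^ Module.finrank ℝ E)⁻¹))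
      atTop (𝓝 (bubbleMass E * u x)) := by
  have hmass := bubbleMass_pos (E := E)
  have hind : s.indicator u =ᶠ[𝓝 x] u := by
    filter_upwards [hx] with y hy using indicator_of_mem hy _
  have key := (tendsto_integral_comp_smul_smul_of_integrable' (μ := (volume : Measure E))
    (φ := fun z => (bubbleMass E)⁻¹ * ((1 + ‖z‖ ^ 2) ^ Module.finrank ℝ E)⁻¹)
    (g := s.indicator u) (x₀ := x) (fun z => by positivity)
    (by rw [integral_const_mul]; exact inv_mul_cancel₀ hmass.ne')
    (by simpa [mul_left_comm] using tendsto_norm_pow_mul_bubble.const_mul (bubbleMass E)⁻¹)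
    ((integrable_indicator_iff hs).2 hu) (hux.congr hind.symm)).const_mul (bubbleMass E)
  rw [indicator_of_mem (mem_of_mem_nhds hx)] at key
  refine key.congr fun c => ?_
  rw [← integral_const_mul, ← integral_indicator hs]
  refine integral_congr_ae (Eventually.of_forall fun y => ?_)
  by_cases hy : y ∈ s
  · simp only [indicator_of_mem hy, smul_eq_mul]
    field_simp
  · simp [indicator_of_notMem hy]

end Integrability

section Representation

variable {E : Type*} [NormedAddCommGroup E] [InnerProductSpace ℝ E] [FiniteDimensional ℝ E]
  [MeasurableSpace E] [BorelSpace E] {u : E → ℝ} {x : E}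

lemma integral_regBoggioKernel_mul_bilaplacian (hE : Module.finrank ℝ E = 4) {a b ε : ℝ}
    (hab : a * b = ‖x‖ ^ 2) (hb : b = ‖x‖ ^ 2 + ε + 1 - a) (hε : 0 < ε) (ha : a ≤ 1)
    (hu : ContDiffOn ℝ 4 u (closedBall 0 1))
    (hu₀ : ∀ y, ‖y‖ = 1 → u y = 0 ∧ fderivWithin ℝ u (closedBall 0 1) y = 0) :
    ∫ y in ball (0 : E) 1, regBoggioKernel x a ε y * Δ (Δ u) y =
      ∫ y in ball (0 : E) 1, u y * (96 * ε ^ 2 / (‖x - y‖ ^ 2 + ε) ^ 4) := by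
  have hfr : ∀ y ∈ frontier (closedBall (0 : E) 1), ‖y‖ = 1 := fun y hy => by
    rwa [frontier_closedBall _ one_ne_zero, mem_sphere_zero_iff_norm] at hy
  have hint : interior (closedBall (0 : E) 1) = ball 0 1 := interior_closedBall _ one_ne_zero
  have hKi : (interior (closedBall (0 : E) 1)).Nonempty := hint ▸ nonempty_ball.2 one_pos
  have hv : ContDiffOn ℝ 4 (regBoggioKernel x a ε) (closedBall 0 1) := fun y hy =>
    (contDiffAt_regBoggioKernel ha hε hy).contDiffWithinAt
  have hv₀ : ∀ y ∈ frontier (closedBall (0 : E) 1), regBoggioKernel x a ε y = 0 ∧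
      fderivWithin ℝ (regBoggioKernel x a ε) (closedBall 0 1) y = 0 := fun y hy => by
    have hyK := isClosed_closedBall.frontier_subset hy
    rw [fderivWithin_eq_fderiv (uniqueDiffOn_convex (convex_closedBall 0 1) hKi y hyK)
      ((contDiffAt_regBoggioKernel (n := 1) ha hε hyK).differentiableAt one_ne_zero)]
    exact regBoggioKernel_dirichlet hε (hfr y hy)
  have h := integral_mul_bilaplacian_comm volume (convex_closedBall (0 : E) 1)
    (isCompact_closedBall 0 1) hKi hv hu hv₀ fun y hy => hu₀ y (hfr y hy)
  rw [hint] at h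
  refine h.trans (setIntegral_congr_fun measurableSet_ball fun y hy => ?_)
  have hQ : 0 < quad a ((-2 : ℝ) • x) b y := by
    rw [quad_eq_quad_add hb, quad_eq_norm_sub_sq_add]
    have := mul_nonneg (sub_nonneg.2 ha) (one_sub_norm_sq_nonneg (ball_subset_closedBall hy))
    positivity
  simp only [laplacian_laplacian_regBoggioKernel hE hab hb hε hQ]

lemma tendsto_integral_mul_regularized_delta (hE : Module.finrank ℝ E = 4)
    (hu : ContinuousOn u (closedBall 0 1)) (hx : x ∈ ball (0 : E) 1) :
    Tendsto (fun ε => ∫ y in ball (0 : E) 1, u y * (96 * ε ^ 2 / (‖x - y‖ ^ 2 + ε) ^ 4))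
      (𝓝[>] 0) (𝓝 (96 * (bubbleMass E * u x))) := by
  have : Nontrivial E := Module.nontrivial_of_finrank_pos (R := ℝ) (by omega)
  have hsqrt : Tendsto (fun ε : ℝ => (√ε)⁻¹) (𝓝[>] 0) atTop := by
    refine tendsto_inv_nhdsGT_zero.comp (tendsto_nhdsWithin_iff.2 ⟨?_, ?_⟩)
    · simpa using Real.continuous_sqrt.continuousWithinAt (s := Ioi (0 : ℝ)) (x := 0) |>.tendsto
    · filter_upwards [self_mem_nhdsWithin] with ε hε using Real.sqrt_pos.2 hε
  have h := ((tendsto_setIntegral_mul_bubble measurableSet_ball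
    ((hu.integrableOn_compact (isCompact_closedBall 0 1)).mono_set ball_subset_closedBall)
    (isOpen_ball.mem_nhds hx)
    (hu.continuousAt (closedBall_mem_nhds_of_mem hx))).comp hsqrt).const_mul 96
  refine h.congr' ?_
  filter_upwards [self_mem_nhdsWithin] with ε (hε : 0 < ε)
  simp only [Function.comp, hE]
  rw [← integral_const_mul]
  refine integral_congr_ae (Eventually.of_forall fun y => ?_)
  have hscale : 1 + ‖(√ε)⁻¹ • (x - y)‖ ^ 2 = (‖x - y‖ ^ 2 + ε) / ε := by
    rw [norm_smul, mul_pow, norm_inv, inv_pow, Real.norm_eq_abs, sq_abs, Real.sq_sqrt hε.le]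
    field_simp
    ring
  have hroot : (√ε)⁻¹ ^ 4 = (ε ^ 2)⁻¹ := by
    rw [inv_pow, show √ε ^ 4 = (√ε ^ 2) ^ 2 by ring, Real.sq_sqrt hε.le]
  simp only [hscale, hroot]
  field_simp

lemma tendsto_integral_regBoggioKernel_mul (hE : 2 < Module.finrank ℝ E) {f : E → ℝ}
    (hf : ContinuousOn f (closedBall 0 1)) (hx : x ∈ ball (0 : E) 1) {ι : Type*} {l : Filter ι}
    [l.IsCountablyGenerated] {a ε : ι → ℝ} (ha : Tendsto a l (𝓝 (‖x‖ ^ 2)))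
    (ha' : ∀ᶠ i in l, a i ∈ Icc 0 1) (hε : Tendsto ε l (𝓝 0)) (hε' : ∀ᶠ i in l, 0 ≤ ε i) :
    Tendsto (fun i => ∫ y in ball (0 : E) 1, regBoggioKernel x (a i) (ε i) y * f y) l
      (𝓝 (∫ y in ball (0 : E) 1, boggioKernel x y * f y)) := by
  have : Nontrivial E := Module.nontrivial_of_finrank_pos (R := ℝ) (by omega)
  obtain ⟨M, hM⟩ := (isCompact_closedBall (0 : E) 1).exists_bound_of_continuousOn hf
  have hmeas : AEStronglyMeasurable f (volume.restrict (ball 0 1)) :=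
    (hf.mono ball_subset_closedBall).aestronglyMeasurable measurableSet_ball
  have hne : ∀ᵐ y ∂volume.restrict (ball (0 : E) 1), y ∈ ball (0 : E) 1 ∧ x ≠ y := by
    filter_upwards [ae_restrict_mem measurableSet_ball, ae_restrict_of_ae (volume.ae_ne x)]
      with y hy hyx using ⟨hy, hyx.symm⟩
  refine tendsto_integral_filter_of_dominated_convergence (fun y => (‖x - y‖ ^ 2)⁻¹ * M)
    (Eventually.of_forall fun i =>
      (measurable_regBoggioKernel x _ _).aestronglyMeasurable.mul hmeas) ?_
    ((integrableOn_inv_norm_sub_sq hE (ball_subset_closedBall hx)).1.mul_const M) ?_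
  · filter_upwards [ha', hε'] with i hai hεi
    filter_upwards [hne] with y ⟨hy, hxy⟩
    have hy := ball_subset_closedBall hy
    rw [norm_mul, Real.norm_of_nonneg (regBoggioKernel_nonneg hai.2 hεi hy)]
    exact mul_le_mul (regBoggioKernel_le hai.1 hai.2 hεi hy hxy) (hM y hy) (norm_nonneg _)
      (by positivity)
  · filter_upwards [hne] with y ⟨hy, hxy⟩
    have hd : ‖x - y‖ ^ 2 ≠ 0 := pow_ne_zero 2 (norm_ne_zero_iff.2 (sub_ne_zero.2 hxy))
    refine Tendsto.mul_const _ ((hasDerivAt_boggioProfile (neg_one_lt_zero.trans_le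
      (boggioKernel_arg_nonneg (ball_subset_closedBall hx)
        (ball_subset_closedBall hy)))).continuousAt.tendsto.comp ?_)
    have hden : Tendsto (fun i => ‖x - y‖ ^ 2 + ε i) l (𝓝 (‖x - y‖ ^ 2)) := by
      simpa using hε.const_add (‖x - y‖ ^ 2)
    exact ((ha.const_sub 1).mul_const _).div hden hd

theorem eq_integral_boggioKernel_mul_bilaplacian (hE : Module.finrank ℝ E = 4)
    (hu : ContDiffOn ℝ 4 u (closedBall 0 1))
    (hu₀ : ∀ y, ‖y‖ = 1 → u y = 0 ∧ fderivWithin ℝ u (closedBall 0 1) y = 0)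
    {f : E → ℝ} (hf : ContinuousOn f (closedBall 0 1)) (huf : EqOn (Δ (Δ u)) f (ball 0 1))
    (hx : x ∈ ball (0 : E) 1) :
    u x = (96 * bubbleMass E)⁻¹ * ∫ y in ball (0 : E) 1, boggioKernel x y * f y := by
  have : Nontrivial E := Module.nontrivial_of_finrank_pos (R := ℝ) (by omega)
  have hx₁ := one_sub_norm_sq_pos hx
  -- The constraints of `integral_regBoggioKernel_mul_bilaplacian` leave one free parameter `τ`.
  let a : ℝ → ℝ := fun τ => ‖x‖ ^ 2 / (1 + τ)
  let ε : ℝ → ℝ := fun τ => τ * (1 - a τ)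
  have ha : Tendsto a (𝓝[>] 0) (𝓝 (‖x‖ ^ 2)) := by
    have h : ContinuousAt a 0 := continuousAt_const.div (by fun_prop) (by norm_num)
    simpa [a] using h.tendsto.mono_left nhdsWithin_le_nhds
  have hε : Tendsto ε (𝓝[>] 0) (𝓝 0) := by
    simpa using (tendsto_id.mono_left nhdsWithin_le_nhds).mul (ha.const_sub 1)
  have ha' : ∀ᶠ τ in 𝓝[>] (0 : ℝ), a τ ∈ Ico 0 1 := by
    filter_upwards [self_mem_nhdsWithin] with τ (hτ : 0 < τ)
    exact ⟨by positivity, (div_lt_one (by positivity)).2 (by linarith)⟩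
  have hε' : ∀ᶠ τ in 𝓝[>] (0 : ℝ), 0 < ε τ := by
    filter_upwards [self_mem_nhdsWithin, ha'] with τ hτ haτ
      using mul_pos hτ (sub_pos.2 haτ.2)
  have hlim := (tendsto_integral_mul_regularized_delta hE hu.continuousOn hx).comp
    (tendsto_nhdsWithin_iff.2 ⟨hε, hε'⟩)
  have hgreen : (fun τ => ∫ y in ball (0 : E) 1, regBoggioKernel x (a τ) (ε τ) y * f y)
      =ᶠ[𝓝[>] 0] fun τ =>
        ∫ y in ball (0 : E) 1, u y * (96 * ε τ ^ 2 / (‖x - y‖ ^ 2 + ε τ) ^ 4) := by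
    filter_upwards [self_mem_nhdsWithin, ha', hε'] with τ (hτ : 0 < τ) haτ hετ
    rw [← integral_regBoggioKernel_mul_bilaplacian hE (b := 1 + τ) (by simp only [a]; field_simp)
      (by simp only [ε, a]; field_simp; ring) hετ haτ.2.le hu hu₀]
    exact setIntegral_congr_fun measurableSet_ball fun y hy => by simp only [huf hy]
  have huniq := tendsto_nhds_unique (tendsto_integral_regBoggioKernel_mul (by omega) hf hx ha
    (ha'.mono fun _ h => Ico_subset_Icc_self h) hε (hε'.mono fun _ h => h.le))
    (hlim.congr' hgreen.symm)
  rw [huniq]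
  field_simp [(bubbleMass_pos (E := E)).ne']

end Representation

/-! ### Reflections and caps -/

section Reflection

variable {E : Type*} [NormedAddCommGroup E] [InnerProductSpace ℝ E] {e x y : E} {l : ℝ}

/-- The reflection of `x` in the hyperplane `{y | ⟪y, e⟫ = l}` orthogonal to the unit vector `e`. -/
def planeReflection (e : E) (l : ℝ) (x : E) : E := x - (2 * (⟪x, e⟫ - l)) • e

lemma inner_planeReflection (he : ‖e‖ = 1) (l : ℝ) (x : E) :
    ⟪planeReflection e l x, e⟫ = 2 * l - ⟪x, e⟫ := by
  rw [planeReflection, inner_sub_left, real_inner_smul_left, real_inner_self_eq_norm_sq, he]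
  ring

lemma planeReflection_planeReflection (he : ‖e‖ = 1) (l : ℝ) (x : E) :
    planeReflection e l (planeReflection e l x) = x := by
  rw [planeReflection, inner_planeReflection he, planeReflection]
  module

lemma norm_sq_planeReflection_sub (he : ‖e‖ = 1) (l : ℝ) (x y : E) :
    ‖planeReflection e l x - y‖ ^ 2 = ‖x - y‖ ^ 2 + 4 * (⟪x, e⟫ - l) * (⟪y, e⟫ - l) := by
  have hsub : planeReflection e l x - y = (x - y) - (2 * (⟪x, e⟫ - l)) • e := by
    rw [planeReflection]; abel
  rw [hsub, norm_sub_sq_real, norm_smul, mul_pow, he, real_inner_smul_right, Real.norm_eq_abs,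
    sq_abs, inner_sub_left]
  ring

lemma norm_sq_planeReflection (he : ‖e‖ = 1) (l : ℝ) (x : E) :
    ‖planeReflection e l x‖ ^ 2 = ‖x‖ ^ 2 - 4 * l * (⟪x, e⟫ - l) := by
  have h := norm_sq_planeReflection_sub he l x 0
  rw [sub_zero, sub_zero, inner_zero_left] at h
  rw [h]
  ring

lemma isometry_planeReflection (he : ‖e‖ = 1) (l : ℝ) : Isometry (planeReflection e l) := by
  refine Isometry.of_dist_eq fun x y => ?_
  rw [dist_eq_norm, dist_eq_norm, ← sq_eq_sq₀ (norm_nonneg _) (norm_nonneg _),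
    norm_sq_planeReflection_sub he, inner_planeReflection he,
    norm_sub_rev x (planeReflection e l y),
    norm_sq_planeReflection_sub he, norm_sub_rev y x]
  ring

lemma norm_planeReflection_sub_planeReflection (he : ‖e‖ = 1) (l : ℝ) (x y : E) :
    ‖planeReflection e l x - planeReflection e l y‖ = ‖x - y‖ := by
  simpa only [dist_eq_norm] using (isometry_planeReflection he l).dist_eq x y

lemma norm_sub_planeReflection (he : ‖e‖ = 1) (l : ℝ) (x y : E) :
    ‖x - planeReflection e l y‖ = ‖planeReflection e l x - y‖ := by
  rw [← norm_planeReflection_sub_planeReflection he l, planeReflection_planeReflection he]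

lemma continuous_planeReflection (e : E) (l : ℝ) : Continuous (planeReflection e l) := by
  unfold planeReflection; fun_prop

lemma continuous_planeReflection_level (e x : E) : Continuous fun l => planeReflection e l x := by
  unfold planeReflection; fun_prop

/-- The cap cut off from the open unit ball by the hyperplane `{y | ⟪y, e⟫ = l}`. -/
def cap (e : E) (l : ℝ) : Set E := ball 0 1 ∩ {x | l < ⟪x, e⟫}

lemma isOpen_cap (e : E) (l : ℝ) : IsOpen (cap e l) :=
  isOpen_ball.inter (isOpen_lt continuous_const (by fun_prop))

lemma cap_subset_ball (e : E) (l : ℝ) : cap e l ⊆ ball 0 1 := inter_subset_left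

lemma level_lt_one_of_mem_cap (he : ‖e‖ = 1) (hx : x ∈ cap e l) : l < 1 := by
  have hx₁ : ‖x‖ < 1 := mem_ball_zero_iff.1 hx.1
  have hx₂ : l < ⟪x, e⟫ := hx.2
  have hxe := real_inner_le_norm x e
  rw [he, mul_one] at hxe
  linarith

lemma norm_sq_planeReflection_le (he : ‖e‖ = 1) (hl : 0 ≤ l) (hx : x ∈ cap e l) :
    ‖planeReflection e l x‖ ^ 2 ≤ ‖x‖ ^ 2 := by
  have := mul_nonneg hl (sub_pos.2 hx.2).le
  linarith [norm_sq_planeReflection he l x]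

lemma planeReflection_mem_ball (he : ‖e‖ = 1) (hl : 0 ≤ l) (hx : x ∈ cap e l) :
    planeReflection e l x ∈ ball (0 : E) 1 :=
  mem_ball_zero_iff.2 ((abs_le_of_sq_le_sq' (norm_sq_planeReflection_le he hl hx)
    (norm_nonneg x)).2.trans_lt (mem_ball_zero_iff.1 hx.1))

lemma preimage_planeReflection_cap_subset_ball (he : ‖e‖ = 1) (hl : 0 ≤ l) :
    planeReflection e l ⁻¹' cap e l ⊆ ball 0 1 := fun y hy => by
  simpa only [planeReflection_planeReflection he] using planeReflection_mem_ball he hl hy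

lemma disjoint_cap_preimage_planeReflection_cap (he : ‖e‖ = 1) (l : ℝ) :
    Disjoint (cap e l) (planeReflection e l ⁻¹' cap e l) := by
  refine Set.disjoint_left.2 fun y hy hy' => ?_
  have hy₁ : l < ⟪y, e⟫ := hy.2
  have hy₂ : l < ⟪planeReflection e l y, e⟫ := hy'.2
  rw [inner_planeReflection he] at hy₂
  linarith

/-- The part of the unit ball covered neither by a cap nor by its mirror image. -/
def capRemainder (e : E) (l : ℝ) : Set E :=
  ball 0 1 \ (cap e l ∪ planeReflection e l ⁻¹' cap e l)

lemma inner_le_of_mem_capRemainder (hy : y ∈ capRemainder e l) : ⟪y, e⟫ ≤ l :=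
  not_lt.1 fun hlt => hy.2 (Or.inl ⟨hy.1, hlt⟩)

lemma ne_planeReflection_of_mem_capRemainder (he : ‖e‖ = 1) (hx : x ∈ cap e l)
    (hy : y ∈ capRemainder e l) : y ≠ planeReflection e l x := by
  rintro rfl
  exact hy.2 (Or.inr (by simpa only [mem_preimage, planeReflection_planeReflection he] using hx))

section Measure

variable [MeasurableSpace E] [BorelSpace E]

lemma measurableSet_capRemainder (e : E) (l : ℝ) : MeasurableSet (capRemainder e l) :=
  measurableSet_ball.diff ((isOpen_cap e l).measurableSet.union
    ((isOpen_cap e l).preimage (continuous_planeReflection e l)).measurableSet)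

variable [FiniteDimensional ℝ E]

lemma measurePreserving_planeReflection (he : ‖e‖ = 1) (l : ℝ) :
    MeasurePreserving (planeReflection e l) := by
  have heq : planeReflection e l = (fun x => x + (2 * l) • e) ∘
      ((Submodule.reflection (ℝ ∙ e)).trans (LinearIsometryEquiv.neg ℝ)) := by
    funext x
    rw [Function.comp_apply, LinearIsometryEquiv.trans_apply, LinearIsometryEquiv.coe_neg,
      Submodule.reflection_singleton_apply, he, planeReflection, real_inner_comm]
    simp only [RCLike.ofReal_real_eq_id, id_eq, one_pow, div_one]
    module
  rw [heq]
  exact (measurePreserving_add_right volume _).comp (LinearIsometryEquiv.measurePreserving _)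

lemma measurableEmbedding_planeReflection (he : ‖e‖ = 1) (l : ℝ) :
    MeasurableEmbedding (planeReflection e l) :=
  (isometry_planeReflection he l).isClosedEmbedding.measurableEmbedding

lemma integrableOn_comp_planeReflection_cap (he : ‖e‖ = 1) (hl : 0 ≤ l) {F : E → ℝ}
    (hF : IntegrableOn F (ball 0 1)) :
    IntegrableOn (fun y => F (planeReflection e l y)) (cap e l) := by
  refine ((measurePreserving_planeReflection he l).integrableOn_comp_preimage
    (measurableEmbedding_planeReflection he l)).1 ?_
  simp only [Function.comp_def, planeReflection_planeReflection he]
  exact hF.mono_set (preimage_planeReflection_cap_subset_ball he hl)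

lemma setIntegral_ball_eq_cap_add_capRemainder (he : ‖e‖ = 1) (hl : 0 ≤ l) {F : E → ℝ}
    (hF : IntegrableOn F (ball 0 1)) :
    ∫ y in ball 0 1, F y =
      (∫ y in cap e l, (F y + F (planeReflection e l y))) + ∫ y in capRemainder e l, F y := by
  have hcap := (isOpen_cap e l).measurableSet
  have hcap' := ((isOpen_cap e l).preimage (continuous_planeReflection e l)).measurableSet
  have hsub := preimage_planeReflection_cap_subset_ball he hl
  have hchange : ∫ y in cap e l, F (planeReflection e l y) =
      ∫ y in planeReflection e l ⁻¹' cap e l, F y := by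
    rw [← (measurePreserving_planeReflection he l).setIntegral_preimage_emb
      (measurableEmbedding_planeReflection he l)]
    simp only [planeReflection_planeReflection he]
  have hF₁ := hF.mono_set (cap_subset_ball e l)
  rw [integral_add hF₁ (integrableOn_comp_planeReflection_cap he hl hF), hchange,
    ← setIntegral_union (disjoint_cap_preimage_planeReflection_cap he l) hcap' hF₁
      (hF.mono_set hsub),
    capRemainder, setIntegral_sdiff (hcap.union hcap') hF (union_subset (cap_subset_ball e l) hsub)]
  ring

lemma volume_capRemainder_pos (he : ‖e‖ = 1) (hl : 0 < l) (hl₁ : l < 1) :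
    0 < volume (capRemainder e l) := by
  have hopen : IsOpen (ball 0 1 ∩ {y : E | ⟪y, e⟫ < 2 * l - 1}) :=
    isOpen_ball.inter (isOpen_lt (by fun_prop) continuous_const)
  have hne : (ball 0 1 ∩ {y : E | ⟪y, e⟫ < 2 * l - 1}).Nonempty := by
    refine ⟨(l - 1) • e, ?_, ?_⟩
    · rw [mem_ball_zero_iff, norm_smul, he, Real.norm_eq_abs, abs_of_neg (by linarith)]
      linarith
    · rw [mem_ofPred_eq, real_inner_smul_left, real_inner_self_eq_norm_sq, he]
      linarith
  refine (hopen.measure_pos volume hne).trans_le (measure_mono ?_)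
  rintro y ⟨hy, hye : ⟪y, e⟫ < 2 * l - 1⟩
  refine ⟨hy, ?_⟩
  rintro (⟨-, hlt : l < ⟪y, e⟫⟩ | ⟨hlt, -⟩)
  · linarith
  · have hinner := real_inner_le_norm (planeReflection e l y) e
    rw [inner_planeReflection he, he, mul_one] at hinner
    linarith [mem_ball_zero_iff.1 hlt]

lemma ae_inner_ne (he : ‖e‖ = 1) (l : ℝ) : ∀ᵐ y : E, ⟪y, e⟫ ≠ l := by
  have hker : volume ((LinearMap.ker (innerₛₗ ℝ e) : Submodule ℝ E) : Set E) = 0 := by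
    refine Measure.addHaar_submodule _ _ fun htop => ?_
    have he₀ : e ∈ LinearMap.ker (innerₛₗ ℝ e) := htop ▸ Submodule.mem_top
    rw [LinearMap.mem_ker, innerₛₗ_apply_apply, real_inner_self_eq_norm_sq, he] at he₀
    norm_num at he₀
  have hset : {y : E | ¬⟪y, e⟫ ≠ l} =
      (fun y => y + -(l • e)) ⁻¹' (LinearMap.ker (innerₛₗ ℝ e) : Submodule ℝ E) := by
    ext y
    rw [mem_preimage, SetLike.mem_coe, LinearMap.mem_ker, innerₛₗ_apply_apply, inner_add_right,
      inner_neg_right, real_inner_smul_right, real_inner_self_eq_norm_sq, he, real_inner_comm,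
      one_pow, mul_one, ← sub_eq_add_neg, sub_eq_zero, mem_ofPred_eq, not_not]
  rw [ae_iff, hset, measure_preimage_add_right, hker]

end Measure

end Reflection

section KernelComparison

lemma boggioProfile_sub_le_boggioProfile_sub {r s t : ℝ} (hr : 1 ≤ r) (hs : 0 ≤ s) (hst : s ≤ t) :
    boggioProfile (r * s) - boggioProfile s ≤ boggioProfile (r * t) - boggioProfile t := by
  have hderiv : ∀ t : ℝ, 0 ≤ t → HasDerivAt (fun t => boggioProfile (r * t) - boggioProfile t)
      (r * t / (1 + r * t) ^ 2 * r - t / (1 + t) ^ 2) t := fun t ht => by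
    have hrt : -1 < r * t := by nlinarith
    have hmul : HasDerivAt (fun t : ℝ => r * t) r t := by simpa using (hasDerivAt_id t).const_mul r
    exact ((hasDerivAt_boggioProfile hrt).comp t hmul).sub
      (hasDerivAt_boggioProfile (by linarith))
  refine monotoneOn_of_hasDerivWithinAt_nonneg (convex_Ici 0)
    (fun t ht => (hderiv t ht).continuousAt.continuousWithinAt)
    (fun t ht => (hderiv t (interior_subset ht)).hasDerivWithinAt) (fun t ht => ?_)
    (mem_Ici.2 hs) (mem_Ici.2 (hs.trans hst)) hst
  have ht : 0 < t := by rwa [interior_Ici] at ht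
  have hrt : 0 < 1 + r * t := by positivity
  have hle : t / (1 + t) ≤ r * t / (1 + r * t) := by
    rw [div_le_div_iff₀ (by positivity) hrt]
    nlinarith
  have hsq : (t / (1 + t)) ^ 2 ≤ (r * t / (1 + r * t)) ^ 2 := by gcongr
  have heq : r * t / (1 + r * t) ^ 2 * r - t / (1 + t) ^ 2 =
      ((r * t / (1 + r * t)) ^ 2 - (t / (1 + t)) ^ 2) / t := by field_simp
  rw [heq]
  exact div_nonneg (sub_nonneg.2 hsq) ht.le

lemma boggioProfile_four_point {P P' Y Y' a b : ℝ} (hP : 0 < P) (hPP' : P ≤ P') (hY : 0 < Y)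
    (hYY' : Y ≤ Y') (ha : 0 < a) (hab : a ≤ b) :
    boggioProfile (P * Y / a) + boggioProfile (P * Y' / b) ≤
      boggioProfile (P' * Y' / a) + boggioProfile (P' * Y / b) := by
  have hb : 0 < b := ha.trans_le hab
  have : 0 < P' := hP.trans_le hPP'
  have : 0 < Y' := hY.trans_le hYY'
  have hmono : ∀ {s t : ℝ}, 0 ≤ s → s ≤ t → boggioProfile s ≤ boggioProfile t := fun hs hst =>
    strictMonoOn_boggioProfile.monotoneOn hs (hs.trans hst) hst
  have hb_le : boggioProfile (P * Y / b) ≤ boggioProfile (P' * Y / b) :=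
    hmono (by positivity) (by gcongr)
  have ha_le : boggioProfile (P * Y' / a) ≤ boggioProfile (P' * Y' / a) :=
    hmono (by positivity) (by gcongr)
  have hratio := boggioProfile_sub_le_boggioProfile_sub (r := Y' / Y) (s := P * Y / b)
    (t := P * Y / a) ((one_le_div hY).2 hYY') (by positivity) (by gcongr)
  rw [show Y' / Y * (P * Y / b) = P * Y' / b by field_simp,
    show Y' / Y * (P * Y / a) = P * Y' / a by field_simp] at hratio
  linarith

variable {E : Type*} [NormedAddCommGroup E] [InnerProductSpace ℝ E] {e x y : E} {l : ℝ}

lemma norm_planeReflection_sub_sq_le (he : ‖e‖ = 1) (hx : x ∈ cap e l) (hy : ⟪y, e⟫ ≤ l) :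
    ‖planeReflection e l x - y‖ ^ 2 ≤ ‖x - y‖ ^ 2 := by
  have := mul_nonneg (sub_pos.2 hx.2).le (sub_nonneg.2 hy)
  linarith [norm_sq_planeReflection_sub he l x y]

lemma boggioKernel_le_planeReflection (he : ‖e‖ = 1) (hl : 0 ≤ l) (hx : x ∈ cap e l)
    (hy : y ∈ ball 0 1) (hyl : ⟪y, e⟫ ≤ l) (hne : y ≠ planeReflection e l x) :
    boggioKernel x y ≤ boggioKernel (planeReflection e l x) y := by
  have hd : 0 < ‖planeReflection e l x - y‖ := norm_pos_iff.2 (sub_ne_zero.2 hne.symm)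
  refine strictMonoOn_boggioProfile.monotoneOn
    (boggioKernel_arg_nonneg (ball_subset_closedBall hx.1) (ball_subset_closedBall hy))
    (boggioKernel_arg_nonneg (ball_subset_closedBall (planeReflection_mem_ball he hl hx))
      (ball_subset_closedBall hy)) ?_
  have hy' := one_sub_norm_sq_pos hy
  have hx' := one_sub_norm_sq_pos (planeReflection_mem_ball he hl hx)
  have := norm_sq_planeReflection_le he hl hx
  exact div_le_div₀ (by positivity) (by gcongr) (by positivity)
    (norm_planeReflection_sub_sq_le he hx hyl)

lemma boggioKernel_lt_planeReflection (he : ‖e‖ = 1) (hl : 0 < l) (hx : x ∈ cap e l)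
    (hy : y ∈ ball 0 1) (hyl : ⟪y, e⟫ ≤ l) (hne : y ≠ planeReflection e l x) :
    boggioKernel x y < boggioKernel (planeReflection e l x) y := by
  have hd : 0 < ‖planeReflection e l x - y‖ := norm_pos_iff.2 (sub_ne_zero.2 hne.symm)
  refine strictMonoOn_boggioProfile
    (boggioKernel_arg_nonneg (ball_subset_closedBall hx.1) (ball_subset_closedBall hy))
    (boggioKernel_arg_nonneg (ball_subset_closedBall (planeReflection_mem_ball he hl.le hx))
      (ball_subset_closedBall hy)) ?_
  have hy' := one_sub_norm_sq_pos hy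
  have hx' := one_sub_norm_sq_pos (planeReflection_mem_ball he hl.le hx)
  have hlt : ‖planeReflection e l x‖ ^ 2 < ‖x‖ ^ 2 := by
    have := mul_pos hl (sub_pos.2 hx.2)
    linarith [norm_sq_planeReflection he l x]
  exact div_lt_div₀ (by gcongr) (norm_planeReflection_sub_sq_le he hx hyl)
    (by positivity) (by positivity)

lemma boggioKernel_add_le_planeReflection (he : ‖e‖ = 1) (hl : 0 ≤ l) (hx : x ∈ cap e l)
    (hy : y ∈ cap e l) (hne : y ≠ x) :
    boggioKernel x y + boggioKernel x (planeReflection e l y) ≤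
      boggioKernel (planeReflection e l x) (planeReflection e l y) +
        boggioKernel (planeReflection e l x) y := by
  have hd : 0 < ‖x - y‖ := norm_pos_iff.2 (sub_ne_zero.2 hne.symm)
  have hxy : 0 < (⟪x, e⟫ - l) * (⟪y, e⟫ - l) := mul_pos (sub_pos.2 hx.2) (sub_pos.2 hy.2)
  unfold boggioKernel
  rw [norm_planeReflection_sub_planeReflection he, norm_sub_planeReflection he]
  refine boggioProfile_four_point (one_sub_norm_sq_pos hx.1)
    (sub_le_sub_left (norm_sq_planeReflection_le he hl hx) 1) (one_sub_norm_sq_pos hy.1)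
    (sub_le_sub_left (norm_sq_planeReflection_le he hl hy) 1) (by positivity) ?_
  linarith [norm_sq_planeReflection_sub he l x y]

end KernelComparison

/-! ### The method of moving planes -/

section MovingPlanes

variable {E : Type*} [NormedAddCommGroup E] [InnerProductSpace ℝ E] {e x y : E} {l M W K : ℝ}
  {u : E → ℝ}

/-- The points of a cap at which `u` exceeds its value at the mirror point. The method of moving
planes shows that this set is empty. -/
def capExcess (u : E → ℝ) (e : E) (l : ℝ) : Set E :=
  {y ∈ cap e l | u (planeReflection e l y) < u y}

lemma capExcess_eq_empty_iff :
    capExcess u e l = ∅ ↔ ∀ x ∈ cap e l, u x ≤ u (planeReflection e l x) := by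
  simp only [capExcess, sep_eq_empty_iff_mem_false, not_lt]

lemma capExcess_subset_ball : capExcess u e l ⊆ ball 0 1 := fun _ hy => hy.1.1

lemma isOpen_capExcess (hu : ContinuousOn u (ball 0 1)) (he : ‖e‖ = 1) (hl : 0 ≤ l) :
    IsOpen (capExcess u e l) := by
  have hdiff : ContinuousOn (fun y => u y - u (planeReflection e l y)) (cap e l) :=
    (hu.mono (cap_subset_ball e l)).sub
      (hu.comp (continuous_planeReflection e l).continuousOn
        fun _ hy => planeReflection_mem_ball he hl hy)
  convert hdiff.isOpen_inter_preimage (isOpen_cap e l) (isOpen_Ioi (a := (0 : ℝ))) using 1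
  ext y
  simp only [capExcess, mem_ofPred_eq, mem_inter_iff, mem_preimage, mem_Ioi, sub_pos]

lemma continuousAt_comp_planeReflection (hu : ContinuousOn u (ball 0 1)) (he : ‖e‖ = 1)
    (hl : 0 ≤ l) (hx : x ∈ cap e l) :
    ContinuousAt (fun l' => u (planeReflection e l' x)) l :=
  ContinuousAt.comp (f := fun l' => planeReflection e l' x)
    (hu.continuousAt (isOpen_ball.mem_nhds (planeReflection_mem_ball he hl hx)))
    (continuous_planeReflection_level e x).continuousAt

lemma capExcess_eq_empty_of_tendsto (hu : ContinuousOn u (ball 0 1)) (he : ‖e‖ = 1) (hl : 0 ≤ l)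
    {s : ℕ → ℝ} (hs : Tendsto s atTop (𝓝 l)) (hempty : ∀ n, capExcess u e (s n) = ∅) :
    capExcess u e l = ∅ := by
  refine capExcess_eq_empty_iff.2 fun x hx => ?_
  refine ge_of_tendsto ((continuousAt_comp_planeReflection hu he hl hx).tendsto.comp hs) ?_
  filter_upwards [hs.eventually_lt_const hx.2] with n hn
  exact capExcess_eq_empty_iff.1 (hempty n) x ⟨hx.1, hn⟩

/-- The gain in `boggioKernel · y * exp (u y)` when `x` is replaced by its mirror point. -/
def reflectionGain (u : E → ℝ) (e : E) (l : ℝ) (x y : E) : ℝ :=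
  (boggioKernel (planeReflection e l x) y - boggioKernel x y) * Real.exp (u y)

lemma reflectionGain_nonneg (he : ‖e‖ = 1) (hl : 0 ≤ l) (hx : x ∈ cap e l)
    (hy : y ∈ capRemainder e l) : 0 ≤ reflectionGain u e l x y :=
  mul_nonneg (sub_nonneg.2 (boggioKernel_le_planeReflection he hl hx hy.1
    (inner_le_of_mem_capRemainder hy) (ne_planeReflection_of_mem_capRemainder he hx hy)))
    (Real.exp_pos _).le

lemma reflectionGain_pos (he : ‖e‖ = 1) (hl : 0 < l) (hx : x ∈ cap e l)
    (hy : y ∈ capRemainder e l) : 0 < reflectionGain u e l x y :=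
  mul_pos (sub_pos.2 (boggioKernel_lt_planeReflection he hl hx hy.1
    (inner_le_of_mem_capRemainder hy) (ne_planeReflection_of_mem_capRemainder he hx hy)))
    (Real.exp_pos _)

lemma boggioKernel_planeReflection_le_planeReflection (he : ‖e‖ = 1) (hl : 0 ≤ l)
    (hx : x ∈ cap e l) (hy : y ∈ cap e l) (hne : y ≠ x) :
    boggioKernel x (planeReflection e l y) ≤
      boggioKernel (planeReflection e l x) (planeReflection e l y) := by
  refine boggioKernel_le_planeReflection he hl hx (planeReflection_mem_ball he hl hy) ?_ fun h => ?_
  · have hy₂ : l < ⟪y, e⟫ := hy.2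
    rw [inner_planeReflection he]
    linarith
  · exact hne (by rw [← planeReflection_planeReflection he l y, h,
      planeReflection_planeReflection he])

lemma reflectionGain_add_nonneg (he : ‖e‖ = 1) (hl : 0 ≤ l) (hx : x ∈ cap e l)
    (hy : y ∈ cap e l) (hne : y ≠ x) (hu : u y ≤ u (planeReflection e l y)) :
    0 ≤ reflectionGain u e l x y + reflectionGain u e l x (planeReflection e l y) := by
  have hkernel := boggioKernel_planeReflection_le_planeReflection he hl hx hy hne
  have hfour := boggioKernel_add_le_planeReflection he hl hx hy hne
  have hexp := Real.exp_le_exp.2 hu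
  have hpos := Real.exp_pos (u y)
  unfold reflectionGain
  nlinarith [mul_nonneg (sub_nonneg.2 hkernel) (sub_nonneg.2 hexp)]

lemma neg_le_reflectionGain_add (he : ‖e‖ = 1) (hl : 0 ≤ l) (hx : x ∈ cap e l)
    (hy : y ∈ cap e l) (hne : y ≠ x) (hu : u (planeReflection e l y) ≤ u y) :
    -(2 * ‖x - y‖⁻¹ * (Real.exp (u y) * (u y - u (planeReflection e l y)))) ≤
      reflectionGain u e l x y + reflectionGain u e l x (planeReflection e l y) := by
  have hx' := ball_subset_closedBall (planeReflection_mem_ball he hl hx)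
  have hy' := ball_subset_closedBall (planeReflection_mem_ball he hl hy)
  have hfour := boggioKernel_add_le_planeReflection he hl hx hy hne
  have hbound := boggioKernel_le_inv hx' hy'
  rw [norm_planeReflection_sub_planeReflection he] at hbound
  have hnonneg := boggioKernel_nonneg (ball_subset_closedBall hx.1) hy'
  have hpos := Real.exp_pos (u y)
  have hexp_sub : Real.exp (u y) - Real.exp (u (planeReflection e l y)) ≤
      Real.exp (u y) * (u y - u (planeReflection e l y)) := by
    have hsplit : Real.exp (u (planeReflection e l y)) =
        Real.exp (u y) * Real.exp (u (planeReflection e l y) - u y) := by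
      rw [← Real.exp_add, add_sub_cancel]
    nlinarith [Real.add_one_le_exp (u (planeReflection e l y) - u y)]
  have hprod := mul_le_mul (show boggioKernel (planeReflection e l x) (planeReflection e l y) -
      boggioKernel x (planeReflection e l y) ≤ 2 * ‖x - y‖⁻¹ by linarith) hexp_sub
    (sub_nonneg.2 (Real.exp_le_exp.2 hu)) (by positivity)
  unfold reflectionGain
  nlinarith

variable [MeasurableSpace E] [BorelSpace E] [FiniteDimensional ℝ E]

/-- `u` solves the equation `u = K ∫ boggioKernel · y * exp (u y)` on the unit ball. In dimension
four this is the integral form of the Dirichlet mean field problem. -/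
structure IsBoggioSolution (K : ℝ) (u : E → ℝ) : Prop where
  pos : 0 < K
  continuousOn : ContinuousOn u (closedBall 0 1)
  eq_integral : ∀ x ∈ ball 0 1, u x = K * ∫ y in ball 0 1, boggioKernel x y * Real.exp (u y)

lemma exists_setIntegral_inv_norm_sub_le (hE : 2 < Module.finrank ℝ E) {ε : ℝ} (hε : 0 < ε) :
    ∃ δ > 0, ∀ A : Set E, A ⊆ ball 0 1 → volume.real A < δ → ∀ x ∈ closedBall (0 : E) 1,
      IntegrableOn (fun y => ‖x - y‖⁻¹) A ∧ ∫ y in A, ‖x - y‖⁻¹ ≤ ε := by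
  set C := ∫ z in ball (0 : E) 2, (‖z‖ ^ 2)⁻¹
  have hC : 0 ≤ C := integral_nonneg fun z => by positivity
  set s := ε / (C + 1) with hs
  have hs₀ : 0 < s := by positivity
  refine ⟨s * ε, by positivity, fun A hA hvol x hx => ?_⟩
  have hfin : volume A ≠ ⊤ := ((measure_mono hA).trans_lt measure_ball_lt_top).ne
  obtain ⟨hint, hle⟩ := integrableOn_inv_norm_sub_sq hE hx
  have hint_sq : IntegrableOn (fun y => s / 2 * (‖x - y‖ ^ 2)⁻¹) A :=
    (hint.mono_set hA).const_mul _
  have hint_const : IntegrableOn (fun _ : E => 1 / (2 * s)) A := integrableOn_const hfin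
  have hyoung : ∀ y, ‖x - y‖⁻¹ ≤ s / 2 * (‖x - y‖ ^ 2)⁻¹ + 1 / (2 * s) := fun y => by
    have hsq : s / 2 * (‖x - y‖⁻¹) ^ 2 + 1 / (2 * s) - ‖x - y‖⁻¹ =
        (s * ‖x - y‖⁻¹ - 1) ^ 2 / (2 * s) := by field_simp; ring
    have : 0 ≤ (s * ‖x - y‖⁻¹ - 1) ^ 2 / (2 * s) := by positivity
    rw [← inv_pow]
    linarith
  have hint_inv : IntegrableOn (fun y => ‖x - y‖⁻¹) A :=
    (hint_sq.add hint_const).mono' (by fun_prop) (Eventually.of_forall fun y => by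
      simpa only [Pi.add_apply, norm_inv, norm_norm] using hyoung y)
  have hmono : ∫ y in A, (‖x - y‖ ^ 2)⁻¹ ≤ C :=
    (setIntegral_mono_set hint (Eventually.of_forall fun y => by positivity)
      hA.eventuallyLE).trans hle
  refine ⟨hint_inv, ?_⟩
  calc ∫ y in A, ‖x - y‖⁻¹
      ≤ ∫ y in A, (s / 2 * (‖x - y‖ ^ 2)⁻¹ + 1 / (2 * s)) :=
        integral_mono hint_inv (hint_sq.add hint_const) hyoung
    _ = s / 2 * (∫ y in A, (‖x - y‖ ^ 2)⁻¹) + volume.real A / (2 * s) := by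
        rw [integral_add hint_sq hint_const, integral_const_mul, setIntegral_const, smul_eq_mul]
        ring
    _ ≤ s / 2 * (C + 1) + s * ε / (2 * s) := by gcongr; linarith
    _ = ε := by rw [hs]; field_simp; ring

namespace IsBoggioSolution

lemma exists_abs_le (h : IsBoggioSolution K u) :
    ∃ M, ∀ y ∈ closedBall (0 : E) 1, |u y| ≤ M :=
  (isCompact_closedBall 0 1).exists_bound_of_continuousOn h.continuousOn

lemma continuousOn_ball (h : IsBoggioSolution K u) : ContinuousOn u (ball 0 1) :=
  h.continuousOn.mono ball_subset_closedBall

lemma integrableOn (h : IsBoggioSolution K u) (hE : 2 < Module.finrank ℝ E)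
    (hx : x ∈ closedBall 0 1) :
    IntegrableOn (fun y => boggioKernel x y * Real.exp (u y)) (ball 0 1) := by
  obtain ⟨M, hM⟩ := h.exists_abs_le
  have hexp : AEStronglyMeasurable (fun y => Real.exp (u y)) (volume.restrict (ball 0 1)) :=
    (Real.continuous_exp.comp_continuousOn h.continuousOn_ball).aestronglyMeasurable
      measurableSet_ball
  refine ((integrableOn_inv_norm_sub_sq hE hx).1.mul_const (Real.exp M)).mono'
    ((measurable_boggioKernel x).aestronglyMeasurable.mul hexp) ?_
  filter_upwards [ae_restrict_mem measurableSet_ball] with y hy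
  have hy := ball_subset_closedBall hy
  rw [Real.norm_of_nonneg (mul_nonneg (boggioKernel_nonneg hx hy) (Real.exp_pos _).le)]
  exact mul_le_mul (boggioKernel_le_inv_sq hx hy)
    (Real.exp_le_exp.2 ((le_abs_self _).trans (hM y hy))) (Real.exp_pos _).le (by positivity)

lemma integrableOn_reflectionGain (h : IsBoggioSolution K u) (hE : 2 < Module.finrank ℝ E)
    (he : ‖e‖ = 1) (hl : 0 ≤ l) (hx : x ∈ cap e l) :
    IntegrableOn (reflectionGain u e l x) (ball 0 1) := by
  unfold reflectionGain
  simp only [sub_mul]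
  exact (h.integrableOn hE (ball_subset_closedBall (planeReflection_mem_ball he hl hx))).sub
    (h.integrableOn hE (ball_subset_closedBall hx.1))

lemma integrableOn_reflectionGain_add (h : IsBoggioSolution K u) (hE : 2 < Module.finrank ℝ E)
    (he : ‖e‖ = 1) (hl : 0 ≤ l) (hx : x ∈ cap e l) :
    IntegrableOn (fun y => reflectionGain u e l x y +
      reflectionGain u e l x (planeReflection e l y)) (cap e l) :=
  ((h.integrableOn_reflectionGain hE he hl hx).mono_set (cap_subset_ball e l)).add
    (integrableOn_comp_planeReflection_cap he hl (h.integrableOn_reflectionGain hE he hl hx))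

lemma planeReflection_sub_eq (h : IsBoggioSolution K u) (hE : 2 < Module.finrank ℝ E)
    (he : ‖e‖ = 1) (hl : 0 ≤ l) (hx : x ∈ cap e l) :
    u (planeReflection e l x) - u x =
      K * ((∫ y in cap e l, (reflectionGain u e l x y +
        reflectionGain u e l x (planeReflection e l y))) +
          ∫ y in capRemainder e l, reflectionGain u e l x y) := by
  have hx' := planeReflection_mem_ball he hl hx
  rw [← setIntegral_ball_eq_cap_add_capRemainder he hl (h.integrableOn_reflectionGain hE he hl hx),
    h.eq_integral x hx.1, h.eq_integral _ hx', ← mul_sub,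
    ← integral_sub (h.integrableOn hE (ball_subset_closedBall hx'))
      (h.integrableOn hE (ball_subset_closedBall hx.1))]
  simp only [reflectionGain, sub_mul]

lemma lt_planeReflection (h : IsBoggioSolution K u) (hE : 2 < Module.finrank ℝ E) (he : ‖e‖ = 1)
    (hl : 0 < l) (hle : ∀ y ∈ cap e l, u y ≤ u (planeReflection e l y)) (hx : x ∈ cap e l) :
    u x < u (planeReflection e l x) := by
  have : Nontrivial E := Module.nontrivial_of_finrank_pos (R := ℝ) (by omega)
  have hcap : 0 ≤ ∫ y in cap e l, (reflectionGain u e l x y +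
      reflectionGain u e l x (planeReflection e l y)) := by
    refine integral_nonneg_of_ae ?_
    filter_upwards [ae_restrict_mem (isOpen_cap e l).measurableSet,
      ae_restrict_of_ae (Measure.ae_ne volume x)] with y hy hne
    exact reflectionGain_add_nonneg he hl.le hx hy hne (hle y hy)
  have hrem : 0 < ∫ y in capRemainder e l, reflectionGain u e l x y := by
    rw [setIntegral_pos_iff_support_of_nonneg_ae]
    · have hsupp : Function.support (reflectionGain u e l x) ∩ capRemainder e l =
          capRemainder e l := inter_eq_right.2 fun y hy => (reflectionGain_pos he hl hx hy).ne'
      rw [hsupp]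
      exact volume_capRemainder_pos he hl (level_lt_one_of_mem_cap he hx)
    · filter_upwards [ae_restrict_mem (measurableSet_capRemainder e l)] with y hy
      exact reflectionGain_nonneg he hl.le hx hy
    · exact (h.integrableOn_reflectionGain hE he hl.le hx).mono_set sdiff_subset
  have := mul_pos h.pos (add_pos_of_nonneg_of_pos hcap hrem)
  linarith [h.planeReflection_sub_eq hE he hl.le hx]

lemma neg_mul_integral_le_integral_reflectionGain_add (h : IsBoggioSolution K u)
    (hE : 2 < Module.finrank ℝ E) (hM : ∀ y ∈ closedBall 0 1, |u y| ≤ M) (he : ‖e‖ = 1)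
    (hl : 0 ≤ l) (hW : ∀ y ∈ capExcess u e l, u y - u (planeReflection e l y) ≤ W)
    (hx : x ∈ cap e l) (hint : IntegrableOn (fun y => ‖x - y‖⁻¹) (capExcess u e l)) :
    -(2 * Real.exp M * W) * ∫ y in capExcess u e l, ‖x - y‖⁻¹ ≤
      ∫ y in cap e l, (reflectionGain u e l x y +
        reflectionGain u e l x (planeReflection e l y)) := by
  have : Nontrivial E := Module.nontrivial_of_finrank_pos (R := ℝ) (by omega)
  have hexcess := (isOpen_capExcess h.continuousOn_ball he hl).measurableSet
  have hcap := (isOpen_cap e l).measurableSet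
  rw [← integral_const_mul, ← integral_indicator hexcess, ← integral_indicator hcap]
  refine integral_mono_ae ((integrable_indicator_iff hexcess).2 (hint.const_mul _))
    ((integrable_indicator_iff hcap).2 (h.integrableOn_reflectionGain_add hE he hl hx)) ?_
  filter_upwards [Measure.ae_ne volume x] with y hne
  by_cases hy : y ∈ cap e l
  swap
  · rw [indicator_of_notMem hy, indicator_of_notMem fun hy' => hy hy'.1]
  rw [indicator_of_mem hy]
  by_cases hyu : u (planeReflection e l y) < u y
  · have hy' : y ∈ capExcess u e l := ⟨hy, hyu⟩
    rw [indicator_of_mem hy']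
    refine le_trans ?_ (neg_le_reflectionGain_add he hl hx hy hne hyu.le)
    have hprod : Real.exp (u y) * (u y - u (planeReflection e l y)) ≤ Real.exp M * W :=
      mul_le_mul (Real.exp_le_exp.2 (abs_le.1 (hM y (ball_subset_closedBall hy.1))).2)
        (hW y ⟨hy, hyu⟩) (sub_nonneg.2 hyu.le) (Real.exp_pos _).le
    have hinv : 0 ≤ ‖x - y‖⁻¹ := by positivity
    nlinarith
  · rw [indicator_of_notMem fun hy' : y ∈ capExcess u e l => hyu hy'.2]
    exact reflectionGain_add_nonneg he hl hx hy hne (not_lt.1 hyu)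

lemma sub_planeReflection_le (h : IsBoggioSolution K u) (hE : 2 < Module.finrank ℝ E)
    (hM : ∀ y ∈ closedBall 0 1, |u y| ≤ M) (he : ‖e‖ = 1) (hl : 0 ≤ l)
    (hW : ∀ y ∈ capExcess u e l, u y - u (planeReflection e l y) ≤ W) (hx : x ∈ cap e l)
    (hint : IntegrableOn (fun y => ‖x - y‖⁻¹) (capExcess u e l)) :
    u x - u (planeReflection e l x) ≤
      2 * K * Real.exp M * W * ∫ y in capExcess u e l, ‖x - y‖⁻¹ := by
  have hcap := h.neg_mul_integral_le_integral_reflectionGain_add hE hM he hl hW hx hint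
  have hrem : 0 ≤ ∫ y in capRemainder e l, reflectionGain u e l x y :=
    setIntegral_nonneg (measurableSet_capRemainder e l)
      fun y hy => reflectionGain_nonneg he hl hx hy
  have hmul := mul_le_mul_of_nonneg_left (add_le_add hcap hrem) h.pos.le
  linarith [h.planeReflection_sub_eq hE he hl hx]

/-- On a small excess set the integral equation makes the maximal excess at most half of itself. -/
lemma exists_capExcess_eq_empty_of_volume_lt (h : IsBoggioSolution K u)
    (hE : 2 < Module.finrank ℝ E) :
    ∃ δ > 0, ∀ e : E, ‖e‖ = 1 → ∀ l ≥ 0,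
      volume.real (capExcess u e l) < δ → capExcess u e l = ∅ := by
  obtain ⟨M, hM⟩ := h.exists_abs_le
  have hK := h.pos
  obtain ⟨δ, hδ, hsmall⟩ := exists_setIntegral_inv_norm_sub_le hE
    (ε := (4 * K * Real.exp M)⁻¹) (by positivity)
  refine ⟨δ, hδ, fun e he l hl hvol => ?_⟩
  by_contra hne
  obtain ⟨x₀, hx₀⟩ := nonempty_iff_ne_empty.2 hne
  set w : E → ℝ := fun y => u y - u (planeReflection e l y)
  have hbdd : BddAbove (w '' capExcess u e l) := by
    refine ⟨2 * M, ?_⟩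
    rintro _ ⟨y, hy, rfl⟩
    have hy₁ := abs_le.1 (hM y (ball_subset_closedBall hy.1.1))
    have hy₂ := abs_le.1 (hM _ (ball_subset_closedBall (planeReflection_mem_ball he hl hy.1)))
    exact (by linarith : u y - u (planeReflection e l y) ≤ 2 * M)
  set W := sSup (w '' capExcess u e l)
  have hwW : ∀ y ∈ capExcess u e l, w y ≤ W := fun y hy => le_csSup hbdd (mem_image_of_mem _ hy)
  have hW : 0 < W := (sub_pos.2 hx₀.2).trans_le (hwW x₀ hx₀)
  have hhalf : ∀ x ∈ capExcess u e l, w x ≤ W / 2 := fun x hx => by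
    obtain ⟨hint, hle⟩ := hsmall _ capExcess_subset_ball hvol x (ball_subset_closedBall hx.1.1)
    calc w x ≤ 2 * K * Real.exp M * W * ∫ y in capExcess u e l, ‖x - y‖⁻¹ :=
          h.sub_planeReflection_le hE hM he hl hwW hx.1 hint
      _ ≤ 2 * K * Real.exp M * W * (4 * K * Real.exp M)⁻¹ := by gcongr
      _ = W / 2 := by field_simp; ring
  have : W ≤ W / 2 := csSup_le ⟨_, mem_image_of_mem _ hx₀⟩ (forall_mem_image.2 hhalf)
  linarith

lemma tendsto_volume_capExcess (h : IsBoggioSolution K u) (hE : 2 < Module.finrank ℝ E)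
    (he : ‖e‖ = 1) (hl : 0 < l) (hempty : capExcess u e l = ∅) :
    Tendsto (fun l' => volume (capExcess u e (max l' 0))) (𝓝 l) (𝓝 0) := by
  have hmax : Tendsto (fun l' : ℝ => max l' 0) (𝓝 l) (𝓝 l) := by
    have : ContinuousAt (fun l' : ℝ => max l' 0) l := by fun_prop
    simpa only [ContinuousAt, max_eq_left hl.le] using this
  rw [← measure_empty (μ := (volume : Measure E))]
  refine tendsto_measure_of_ae_tendsto_indicator (𝓝 l) MeasurableSet.empty
    (fun l' => (isOpen_capExcess h.continuousOn_ball he (le_max_right _ _)).measurableSet)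
    measurableSet_ball measure_ball_lt_top.ne
    (Eventually.of_forall fun _ => capExcess_subset_ball) ?_
  filter_upwards [ae_inner_ne he l] with y hy
  suffices hev : ∀ᶠ l' in 𝓝 l, y ∉ capExcess u e (max l' 0) by
    filter_upwards [hev] with l' hl'
    simpa only [mem_empty_iff_false, iff_false] using hl'
  by_cases hyB : y ∈ ball (0 : E) 1
  swap
  · exact Eventually.of_forall fun _ hy' => hyB hy'.1.1
  rcases lt_or_gt_of_ne hy with hlt | hgt
  · filter_upwards [hmax.eventually_const_lt hlt] with l' hl' hy'
    exact hl'.not_gt hy'.1.2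
  · have hcap : y ∈ cap e l := ⟨hyB, hgt⟩
    have hstrict := h.lt_planeReflection hE he hl (capExcess_eq_empty_iff.1 hempty) hcap
    have hcont := continuousAt_comp_planeReflection h.continuousOn_ball he hl.le hcap
    filter_upwards [(hcont.tendsto.comp hmax).eventually_const_lt hstrict] with l' hl' hy'
    exact lt_asymm hl' hy'.2

lemma eventually_capExcess_eq_empty (h : IsBoggioSolution K u) (hE : 2 < Module.finrank ℝ E)
    (he : ‖e‖ = 1) (hl : 0 < l) (hempty : capExcess u e l = ∅) :
    ∀ᶠ l' in 𝓝 l, capExcess u e l' = ∅ := by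
  obtain ⟨δ, hδ, hnarrow⟩ := h.exists_capExcess_eq_empty_of_volume_lt hE
  filter_upwards [(h.tendsto_volume_capExcess hE he hl hempty).eventually_lt_const
    (ENNReal.ofReal_pos.2 hδ), eventually_gt_nhds hl] with l' hvol hl'
  rw [max_eq_left hl'.le] at hvol
  exact hnarrow e he l' hl'.le (ENNReal.toReal_lt_of_lt_ofReal hvol)

lemma le_planeReflection_zero (h : IsBoggioSolution K u) (hE : 2 < Module.finrank ℝ E)
    (he : ‖e‖ = 1) (hx : x ∈ cap e 0) : u x ≤ u (planeReflection e 0 x) := by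
  have key : Icc (0 : ℝ) 1 ⊆ {t | capExcess u e (1 - t) = ∅} := by
    refine IsClosed.Icc_subset_of_forall_mem_nhdsWithin ?_ ?_ ?_
    · rw [← isSeqClosed_iff_isClosed]
      intro s t hs hst
      have ht : t ∈ Icc (0 : ℝ) 1 :=
        isClosed_Icc.mem_of_tendsto hst (Eventually.of_forall fun n => (hs n).2)
      exact ⟨capExcess_eq_empty_of_tendsto h.continuousOn_ball he (sub_nonneg.2 ht.2)
        (hst.const_sub 1) fun n => (hs n).1, ht⟩
    · rw [mem_ofPred_eq, sub_zero, capExcess_eq_empty_iff]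
      exact fun y hy => absurd (level_lt_one_of_mem_cap he hy) (lt_irrefl 1)
    · rintro t ⟨hempty, -, ht⟩
      exact nhdsWithin_le_nhds ((tendsto_id.const_sub 1).eventually
        (h.eventually_capExcess_eq_empty hE he (sub_pos.2 ht) hempty))
  have hempty : capExcess u e (1 - 1) = ∅ := key (right_mem_Icc.2 zero_le_one)
  rw [sub_self] at hempty
  exact capExcess_eq_empty_iff.1 hempty x hx

lemma le_of_norm_eq (h : IsBoggioSolution K u) (hE : 2 < Module.finrank ℝ E)
    (hx : x ∈ ball 0 1) (hxy : ‖x‖ = ‖y‖) : u x ≤ u y := by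
  rcases eq_or_ne x y with rfl | hne
  · rfl
  have hd : 0 < ‖x - y‖ := norm_pos_iff.2 (sub_ne_zero.2 hne)
  set e : E := ‖x - y‖⁻¹ • (x - y) with he_def
  have he : ‖e‖ = 1 := by rw [he_def, norm_smul, norm_inv, norm_norm, inv_mul_cancel₀ hd.ne']
  have hsq : ‖x - y‖ ^ 2 = 2 * ⟪x, x - y⟫ := by
    rw [norm_sub_sq_real, inner_sub_right, real_inner_self_eq_norm_sq, hxy]
    ring
  have hinner : 2 * ⟪x, e⟫ = ‖x - y‖ := by
    rw [he_def, real_inner_smul_right, mul_left_comm, ← hsq]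
    field_simp
  have hreflect : planeReflection e 0 x = y := by
    rw [planeReflection, sub_zero, hinner, he_def, smul_smul, mul_inv_cancel₀ hd.ne', one_smul,
      sub_sub_cancel]
  have hle := h.le_planeReflection_zero hE he (x := x)
    ⟨hx, show 0 < ⟪x, e⟫ by linarith⟩
  rwa [hreflect] at hle

theorem eq_of_norm_eq (h : IsBoggioSolution K u) (hE : 2 < Module.finrank ℝ E)
    (hx : x ∈ ball 0 1) (hxy : ‖x‖ = ‖y‖) : u x = u y :=
  (h.le_of_norm_eq hE hx hxy).antisymm
    (h.le_of_norm_eq hE (by rwa [mem_ball_zero_iff, ← hxy, ← mem_ball_zero_iff]) hxy.symm)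

end IsBoggioSolution

end MovingPlanes

/-! ### The radial equation in logarithmic time -/

section Monotone

variable {f f' : ℝ → ℝ} {a b k L t : ℝ}

lemma monotoneOn_Iic_of_hasDerivAt_nonneg (hf : ContinuousOn f (Iic b))
    (hf' : ∀ t < b, HasDerivAt f (f' t) t) (hnonneg : ∀ t < b, 0 ≤ f' t) :
    MonotoneOn f (Iic b) :=
  monotoneOn_of_hasDerivWithinAt_nonneg (convex_Iic b) hf
    (fun t ht => (hf' t (interior_Iic.subset ht)).hasDerivWithinAt)
    fun t ht => hnonneg t (interior_Iic.subset ht)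

lemma monotoneOn_Icc_of_hasDerivAt_nonneg (hf : ContinuousOn f (Icc a b))
    (hf' : ∀ t ∈ Ioo a b, HasDerivAt f (f' t) t) (hnonneg : ∀ t ∈ Ioo a b, 0 ≤ f' t) :
    MonotoneOn f (Icc a b) :=
  monotoneOn_of_hasDerivWithinAt_nonneg (convex_Icc a b) hf
    (fun t ht => (hf' t (interior_Icc.subset ht)).hasDerivWithinAt)
    fun t ht => hnonneg t (interior_Icc.subset ht)

lemma le_of_monotoneOn_Iic_of_tendsto_atBot (hf : MonotoneOn f (Iic b))
    (hL : Tendsto f atBot (𝓝 L)) (ht : t ≤ b) : L ≤ f t :=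
  le_of_tendsto hL <| by
    filter_upwards [eventually_le_atBot t] with s hs using hf (hs.trans ht) ht hs

lemma tendsto_exp_mul_sub_atBot (hk : 0 < k) (c : ℝ) :
    Tendsto (fun t => Real.exp (k * (t - c))) atBot (𝓝 0) :=
  Real.tendsto_exp_atBot.comp
    ((tendsto_atBot_add_const_right atBot (-c) tendsto_id).const_mul_atBot hk)

lemma hasDerivAt_exp_mul_sub (k c t : ℝ) :
    HasDerivAt (fun s => Real.exp (k * (s - c))) (k * Real.exp (k * (t - c))) t := by
  have h : HasDerivAt (fun s => k * (s - c)) k t := by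
    simpa using ((hasDerivAt_id t).sub_const c).const_mul k
  simpa only [mul_comm] using h.exp

lemma hasDerivAt_exp_mul_mul {y : ℝ} (hf : HasDerivAt f y t) (k : ℝ) :
    HasDerivAt (fun s => Real.exp (k * s) * f s) (Real.exp (k * t) * (y + k * f t)) t := by
  have hexp := hasDerivAt_exp_mul_sub k 0 t
  simp only [sub_zero] at hexp
  exact (hexp.mul hf).congr_deriv (by ring)

lemma monotoneOn_exp_mul_mul (hf : ContinuousOn f (Iic b))
    (hf' : ∀ t < b, HasDerivAt f (f' t) t) (hnonneg : ∀ t < b, 0 ≤ f' t + k * f t) :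
    MonotoneOn (fun t => Real.exp (k * t) * f t) (Iic b) :=
  monotoneOn_Iic_of_hasDerivAt_nonneg (by fun_prop)
    (fun t ht => hasDerivAt_exp_mul_mul (hf' t ht) k)
    fun t ht => mul_nonneg (Real.exp_pos _).le (hnonneg t ht)

lemma nonneg_of_tendsto_atBot_of_deriv_add_mul_nonneg (hk : 0 < k) (hf : ContinuousOn f (Iic b))
    (hf' : ∀ t < b, HasDerivAt f (f' t) t) (hnonneg : ∀ t < b, 0 ≤ f' t + k * f t)
    (hL : Tendsto f atBot (𝓝 0)) (ht : t ≤ b) : 0 ≤ f t := by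
  have hlim : Tendsto (fun t => Real.exp (k * t) * f t) atBot (𝓝 0) := by
    simpa using (tendsto_exp_mul_sub_atBot hk 0).mul hL
  have hmono := monotoneOn_exp_mul_mul hf hf' hnonneg
  exact nonneg_of_mul_nonneg_right (le_of_monotoneOn_Iic_of_tendsto_atBot hmono hlim ht :)
    (Real.exp_pos _)

end Monotone

/-- The radial equation `Δ²u = lam * exp u` on the unit ball of `ℝ⁴` with zero Dirichlet data, as a
first order system in `t = log r ≤ 0`. Here `V t = u (exp t)` with `N = u 0`, the mass
`m t = ∫₀^r lam * s³ * exp (u s) ds` is at most `C`, and `A = -(3 r u' + r² u'')` and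
`B = -(r u' - r² u'')` diagonalize the linear part. -/
structure LogRadialSystem (C lam N : ℝ) (V A B m : ℝ → ℝ) : Prop where
  lam_pos : 0 < lam
  continuousOn_V : ContinuousOn V (Iic 0)
  continuousOn_A : ContinuousOn A (Iic 0)
  continuousOn_B : ContinuousOn B (Iic 0)
  continuousOn_m : ContinuousOn m (Iic 0)
  hasDerivAt_V : ∀ t < 0, HasDerivAt V (-(A t + B t) / 4) t
  hasDerivAt_A : ∀ t < 0, HasDerivAt A (2 * A t - m t) t
  hasDerivAt_B : ∀ t < 0, HasDerivAt B (m t - 2 * B t) t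
  hasDerivAt_m : ∀ t < 0, HasDerivAt m (lam * Real.exp (4 * t + V t)) t
  V_zero : V 0 = 0
  A_add_B_zero : A 0 + B 0 = 0
  tendsto_V : Tendsto V atBot (𝓝 N)
  tendsto_A : Tendsto A atBot (𝓝 0)
  tendsto_B : Tendsto B atBot (𝓝 0)
  tendsto_m : Tendsto m atBot (𝓝 0)
  m_le : ∀ t ≤ 0, m t ≤ C

namespace LogRadialSystem

variable {C lam N S T κ η t t₀ : ℝ} {V A B m : ℝ → ℝ}

lemma density_nonneg (h : LogRadialSystem C lam N V A B m) (t : ℝ) :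
    0 ≤ lam * Real.exp (4 * t + V t) :=
  mul_nonneg h.lam_pos.le (Real.exp_pos _).le

lemma monotoneOn_m (h : LogRadialSystem C lam N V A B m) : MonotoneOn m (Iic 0) :=
  monotoneOn_Iic_of_hasDerivAt_nonneg h.continuousOn_m h.hasDerivAt_m
    fun t _ => h.density_nonneg t

lemma m_nonneg (h : LogRadialSystem C lam N V A B m) (ht : t ≤ 0) : 0 ≤ m t :=
  le_of_monotoneOn_Iic_of_tendsto_atBot h.monotoneOn_m h.tendsto_m ht

lemma C_nonneg (h : LogRadialSystem C lam N V A B m) : 0 ≤ C :=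
  (h.m_nonneg le_rfl).trans (h.m_le 0 le_rfl)

lemma B_nonneg (h : LogRadialSystem C lam N V A B m) (ht : t ≤ 0) : 0 ≤ B t :=
  nonneg_of_tendsto_atBot_of_deriv_add_mul_nonneg two_pos h.continuousOn_B h.hasDerivAt_B
    (fun s hs => by linarith [h.m_nonneg hs.le]) h.tendsto_B ht

lemma B_le_half_m (h : LogRadialSystem C lam N V A B m) (ht : t ≤ 0) : B t ≤ m t / 2 := by
  have hlim : Tendsto (fun t => m t / 2 - B t) atBot (𝓝 0) := by
    simpa using (h.tendsto_m.div_const 2).sub h.tendsto_B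
  exact sub_nonneg.1 <| nonneg_of_tendsto_atBot_of_deriv_add_mul_nonneg
    (f := fun t => m t / 2 - B t) two_pos ((h.continuousOn_m.div_const 2).sub h.continuousOn_B)
    (fun s hs => ((h.hasDerivAt_m s hs).div_const 2).sub (h.hasDerivAt_B s hs))
    (fun s _ => by linarith [h.density_nonneg s]) hlim ht

lemma A_sub_le_exp_mul (h : LogRadialSystem C lam N V A B m) (ht₀ : t₀ ≤ 0) (hκ : m t₀ ≤ κ)
    (ht : t ≤ t₀) : A t - κ / 2 ≤ Real.exp (2 * (t - t₀)) * (A t₀ - κ / 2) := by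
  have hmono : MonotoneOn (fun t => Real.exp (-2 * t) * (A t - κ / 2)) (Iic t₀) :=
    monotoneOn_exp_mul_mul
      ((h.continuousOn_A.mono (Iic_subset_Iic.2 ht₀)).sub continuousOn_const)
      (fun s hs => (h.hasDerivAt_A s (hs.trans_le ht₀)).sub_const _)
      fun s hs => by linarith [h.monotoneOn_m (hs.le.trans ht₀) ht₀ hs.le]
  have hle := mul_le_mul_of_nonneg_left (hmono ht self_mem_Iic ht) (Real.exp_pos (2 * t)).le
  have hcancel : Real.exp (2 * t) * Real.exp (-2 * t) = 1 := by
    rw [← Real.exp_add, ← Real.exp_zero]; congr 1; ring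
  have hshift : Real.exp (2 * (t - t₀)) = Real.exp (2 * t) * Real.exp (-2 * t₀) := by
    rw [← Real.exp_add]; congr 1; ring
  rwa [← mul_assoc, ← mul_assoc, hcancel, one_mul, ← hshift] at hle

lemma A_le (h : LogRadialSystem C lam N V A B m) (ht : t ≤ 0) : A t ≤ C / 2 := by
  have hA₀ : A 0 - C / 2 ≤ 0 := by
    linarith [h.A_add_B_zero, h.B_nonneg le_rfl, h.C_nonneg]
  linarith [h.A_sub_le_exp_mul le_rfl (h.m_le 0 le_rfl) ht,
    mul_nonpos_of_nonneg_of_nonpos (Real.exp_pos (2 * (t - 0))).le hA₀]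

lemma A_le_of_m_le (h : LogRadialSystem C lam N V A B m) (ht₀ : t₀ ≤ 0) (hκ : m t₀ ≤ κ)
    (ht : t ≤ t₀) : A t ≤ κ / 2 + Real.exp (2 * (t - t₀)) * (C / 2) := by
  have hA₀ : A t₀ - κ / 2 ≤ C / 2 := by linarith [h.A_le ht₀, h.m_nonneg ht₀]
  linarith [h.A_sub_le_exp_mul ht₀ hκ ht,
    mul_le_mul_of_nonneg_left hA₀ (Real.exp_pos (2 * (t - t₀))).le]

lemma A_add_B_nonneg (h : LogRadialSystem C lam N V A B m) (ht : t ≤ 0) : 0 ≤ A t + B t := by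
  have hmono : MonotoneOn (fun t => Real.exp (-2 * t) * -(A t + B t)) (Iic 0) :=
    monotoneOn_exp_mul_mul (h.continuousOn_A.add h.continuousOn_B).neg
      (fun s hs => ((h.hasDerivAt_A s hs).add (h.hasDerivAt_B s hs)).neg)
      fun s hs => by linarith [h.B_nonneg hs.le]
  have hle : Real.exp (-2 * t) * -(A t + B t) ≤ Real.exp (-2 * 0) * -(A 0 + B 0) :=
    hmono ht self_mem_Iic ht
  rw [h.A_add_B_zero, neg_zero, mul_zero] at hle
  exact neg_nonpos.1 (nonpos_of_mul_nonpos_right hle (Real.exp_pos _))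

lemma antitoneOn_V (h : LogRadialSystem C lam N V A B m) : AntitoneOn V (Iic 0) := by
  have hmono : MonotoneOn (fun t => -V t) (Iic 0) :=
    monotoneOn_Iic_of_hasDerivAt_nonneg h.continuousOn_V.neg
      (fun t ht => (h.hasDerivAt_V t ht).neg) fun t ht => by linarith [h.A_add_B_nonneg ht.le]
  exact fun s hs t ht hst => neg_le_neg_iff.1 (hmono hs ht hst)

lemma V_le_N (h : LogRadialSystem C lam N V A B m) (ht : t ≤ 0) : V t ≤ N :=
  ge_of_tendsto h.tendsto_V <| by
    filter_upwards [eventually_le_atBot t] with s hs using h.antitoneOn_V (hs.trans ht) ht hs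

lemma V_le (h : LogRadialSystem C lam N V A B m) (ht : t ≤ 0) : V t ≤ C / 4 * -t := by
  have hmono : MonotoneOn (fun t => V t + C / 4 * t) (Iic 0) :=
    monotoneOn_Iic_of_hasDerivAt_nonneg (h.continuousOn_V.add (by fun_prop))
      (fun s hs => (h.hasDerivAt_V s hs).add ((hasDerivAt_id s).const_mul _))
      fun s hs => by linarith [h.A_le hs.le, h.B_le_half_m hs.le, h.m_le s hs.le]
  have hle : V t + C / 4 * t ≤ V 0 + C / 4 * 0 := hmono ht self_mem_Iic ht
  linarith [h.V_zero]

/-- The Pohozaev identity on the ball of radius `exp t`. -/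
lemma density_eq (h : LogRadialSystem C lam N V A B m) (ht : t ≤ 0) :
    lam * Real.exp (4 * t + V t) = 4 * m t - m t * (A t + B t) / 4 + A t * B t / 2 := by
  set F : ℝ → ℝ := fun t =>
    4 * m t - m t * (A t + B t) / 4 + A t * B t / 2 - lam * Real.exp (4 * t + V t) with hF
  have hderiv : ∀ s < 0, HasDerivAt F 0 s := fun s hs => by
    have hm := h.hasDerivAt_m s hs
    have hA := h.hasDerivAt_A s hs
    have hB := h.hasDerivAt_B s hs
    have hexp := (((hasDerivAt_id s).const_mul 4).add (h.hasDerivAt_V s hs)).exp.const_mul lam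
    refine ((((hm.const_mul 4).sub ((hm.mul (hA.add hB)).div_const 4)).add
      ((hA.mul hB).div_const 2)).sub hexp).congr_deriv ?_
    simp only [Pi.add_apply, id]
    ring
  have hcont : ContinuousOn F (Iic 0) := by
    have := h.continuousOn_m; have := h.continuousOn_A; have := h.continuousOn_B
    have := h.continuousOn_V
    fun_prop
  have hexp : Tendsto (fun t => Real.exp (4 * t + V t)) atBot (𝓝 0) :=
    Real.tendsto_exp_atBot.comp ((tendsto_id.const_mul_atBot four_pos).atBot_add h.tendsto_V)
  have hlim : Tendsto F atBot (𝓝 0) := by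
    simpa using (((h.tendsto_m.const_mul 4).sub
      ((h.tendsto_m.mul (h.tendsto_A.add h.tendsto_B)).div_const 4)).add
        ((h.tendsto_A.mul h.tendsto_B).div_const 2)).sub (hexp.const_mul lam)
  have hmono := monotoneOn_Iic_of_hasDerivAt_nonneg hcont hderiv fun _ _ => le_rfl
  have hanti := monotoneOn_Iic_of_hasDerivAt_nonneg hcont.neg (fun s hs => (hderiv s hs).neg)
    fun _ _ => neg_zero.ge
  have hge : 0 ≤ F t := le_of_monotoneOn_Iic_of_tendsto_atBot hmono hlim ht
  have hle : -0 ≤ -F t := le_of_monotoneOn_Iic_of_tendsto_atBot (f := -F) hanti hlim.neg ht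
  simp only [hF] at hge hle
  linarith

lemma density_le (h : LogRadialSystem C lam N V A B m) (ht : t ≤ 0) :
    lam * Real.exp (4 * t + V t) ≤ 4 * C + C ^ 2 / 8 := by
  have hC := h.C_nonneg
  have hm := h.m_le t ht
  have hAB : A t * B t ≤ C / 2 * (C / 2) :=
    mul_le_mul (h.A_le ht) (by linarith [h.B_le_half_m ht]) (h.B_nonneg ht) (by positivity)
  rw [h.density_eq ht]
  linarith [mul_nonneg (h.m_nonneg ht) (h.A_add_B_nonneg ht)]

lemma hasDerivAt_V_add (h : LogRadialSystem C lam N V A B m) (ht : t < 0) :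
    HasDerivAt (fun t => V t + (A t - B t) / 8) (-m t / 4) t :=
  ((h.hasDerivAt_V t ht).add
    (((h.hasDerivAt_A t ht).sub (h.hasDerivAt_B t ht)).div_const 8)).congr_deriv (by ring)

lemma continuousOn_V_add (h : LogRadialSystem C lam N V A B m) :
    ContinuousOn (fun t => V t + (A t - B t) / 8) (Iic 0) :=
  h.continuousOn_V.add ((h.continuousOn_A.sub h.continuousOn_B).div_const 8)

lemma density_le_exp_of_m_le_eight (h : LogRadialSystem C lam N V A B m) (ht₀ : t₀ ≤ 0)
    (hm : m t₀ ≤ 8) (ht : t ≤ t₀) : lam * Real.exp (4 * t + V t) ≤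
      (4 * C + C ^ 2 / 8) * Real.exp (C / 16) * Real.exp (2 * (t - t₀)) := by
  have hC := h.C_nonneg
  have hmono : MonotoneOn (fun t => 2 * t + V t + C / 16 * Real.exp (2 * (t - t₀)))
      (Iic t₀) := by
    have := h.continuousOn_V.mono (Iic_subset_Iic.2 ht₀)
    refine monotoneOn_Iic_of_hasDerivAt_nonneg (by fun_prop) (fun s hs =>
      (((hasDerivAt_id s).const_mul 2).add (h.hasDerivAt_V s (hs.trans_le ht₀))).add
        ((hasDerivAt_exp_mul_sub 2 t₀ s).const_mul _)) fun s hs => ?_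
    linarith [h.A_le_of_m_le ht₀ hm hs.le, h.B_le_half_m (hs.le.trans ht₀),
      h.monotoneOn_m (hs.le.trans ht₀) ht₀ hs.le]
  have hle := hmono ht self_mem_Iic ht
  simp only [sub_self, mul_zero, Real.exp_zero] at hle
  have hnonneg : 0 ≤ C / 16 * Real.exp (2 * (t - t₀)) := by positivity
  calc lam * Real.exp (4 * t + V t)
      ≤ lam * Real.exp (4 * t₀ + V t₀ + C / 16 + 2 * (t - t₀)) :=
        mul_le_mul_of_nonneg_left (Real.exp_le_exp.2 (by linarith)) h.lam_pos.le
    _ = lam * Real.exp (4 * t₀ + V t₀) * Real.exp (C / 16) * Real.exp (2 * (t - t₀)) := by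
        rw [Real.exp_add, Real.exp_add]; ring
    _ ≤ (4 * C + C ^ 2 / 8) * Real.exp (C / 16) * Real.exp (2 * (t - t₀)) := by
        gcongr; exact h.density_le ht₀

lemma m_le_exp_of_density_le (h : LogRadialSystem C lam N V A B m) (ht₀ : t₀ ≤ 0)
    (hκ : ∀ s ≤ t₀, lam * Real.exp (4 * s + V s) ≤ κ * Real.exp (2 * (s - t₀))) (ht : t ≤ t₀) :
    m t ≤ κ / 2 * Real.exp (2 * (t - t₀)) := by
  have hmono : MonotoneOn (fun t => κ / 2 * Real.exp (2 * (t - t₀)) - m t) (Iic t₀) := by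
    have := h.continuousOn_m.mono (Iic_subset_Iic.2 ht₀)
    exact monotoneOn_Iic_of_hasDerivAt_nonneg (by fun_prop) (fun s hs =>
      ((hasDerivAt_exp_mul_sub 2 t₀ s).const_mul _).sub (h.hasDerivAt_m s (hs.trans_le ht₀)))
      fun s hs => by linarith [hκ s hs.le]
  have hlim : Tendsto (fun t => κ / 2 * Real.exp (2 * (t - t₀)) - m t) atBot (𝓝 0) := by
    simpa using ((tendsto_exp_mul_sub_atBot two_pos t₀).const_mul (κ / 2)).sub h.tendsto_m
  exact sub_nonneg.1 (le_of_monotoneOn_Iic_of_tendsto_atBot hmono hlim ht :)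

lemma N_le_of_m_le_exp (h : LogRadialSystem C lam N V A B m) (ht₀ : t₀ ≤ 0)
    (hκ : ∀ s ≤ t₀, m s ≤ κ / 2 * Real.exp (2 * (s - t₀))) :
    N ≤ C / 4 * -t₀ + C / 16 + κ / 16 := by
  have hmono : MonotoneOn
      (fun t => V t + (A t - B t) / 8 + κ / 16 * Real.exp (2 * (t - t₀))) (Iic t₀) :=
    monotoneOn_Iic_of_hasDerivAt_nonneg
      ((h.continuousOn_V_add.mono (Iic_subset_Iic.2 ht₀)).add (by fun_prop))
      (fun s hs => (h.hasDerivAt_V_add (hs.trans_le ht₀)).add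
        ((hasDerivAt_exp_mul_sub 2 t₀ s).const_mul _))
      fun s hs => by linarith [hκ s hs.le]
  have hlim : Tendsto (fun t => V t + (A t - B t) / 8 + κ / 16 * Real.exp (2 * (t - t₀)))
      atBot (𝓝 N) := by
    simpa using (h.tendsto_V.add ((h.tendsto_A.sub h.tendsto_B).div_const 8)).add
      ((tendsto_exp_mul_sub_atBot two_pos t₀).const_mul (κ / 16))
  have hle := le_of_monotoneOn_Iic_of_tendsto_atBot hmono hlim le_rfl
  simp only [sub_self, mul_zero, Real.exp_zero] at hle
  linarith [h.V_le ht₀, h.A_le ht₀, h.B_nonneg ht₀]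

lemma N_le_of_m_le_eight (h : LogRadialSystem C lam N V A B m) (ht₀ : t₀ ≤ 0) (hm : m t₀ ≤ 8) :
    N ≤ C / 4 * -t₀ + C / 16 + (4 * C + C ^ 2 / 8) * Real.exp (C / 16) / 16 :=
  h.N_le_of_m_le_exp ht₀ fun _ hs => h.m_le_exp_of_density_le ht₀
    (fun _ hs => h.density_le_exp_of_m_le_eight ht₀ hm hs) hs

lemma six_le_density (h : LogRadialSystem C lam N V A B m) (ht : t ≤ 0) (h8 : 8 ≤ m t)
    (h24 : m t ≤ 24) (hA : A t ≤ 13) : 6 ≤ lam * Real.exp (4 * t + V t) := by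
  have hB := h.B_nonneg ht
  have hm := h.m_nonneg ht
  rw [h.density_eq ht]
  rcases le_total (m t / 2) (A t) with hmA | hAm
  · nlinarith [mul_nonneg hB (sub_nonneg.2 hmA), mul_nonneg hm (sub_nonneg.2 hA)]
  · nlinarith [mul_nonneg (sub_nonneg.2 (h.B_le_half_m ht)) (sub_nonneg.2 hAm),
      mul_nonneg hm (sub_nonneg.2 h24)]

/-- While the mass is between `8` and `24` it grows at rate at least `6`, hence it leaves this range
in time at most `4`, up to a delay `C / 4` after which the bound on `A` becomes effective. -/
lemma m_le_eight_of_m_le (h : LogRadialSystem C lam N V A B m) (ht₀ : t₀ ≤ 0) (hm : m t₀ ≤ 24) :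
    m (t₀ - C / 4 - 4) ≤ 8 := by
  have hC := h.C_nonneg
  by_contra! h8
  have hIcc : Icc (t₀ - C / 4 - 4) (t₀ - C / 4) ⊆ Iic 0 := fun t ht => by
    have : t ≤ t₀ - C / 4 := ht.2
    exact (by linarith : t ≤ 0)
  have hdensity : ∀ t ∈ Ioo (t₀ - C / 4 - 4) (t₀ - C / 4),
      6 ≤ lam * Real.exp (4 * t + V t) := fun t ⟨ht, ht'⟩ => by
    have ht_nonpos : t ≤ 0 := by linarith
    have hlower := h.monotoneOn_m (hIcc ⟨le_rfl, by linarith⟩) ht_nonpos ht.le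
    have hupper := h.monotoneOn_m ht_nonpos ht₀ (by linarith)
    have hexp : Real.exp (2 * (t - t₀)) * (C / 2) ≤ 1 :=
      calc Real.exp (2 * (t - t₀)) * (C / 2)
          ≤ Real.exp (-(C / 2)) * Real.exp (C / 2) := by
            gcongr
            · linarith
            · linarith [Real.add_one_le_exp (C / 2)]
        _ = 1 := by rw [← Real.exp_add, neg_add_cancel, Real.exp_zero]
    exact h.six_le_density ht_nonpos (by linarith) (by linarith)
      (by linarith [h.A_le_of_m_le ht₀ hm (by linarith : t ≤ t₀)])
  have hmono : MonotoneOn (fun t => m t - 6 * t) (Icc (t₀ - C / 4 - 4) (t₀ - C / 4)) :=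
    monotoneOn_Icc_of_hasDerivAt_nonneg ((h.continuousOn_m.mono hIcc).sub (by fun_prop))
      (fun s hs => (h.hasDerivAt_m s (by linarith [hs.2])).sub ((hasDerivAt_id s).const_mul 6))
      fun s hs => by linarith [hdensity s hs]
  have hle := hmono (left_mem_Icc.2 (by linarith)) (right_mem_Icc.2 (by linarith)) (by linarith)
  have := h.monotoneOn_m (by linarith : t₀ - C / 4 ≤ 0) ht₀ (by linarith)
  simp only at hle
  linarith

lemma N_le_of_m_le (h : LogRadialSystem C lam N V A B m) (ht₀ : t₀ ≤ 0) (hm : m t₀ ≤ 24) :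
    N ≤ C / 4 * (-t₀ + C / 4 + 4) + C / 16 + (4 * C + C ^ 2 / 8) * Real.exp (C / 16) / 16 := by
  have hC := h.C_nonneg
  have := h.N_le_of_m_le_eight (by linarith) (h.m_le_eight_of_m_le ht₀ hm)
  linarith

lemma lam_le_of_le_m (h : LogRadialSystem C lam N V A B m) (hT : 0 ≤ T)
    (hm : ∀ t ∈ Icc (-T) 0, 24 ≤ m t) :
    lam ≤ (4 * C + C ^ 2 / 8) * Real.exp (C / 4) * Real.exp (-2 * T) := by
  have hmono : MonotoneOn (fun t => -(V t + (A t - B t) / 8) - 6 * t) (Icc (-T) 0) :=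
    monotoneOn_Icc_of_hasDerivAt_nonneg
      ((h.continuousOn_V_add.mono Icc_subset_Iic_self).neg.sub (by fun_prop))
      (fun s hs => (h.hasDerivAt_V_add hs.2).neg.sub ((hasDerivAt_id s).const_mul 6))
      fun s hs => by linarith [hm s (Ioo_subset_Icc_self hs)]
  have hle := hmono (left_mem_Icc.2 (by linarith)) (right_mem_Icc.2 (by linarith)) (by linarith)
  simp only at hle
  have hV : 6 * T - C / 4 ≤ V (-T) := by
    linarith [h.A_le (neg_nonpos.2 hT), h.B_nonneg (neg_nonpos.2 hT),
      h.B_le_half_m (t := 0) le_rfl, h.m_le 0 le_rfl, h.A_add_B_zero, h.V_zero, h.C_nonneg]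
  have hlam : lam * Real.exp (2 * T - C / 4) ≤ 4 * C + C ^ 2 / 8 :=
    (mul_le_mul_of_nonneg_left (Real.exp_le_exp.2 (by linarith)) h.lam_pos.le).trans
      (h.density_le (neg_nonpos.2 hT))
  have hcancel : Real.exp (2 * T - C / 4) * (Real.exp (C / 4) * Real.exp (-2 * T)) = 1 := by
    rw [← Real.exp_add, ← Real.exp_add, ← Real.exp_zero]; congr 1; ring
  calc lam = lam * Real.exp (2 * T - C / 4) * (Real.exp (C / 4) * Real.exp (-2 * T)) := by
        rw [mul_assoc, hcancel, mul_one]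
    _ ≤ (4 * C + C ^ 2 / 8) * (Real.exp (C / 4) * Real.exp (-2 * T)) := by gcongr
    _ = (4 * C + C ^ 2 / 8) * Real.exp (C / 4) * Real.exp (-2 * T) := (mul_assoc _ _ _).symm

lemma abs_A_sub_le (h : LogRadialSystem C lam N V A B m)
    (hm : ∀ s ∈ Icc (-S) 0, |m s - 32| ≤ η) (hB : |B 0 - 16| ≤ η) (ht : t ∈ Icc (-S) 0) :
    |A t - (16 - 32 * Real.exp (2 * t))| ≤ (1 + Real.exp (2 * S) * S) * η := by
  have hη : 0 ≤ η := (abs_nonneg _).trans hB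
  have hdiff : |Real.exp (-2 * 0) * (A 0 - 16) - Real.exp (-2 * t) * (A t - 16)| ≤
      Real.exp (2 * S) * η * (0 - t) := by
    refine norm_image_sub_le_of_norm_deriv_right_le_segment
      (f := fun s => Real.exp (-2 * s) * (A s - 16)) ?_ (fun s hs => (hasDerivAt_exp_mul_mul
        ((h.hasDerivAt_A s hs.2).sub_const 16) (-2)).hasDerivWithinAt) (fun s hs => ?_) 0
      (right_mem_Icc.2 ht.2)
    · have := h.continuousOn_A.mono (Icc_subset_Iic_self : Icc t 0 ⊆ Iic 0)
      fun_prop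
    · have hs' : s ∈ Icc (-S) 0 := ⟨ht.1.trans hs.1, hs.2.le⟩
      have hms : |2 * A s - m s + -2 * (A s - 16)| ≤ η := by
        rw [← abs_neg]
        convert hm s hs' using 2
        ring
      rw [Real.norm_eq_abs, abs_mul, abs_of_pos (Real.exp_pos _)]
      exact mul_le_mul (Real.exp_le_exp.2 (by linarith [hs'.1])) hms (abs_nonneg _)
        (Real.exp_pos _).le
  have hsplit : A t - (16 - 32 * Real.exp (2 * t)) = Real.exp (2 * t) *
      -(Real.exp (-2 * 0) * (A 0 - 16) - Real.exp (-2 * t) * (A t - 16) + (B 0 - 16)) := by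
    have hcancel : Real.exp (2 * t) * Real.exp (-2 * t) = 1 := by
      rw [← Real.exp_add, ← Real.exp_zero]; congr 1; ring
    rw [mul_zero, Real.exp_zero]
    linear_combination -(A t - 16) * hcancel + Real.exp (2 * t) * h.A_add_B_zero
  have htS : Real.exp (2 * S) * η * (0 - t) ≤ Real.exp (2 * S) * η * S := by
    gcongr; linarith [ht.1]
  rw [hsplit, abs_mul, abs_neg, abs_of_pos (Real.exp_pos _)]
  refine (mul_le_of_le_one_left (abs_nonneg _)
    (Real.exp_le_one_iff.2 (by linarith [ht.2]))).trans ((abs_add_le _ _).trans ?_)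
  linarith

lemma abs_B_sub_le (h : LogRadialSystem C lam N V A B m)
    (hm : ∀ s ∈ Icc (-S) 0, |m s - 32| ≤ η) (hB : |B 0 - 16| ≤ η) (ht : t ∈ Icc (-S) 0) :
    |B t - 16| ≤ Real.exp (2 * S) * (1 + S) * η := by
  have hη : 0 ≤ η := (abs_nonneg _).trans hB
  have hdiff : |Real.exp (2 * 0) * (B 0 - 16) - Real.exp (2 * t) * (B t - 16)| ≤ η * (0 - t) := by
    refine norm_image_sub_le_of_norm_deriv_right_le_segment
      (f := fun s => Real.exp (2 * s) * (B s - 16)) ?_ (fun s hs => (hasDerivAt_exp_mul_mul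
        ((h.hasDerivAt_B s hs.2).sub_const 16) 2).hasDerivWithinAt) (fun s hs => ?_) 0
      (right_mem_Icc.2 ht.2)
    · have := h.continuousOn_B.mono (Icc_subset_Iic_self : Icc t 0 ⊆ Iic 0)
      fun_prop
    · have hms : |m s - 2 * B s + 2 * (B s - 16)| ≤ η := by
        convert hm s ⟨ht.1.trans hs.1, hs.2.le⟩ using 2
        ring
      rw [Real.norm_eq_abs, abs_mul, abs_of_pos (Real.exp_pos _)]
      exact (mul_le_of_le_one_left (abs_nonneg _)
        (Real.exp_le_one_iff.2 (by linarith [hs.2]))).trans hms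
  have hsplit : B t - 16 = Real.exp (-2 * t) *
      (B 0 - 16 - (Real.exp (2 * 0) * (B 0 - 16) - Real.exp (2 * t) * (B t - 16))) := by
    have hcancel : Real.exp (-2 * t) * Real.exp (2 * t) = 1 := by
      rw [← Real.exp_add, ← Real.exp_zero]; congr 1; ring
    rw [mul_zero, Real.exp_zero]
    linear_combination -(B t - 16) * hcancel
  have htS : η * (0 - t) ≤ η * S := by gcongr; linarith [ht.1]
  rw [hsplit, abs_mul, abs_of_pos (Real.exp_pos _), mul_assoc]
  refine mul_le_mul (Real.exp_le_exp.2 (by linarith [ht.1])) ((abs_sub _ _).trans ?_)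
    (abs_nonneg _) (Real.exp_pos _).le
  linarith

/-- The limit profile is the solution of the linear system whose mass is identically `32`, that is
`64π²` divided by the area `2π²` of the unit sphere. -/
lemma abs_V_sub_le (h : LogRadialSystem C lam N V A B m) (hS : 0 ≤ S)
    (hm : ∀ s ∈ Icc (-S) 0, |m s - 32| ≤ η) (hB : |B 0 - 16| ≤ η) (ht : t ∈ Icc (-S) 0) :
    |V t - (-8 * t - 4 + 4 * Real.exp (2 * t))| ≤
      S * ((1 + Real.exp (2 * S) * S) + Real.exp (2 * S) * (1 + S)) * η := by
  have hη : 0 ≤ η := (abs_nonneg _).trans hB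
  set c := (1 + Real.exp (2 * S) * S) + Real.exp (2 * S) * (1 + S)
  have hdiff : |V 0 - (-8 * 0 - 4 + 4 * Real.exp (2 * 0)) -
      (V t - (-8 * t - 4 + 4 * Real.exp (2 * t)))| ≤ c * η * (0 - t) := by
    refine norm_image_sub_le_of_norm_deriv_right_le_segment
      (f := fun s => V s - (-8 * s - 4 + 4 * Real.exp (2 * s)))
      (f' := fun s => -(A s + B s) / 4 - (-8 + 8 * Real.exp (2 * s))) ?_
      (fun s hs => HasDerivAt.hasDerivWithinAt ?_) (fun s hs => ?_) 0 (right_mem_Icc.2 ht.2)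
    · have := h.continuousOn_V.mono (Icc_subset_Iic_self : Icc t 0 ⊆ Iic 0)
      fun_prop
    · have hexp := (hasDerivAt_exp_mul_sub 2 0 s).const_mul 4
      simp only [sub_zero] at hexp
      exact ((h.hasDerivAt_V s hs.2).sub
        ((((hasDerivAt_id s).const_mul (-8)).sub_const 4).add hexp)).congr_deriv (by ring)
    · have hs' : s ∈ Icc (-S) 0 := ⟨ht.1.trans hs.1, hs.2.le⟩
      have hA := abs_le.1 (h.abs_A_sub_le hm hB hs')
      have hB := abs_le.1 (h.abs_B_sub_le hm hB hs')
      have : 0 ≤ c * η := by positivity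
      have : c * η = (1 + Real.exp (2 * S) * S) * η + Real.exp (2 * S) * (1 + S) * η :=
        add_mul _ _ _
      rw [Real.norm_eq_abs, abs_le]
      constructor <;> linarith
  have htS : c * η * (0 - t) ≤ c * η * S := by gcongr; linarith [ht.1]
  have hzero : V 0 - (-8 * 0 - 4 + 4 * Real.exp (2 * 0)) = 0 := by
    rw [h.V_zero, mul_zero, mul_zero, Real.exp_zero]; norm_num
  rw [hzero, zero_sub, abs_neg] at hdiff
  linarith

lemma lam_eq (h : LogRadialSystem C lam N V A B m) : lam = 4 * m 0 - B 0 ^ 2 / 2 := by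
  have hden := h.density_eq le_rfl
  rw [h.V_zero, mul_zero, zero_add, Real.exp_zero, mul_one] at hden
  linear_combination hden + (B 0 / 2 - m 0 / 4) * h.A_add_B_zero

lemma m_zero_sub_le (h : LogRadialSystem C lam N V A B m) (ht : t ∈ Icc (-T) 0) :
    m 0 - lam * T * Real.exp (C / 4 * T) ≤ m t := by
  have hlam := h.lam_pos
  have hC := h.C_nonneg
  have hdensity : ∀ s ∈ Ico t 0, lam * Real.exp (4 * s + V s) ≤ lam * Real.exp (C / 4 * T) :=
    fun s hs => by
      have hsT : C / 4 * -s ≤ C / 4 * T := by gcongr; linarith [ht.1, hs.1]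
      exact mul_le_mul_of_nonneg_left
        (Real.exp_le_exp.2 (by linarith [h.V_le hs.2.le, hs.2])) hlam.le
  have hdiff : |m 0 - m t| ≤ lam * Real.exp (C / 4 * T) * (0 - t) :=
    norm_image_sub_le_of_norm_deriv_right_le_segment
      (h.continuousOn_m.mono Icc_subset_Iic_self)
      (fun s hs => (h.hasDerivAt_m s hs.2).hasDerivWithinAt)
      (fun s hs => by rw [Real.norm_of_nonneg (h.density_nonneg s)]; exact hdensity s hs) 0
      (right_mem_Icc.2 ht.2)
  have htT : lam * Real.exp (C / 4 * T) * (0 - t) ≤ lam * Real.exp (C / 4 * T) * T := by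
    gcongr; linarith [ht.1]
  linarith [le_abs_self (m 0 - m t)]

lemma half_m_zero_sub_le_B_zero (h : LogRadialSystem C lam N V A B m) (hT : 0 ≤ T) (hη : 0 ≤ η)
    (hm : ∀ s ∈ Icc (-T) 0, m 0 - η ≤ m s) : m 0 / 2 - (η + Real.exp (-2 * T) * C) ≤ B 0 := by
  have hmono : MonotoneOn (fun t => Real.exp (2 * t) * (B t - (m 0 - η) / 2)) (Icc (-T) 0) := by
    have := h.continuousOn_B.mono (Icc_subset_Iic_self : Icc (-T) 0 ⊆ Iic 0)
    exact monotoneOn_Icc_of_hasDerivAt_nonneg (by fun_prop)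
      (fun s hs => hasDerivAt_exp_mul_mul ((h.hasDerivAt_B s hs.2).sub_const _) 2)
      fun s hs => mul_nonneg (Real.exp_pos _).le (by linarith [hm s (Ioo_subset_Icc_self hs)])
  have hle := hmono (left_mem_Icc.2 (by linarith)) (right_mem_Icc.2 (by linarith)) (by linarith)
  simp only [mul_neg, neg_mul, mul_zero, Real.exp_zero, one_mul] at hle ⊢
  have hlower : Real.exp (-(2 * T)) * -C ≤ Real.exp (-(2 * T)) * (B (-T) - (m 0 - η) / 2) := by
    gcongr
    linarith [h.B_nonneg (neg_nonpos.2 hT), h.m_le 0 le_rfl, h.C_nonneg]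
  linarith

lemma sub_lam_le_m_zero (h : LogRadialSystem C lam N V A B m) (hm : 24 ≤ m 0) :
    32 - lam ≤ m 0 := by
  by_contra! hlt
  nlinarith [h.lam_eq, h.B_nonneg le_rfl, h.B_le_half_m le_rfl, h.lam_pos]

lemma m_zero_le_of_le_B_zero (h : LogRadialSystem C lam N V A B m) (hη : 0 ≤ η)
    (hB : m 0 / 2 - η ≤ B 0) : m 0 ≤ 32 + 4 * η := by
  by_contra! hlt
  have hnonneg : 0 ≤ m 0 / 2 - η := by linarith
  nlinarith [h.lam_eq, h.lam_pos, pow_le_pow_left₀ hnonneg hB 2]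

variable {ι : Type*} {l : Filter ι} {lam N : ι → ℝ} {V A B m : ι → ℝ → ℝ}

lemma eventually_le_m (h : ∀ i, LogRadialSystem C (lam i) (N i) (V i) (A i) (B i) (m i))
    (hN : Tendsto N l atTop) (T : ℝ) : ∀ᶠ i in l, ∀ t ∈ Icc (-T) 0, 24 ≤ m i t := by
  filter_upwards [hN.eventually_gt_atTop (C / 4 * (T + C / 4 + 4) + C / 16 +
    (4 * C + C ^ 2 / 8) * Real.exp (C / 16) / 16)] with i hi t ht
  by_contra! hlt
  have hC := (h i).C_nonneg
  have htT : C / 4 * (-t + C / 4 + 4) ≤ C / 4 * (T + C / 4 + 4) := by gcongr; linarith [ht.1]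
  linarith [(h i).N_le_of_m_le ht.2 hlt.le]

lemma tendsto_exp_neg_mul_atTop : Tendsto (fun T : ℝ => Real.exp (-2 * T)) atTop (𝓝 0) :=
  Real.tendsto_exp_atBot.comp (tendsto_id.const_mul_atTop_of_neg (by norm_num))

lemma tendsto_lam (h : ∀ i, LogRadialSystem C (lam i) (N i) (V i) (A i) (B i) (m i))
    (hN : Tendsto N l atTop) : Tendsto lam l (𝓝 0) := by
  have hlim : Tendsto (fun T : ℝ => (4 * C + C ^ 2 / 8) * Real.exp (C / 4) * Real.exp (-2 * T))
      atTop (𝓝 0) := by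
    simpa using tendsto_exp_neg_mul_atTop.const_mul ((4 * C + C ^ 2 / 8) * Real.exp (C / 4))
  refine Metric.tendsto_nhds.2 fun ε hε => ?_
  obtain ⟨T, hTε, hT⟩ := ((hlim.eventually_lt_const hε).and (eventually_ge_atTop 0)).exists
  filter_upwards [eventually_le_m h hN T] with i hi
  rw [Real.dist_eq, sub_zero, abs_of_pos (h i).lam_pos]
  exact ((h i).lam_le_of_le_m hT hi).trans_lt hTε

lemma eventually_abs_m_sub_le
    (h : ∀ i, LogRadialSystem C (lam i) (N i) (V i) (A i) (B i) (m i)) (hN : Tendsto N l atTop)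
    (S : ℝ) (hη : 0 < η) :
    ∀ᶠ i in l, |B i 0 - 16| ≤ η ∧ ∀ t ∈ Icc (-S) 0, |m i t - 32| ≤ η := by
  have hexp : Tendsto (fun T : ℝ => Real.exp (-2 * T) * C) atTop (𝓝 0) := by
    simpa using tendsto_exp_neg_mul_atTop.mul_const C
  obtain ⟨T, hTη, hTS, hT⟩ := ((hexp.eventually_lt_const (by positivity : 0 < η / 10)).and
    ((eventually_ge_atTop S).and (eventually_ge_atTop 0))).exists
  have hlam := tendsto_lam h hN
  have hloss : Tendsto (fun i => lam i * T * Real.exp (C / 4 * T)) l (𝓝 0) := by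
    simpa using (hlam.mul_const T).mul_const (Real.exp (C / 4 * T))
  filter_upwards [eventually_le_m h hN 0, hlam.eventually_lt_const (by positivity : 0 < η / 10),
    hloss.eventually_lt_const (by positivity : 0 < η / 10)] with i h24 hlam_lt hloss_lt
  have hC := (h i).C_nonneg
  have hlam_pos := (h i).lam_pos
  have hm : ∀ s ∈ Icc (-T) 0, m i 0 - lam i * T * Real.exp (C / 4 * T) ≤ m i s :=
    fun s hs => (h i).m_zero_sub_le hs
  have hB := (h i).half_m_zero_sub_le_B_zero hT (by positivity) hm
  have hm_lower := (h i).sub_lam_le_m_zero (h24 0 (by simp))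
  have hm_upper := (h i).m_zero_le_of_le_B_zero (by positivity) hB
  refine ⟨abs_le.2 ⟨by linarith, by linarith [(h i).B_le_half_m (t := 0) le_rfl]⟩,
    fun t ht => abs_le.2 ⟨?_, ?_⟩⟩
  · linarith [hm t ⟨by linarith [ht.1], ht.2⟩]
  · linarith [(h i).monotoneOn_m ht.2 self_mem_Iic ht.2]

theorem tendstoUniformlyOn
    (h : ∀ i, LogRadialSystem C (lam i) (N i) (V i) (A i) (B i) (m i)) (hN : Tendsto N l atTop)
    (S : ℝ) :
    TendstoUniformlyOn V (fun t => -8 * t - 4 + 4 * Real.exp (2 * t)) l (Icc (-S) 0) := by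
  rcases lt_or_ge S 0 with hS | hS
  · rw [Icc_eq_empty (by linarith)]
    exact tendstoUniformlyOn_empty
  refine Metric.tendstoUniformlyOn_iff.2 fun ε hε => ?_
  set c := S * ((1 + Real.exp (2 * S) * S) + Real.exp (2 * S) * (1 + S))
  have : 0 ≤ c := by positivity
  filter_upwards [eventually_abs_m_sub_le h hN S (by positivity : 0 < ε / (c + 1))]
    with i ⟨hB, hm⟩ t ht
  rw [dist_comm, Real.dist_eq]
  refine ((h i).abs_V_sub_le hS hm hB ht).trans_lt ?_
  rw [mul_div_assoc', div_lt_iff₀ (by positivity)]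
  linarith

end LogRadialSystem

/-! ### From radial solutions to the log-radial system -/

section RadialBilaplacian

lemma contDiffAt_iteratedDeriv {f : ℝ → ℝ} {r : ℝ} {n m : ℕ}
    (hf : ContDiffAt ℝ ↑(m + n) f r) : ContDiffAt ℝ m (iteratedDeriv n f) r := by
  induction n generalizing m with
  | zero => simpa using hf
  | succ n ih =>
    rw [iteratedDeriv_succ]
    exact (ih (m := m + 1) (by rwa [Nat.add_right_comm])).derivWithin le_rfl

lemma hasDerivAt_iteratedDeriv {f : ℝ → ℝ} {r : ℝ} {n m : ℕ} (hf : ContDiffAt ℝ m f r)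
    (hnm : n < m) : HasDerivAt (iteratedDeriv n f) (iteratedDeriv (n + 1) f r) r := by
  rw [iteratedDeriv_succ]
  exact ((contDiffAt_iteratedDeriv (m := 1) (hf.of_le (by norm_cast; omega))).differentiableAt
    one_ne_zero).hasDerivAt

variable {E : Type*} [NormedAddCommGroup E] [InnerProductSpace ℝ E] [FiniteDimensional ℝ E]

lemma laplacian_radial {W : ℝ → ℝ} {x : E} (hx : x ≠ 0) (hW : ContDiffAt ℝ 2 W ‖x‖) :
    Δ (fun y : E => W ‖y‖) x =
      iteratedDeriv 2 W ‖x‖ + (Module.finrank ℝ E - 1) / ‖x‖ * iteratedDeriv 1 W ‖x‖ :=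
  (hasLaplacianAt_radial hx hW
    ((hW.eventually (by norm_num)).mono fun r hr => by
      simpa using hasDerivAt_iteratedDeriv hr (n := 0) (by norm_num))
    (hasDerivAt_iteratedDeriv (n := 1) hW (by norm_num))).2

lemma bilaplacian_radial (hE : Module.finrank ℝ E = 4) {W : ℝ → ℝ} {x : E} (hx : x ≠ 0)
    (hW : ContDiffAt ℝ 4 W ‖x‖) :
    Δ (Δ (fun y : E => W ‖y‖)) x = iteratedDeriv 4 W ‖x‖ + 6 / ‖x‖ * iteratedDeriv 3 W ‖x‖ +
      3 / ‖x‖ ^ 2 * iteratedDeriv 2 W ‖x‖ - 3 / ‖x‖ ^ 3 * iteratedDeriv 1 W ‖x‖ := by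
  set g : ℝ → ℝ := fun r => iteratedDeriv 2 W r + 3 / r * iteratedDeriv 1 W r
  set g' : ℝ → ℝ := fun r => iteratedDeriv 3 W r +
    (-3 / r ^ 2 * iteratedDeriv 1 W r + 3 / r * iteratedDeriv 2 W r)
  have hnx : ‖x‖ ≠ 0 := norm_ne_zero_iff.2 hx
  have hΔ : Δ (fun y : E => W ‖y‖) =ᶠ[𝓝 x] fun y => g ‖y‖ := by
    filter_upwards [continuous_norm.continuousAt.eventually (hW.eventually (by norm_num)),
      isOpen_ne.mem_nhds hx] with y hy hy0
    rw [laplacian_radial hy0 (hy.of_le (by norm_num)), hE]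
    norm_num [g]
  have hinv : ∀ r : ℝ, r ≠ 0 → HasDerivAt (fun r => 3 / r) (-3 / r ^ 2) r := fun r hr =>
    (((hasDerivAt_const r 3).fun_div (hasDerivAt_id r) hr)).congr_deriv (by simp)
  have hg : ∀ᶠ r in 𝓝 ‖x‖, HasDerivAt g (g' r) r := by
    filter_upwards [hW.eventually (by norm_num), isOpen_ne.mem_nhds hnx] with r hr hr0
    exact (hasDerivAt_iteratedDeriv hr (by norm_num)).add
      ((hinv r hr0).mul (hasDerivAt_iteratedDeriv hr (by norm_num)))
  have hinv_sq : HasDerivAt (fun r => -3 / r ^ 2) (6 / ‖x‖ ^ 3) ‖x‖ :=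
    ((hasDerivAt_const ‖x‖ (-3 : ℝ)).fun_div (hasDerivAt_pow 2 ‖x‖) (pow_ne_zero 2 hnx)).congr_deriv
      (by field_simp; norm_num; ring)
  have hg' := (hasDerivAt_iteratedDeriv (n := 3) hW (by norm_num)).add
    ((hinv_sq.mul (hasDerivAt_iteratedDeriv (n := 1) hW (by norm_num))).add
      ((hinv _ hnx).mul (hasDerivAt_iteratedDeriv (n := 2) hW (by norm_num))))
  have hgC : ContDiffAt ℝ 2 g ‖x‖ := (contDiffAt_iteratedDeriv (m := 2) hW).add
    ((contDiffAt_const.div contDiffAt_id hnx).mul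
      (contDiffAt_iteratedDeriv (m := 2) (n := 1) (hW.of_le (by norm_num))))
  rw [(laplacian_congr_nhds hΔ).eq_of_nhds, (hasLaplacianAt_radial hx hgC hg hg').2, hE]
  simp only [g']
  field_simp
  push_cast
  ring

end RadialBilaplacian

lemma setIntegral_ball_fun_norm {E F : Type*} [NormedAddCommGroup E] [NormedSpace ℝ E]
    [FiniteDimensional ℝ E] [Nontrivial E] [MeasurableSpace E] [BorelSpace E]
    [NormedAddCommGroup F] [NormedSpace ℝ F] (μ : Measure E) [μ.IsAddHaarMeasure]
    {R : ℝ} (hR : 0 ≤ R) (f : ℝ → F) :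
    ∫ x in ball (0 : E) R, f ‖x‖ ∂μ = Module.finrank ℝ E • μ.real (ball 0 1) •
      ∫ r in (0 : ℝ)..R, r ^ (Module.finrank ℝ E - 1) • f r := by
  have hball : ∫ x in ball (0 : E) R, f ‖x‖ ∂μ = ∫ x, (Iio R).indicator f ‖x‖ ∂μ := by
    rw [← integral_indicator measurableSet_ball]
    exact integral_congr_ae (.of_forall fun x => by
      simp only [indicator, mem_ball_zero_iff, mem_Iio])
  rw [hball, integral_fun_norm_addHaar, intervalIntegral.integral_of_le hR,
    integral_Ioc_eq_integral_Ioo, ← Ioi_inter_Iio, ← setIntegral_indicator measurableSet_Iio]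
  simp only [indicator_apply, smul_ite, smul_zero]

section RadialProfile

variable {C lam t r : ℝ} {U : ℝ → ℝ}

lemma hasDerivAt_comp_exp {f : ℝ → ℝ} {c : ℝ}
    (hf : HasDerivAt f (c / Real.exp t) (Real.exp t)) : HasDerivAt (fun t => f (Real.exp t)) c t :=
  (hf.comp t (Real.hasDerivAt_exp t)).congr_deriv (div_mul_cancel₀ _ (Real.exp_ne_zero t))

lemma mapsTo_exp_Iic : MapsTo Real.exp (Iic 0) (Icc (-1) 1) := fun t ht =>
  ⟨by linarith [Real.exp_pos t], Real.exp_le_one_iff.2 ht⟩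

/-- The rescaled Laplacian `-r² Δu = -(3 r U' + r² U'')` of the radial function `u = U ‖·‖` on
`ℝ⁴`, in terms of the derivatives of the even profile `U` within `[-1, 1]`. -/
def scaledLaplacian (U : ℝ → ℝ) (r : ℝ) : ℝ :=
  -(3 * (r * iteratedDerivWithin 1 U (Icc (-1) 1) r) +
    r ^ 2 * iteratedDerivWithin 2 U (Icc (-1) 1) r)

/-- The rescaled gap `r² U'' - r U'` between the radial and tangential second derivatives of
`u = U ‖·‖`. -/
def scaledHessianGap (U : ℝ → ℝ) (r : ℝ) : ℝ :=
  r ^ 2 * iteratedDerivWithin 2 U (Icc (-1) 1) r - r * iteratedDerivWithin 1 U (Icc (-1) 1) r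

/-- The flux `r³ (Δu)' = r³ U''' + 3 r² U'' - 3 r U'` of `∇Δu` through the sphere of radius `r` in
`ℝ⁴`, for `u = U ‖·‖`, divided by the area of the unit sphere. -/
def laplacianFlux (U : ℝ → ℝ) (r : ℝ) : ℝ :=
  r ^ 3 * iteratedDerivWithin 3 U (Icc (-1) 1) r +
    3 * (r ^ 2 * iteratedDerivWithin 2 U (Icc (-1) 1) r) -
    3 * (r * iteratedDerivWithin 1 U (Icc (-1) 1) r)

/-- `U` is the profile of a radial solution of `Δ²u = lam * exp u` on the unit ball of `ℝ⁴` with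
zero Dirichlet data, extended to `[-1, 1]` by restricting `u` to a diameter. -/
structure IsRadialProfile (lam : ℝ) (U : ℝ → ℝ) : Prop where
  contDiffOn : ContDiffOn ℝ 4 U (Icc (-1) 1)
  bilaplacian_eq : ∀ r ∈ Ioo 0 1, iteratedDeriv 4 U r + 6 / r * iteratedDeriv 3 U r +
    3 / r ^ 2 * iteratedDeriv 2 U r - 3 / r ^ 3 * iteratedDeriv 1 U r = lam * Real.exp (U r)
  apply_one : U 1 = 0
  derivWithin_one : derivWithin U (Icc (-1) 1) 1 = 0

namespace IsRadialProfile

lemma continuousOn_iteratedDerivWithin (h : IsRadialProfile lam U) {k : ℕ} (hk : k ≤ 4) :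
    ContinuousOn (iteratedDerivWithin k U (Icc (-1) 1)) (Icc (-1) 1) :=
  h.contDiffOn.continuousOn_iteratedDerivWithin (by exact_mod_cast hk)
    (uniqueDiffOn_Icc (by norm_num))

lemma hasDerivAt_iteratedDerivWithin (h : IsRadialProfile lam U) {k : ℕ} (hk : k < 4)
    (hr : r ∈ Ioo 0 1) : HasDerivAt (iteratedDerivWithin k U (Icc (-1) 1))
      (iteratedDerivWithin (k + 1) U (Icc (-1) 1) r) r := by
  have hr' : Icc (-1) 1 ∈ 𝓝 r := Icc_mem_nhds (by linarith [hr.1]) hr.2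
  rw [iteratedDerivWithin_succ]
  exact (h.contDiffOn.differentiableOn_iteratedDerivWithin (by exact_mod_cast hk)
    (uniqueDiffOn_Icc (by norm_num)) r (mem_of_mem_nhds hr')).hasDerivWithinAt.hasDerivAt hr'

lemma hasDerivAt_mul_deriv (h : IsRadialProfile lam U) (hr : r ∈ Ioo 0 1) :
    HasDerivAt (fun r => r * iteratedDerivWithin 1 U (Icc (-1) 1) r)
      (iteratedDerivWithin 1 U (Icc (-1) 1) r + r * iteratedDerivWithin 2 U (Icc (-1) 1) r) r :=
  ((hasDerivAt_id r).mul (h.hasDerivAt_iteratedDerivWithin (k := 1) (by norm_num) hr)).congr_deriv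
    (by simp)

lemma hasDerivAt_sq_mul_deriv_two (h : IsRadialProfile lam U) (hr : r ∈ Ioo 0 1) :
    HasDerivAt (fun r => r ^ 2 * iteratedDerivWithin 2 U (Icc (-1) 1) r)
      (2 * r * iteratedDerivWithin 2 U (Icc (-1) 1) r +
        r ^ 2 * iteratedDerivWithin 3 U (Icc (-1) 1) r) r :=
  ((hasDerivAt_pow 2 r).mul (h.hasDerivAt_iteratedDerivWithin (by norm_num) hr)).congr_deriv
    (by simp)

lemma hasDerivAt_scaledLaplacian (h : IsRadialProfile lam U) (hr : r ∈ Ioo 0 1) :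
    HasDerivAt (scaledLaplacian U) ((2 * scaledLaplacian U r - laplacianFlux U r) / r) r := by
  have hr₀ : r ≠ 0 := hr.1.ne'
  refine (((h.hasDerivAt_mul_deriv hr).const_mul 3).add
    (h.hasDerivAt_sq_mul_deriv_two hr)).neg.congr_deriv ?_
  simp only [scaledLaplacian, laplacianFlux]
  field_simp
  ring

lemma hasDerivAt_scaledHessianGap (h : IsRadialProfile lam U) (hr : r ∈ Ioo 0 1) :
    HasDerivAt (scaledHessianGap U) ((laplacianFlux U r - 2 * scaledHessianGap U r) / r) r := by
  have hr₀ : r ≠ 0 := hr.1.ne'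
  refine ((h.hasDerivAt_sq_mul_deriv_two hr).sub (h.hasDerivAt_mul_deriv hr)).congr_deriv ?_
  simp only [scaledHessianGap, laplacianFlux]
  field_simp
  ring

lemma hasDerivAt_profile (h : IsRadialProfile lam U) (hr : r ∈ Ioo 0 1) :
    HasDerivAt U (-(scaledLaplacian U r + scaledHessianGap U r) / 4 / r) r := by
  have hr₀ : r ≠ 0 := hr.1.ne'
  have hU := h.hasDerivAt_iteratedDerivWithin (k := 0) (by norm_num) hr
  rw [iteratedDerivWithin_zero] at hU
  refine hU.congr_deriv ?_
  simp only [scaledHessianGap, scaledLaplacian]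
  field_simp
  ring

lemma hasDerivAt_laplacianFlux (h : IsRadialProfile lam U) (hr : r ∈ Ioo 0 1) :
    HasDerivAt (laplacianFlux U) (lam * (r ^ 3 * Real.exp (U r))) r := by
  have hr₀ : r ≠ 0 := hr.1.ne'
  have hr' : Icc (-1) 1 ∈ 𝓝 r := Icc_mem_nhds (by linarith [hr.1]) hr.2
  have hode := h.bilaplacian_eq r hr
  have hD : ∀ k ≤ 4, iteratedDeriv k U r = iteratedDerivWithin k U (Icc (-1) 1) r := fun k hk =>
    (iteratedDerivWithin_eq_iteratedDeriv (uniqueDiffOn_Icc (by norm_num))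
      ((h.contDiffOn.contDiffAt hr').of_le (by exact_mod_cast hk)) (mem_of_mem_nhds hr')).symm
  rw [hD 4 le_rfl, hD 3 (by norm_num), hD 2 (by norm_num), hD 1 (by norm_num)] at hode
  refine ((((hasDerivAt_pow 3 r).mul (h.hasDerivAt_iteratedDerivWithin (k := 3) (by norm_num)
    hr)).add ((h.hasDerivAt_sq_mul_deriv_two hr).const_mul 3)).sub
      ((h.hasDerivAt_mul_deriv hr).const_mul 3)).congr_deriv ?_
  rw [mul_left_comm, ← hode]
  push_cast
  field_simp
  ring

lemma continuousOn_scaledLaplacian (h : IsRadialProfile lam U) :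
    ContinuousOn (scaledLaplacian U) (Icc (-1) 1) := by
  have h₁ := h.continuousOn_iteratedDerivWithin (k := 1) (by norm_num)
  have h₂ := h.continuousOn_iteratedDerivWithin (k := 2) (by norm_num)
  unfold scaledLaplacian
  fun_prop

lemma continuousOn_scaledHessianGap (h : IsRadialProfile lam U) :
    ContinuousOn (scaledHessianGap U) (Icc (-1) 1) := by
  have h₁ := h.continuousOn_iteratedDerivWithin (k := 1) (by norm_num)
  have h₂ := h.continuousOn_iteratedDerivWithin (k := 2) (by norm_num)
  unfold scaledHessianGap
  fun_prop

lemma continuousOn_laplacianFlux (h : IsRadialProfile lam U) :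
    ContinuousOn (laplacianFlux U) (Icc (-1) 1) := by
  have h₁ := h.continuousOn_iteratedDerivWithin (k := 1) (by norm_num)
  have h₂ := h.continuousOn_iteratedDerivWithin (k := 2) (by norm_num)
  have h₃ := h.continuousOn_iteratedDerivWithin (k := 3) (by norm_num)
  unfold laplacianFlux
  fun_prop

lemma monotoneOn_laplacianFlux (h : IsRadialProfile lam U) (hlam : 0 ≤ lam) :
    MonotoneOn (laplacianFlux U) (Icc 0 1) :=
  monotoneOn_Icc_of_hasDerivAt_nonneg
    (h.continuousOn_laplacianFlux.mono (Icc_subset_Icc_left (by norm_num)))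
    (fun _ hr => h.hasDerivAt_laplacianFlux hr)
    fun r hr => mul_nonneg hlam (mul_nonneg (pow_nonneg hr.1.le 3) (Real.exp_pos _).le)

lemma laplacianFlux_one (h : IsRadialProfile lam U) :
    laplacianFlux U 1 = lam * ∫ r in (0 : ℝ)..1, r ^ 3 * Real.exp (U r) := by
  have h01 : Icc (0 : ℝ) 1 ⊆ Icc (-1) 1 := Icc_subset_Icc_left (by norm_num)
  have hint : ContinuousOn (fun r => lam * (r ^ 3 * Real.exp (U r))) (Icc 0 1) := by
    have := h.contDiffOn.continuousOn.mono h01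
    fun_prop
  rw [← intervalIntegral.integral_const_mul,
    intervalIntegral.integral_eq_sub_of_hasDerivAt_of_le zero_le_one
      (h.continuousOn_laplacianFlux.mono h01) (fun r hr => h.hasDerivAt_laplacianFlux hr)
      (hint.intervalIntegrable_of_Icc zero_le_one)]
  simp [laplacianFlux]

theorem logRadialSystem (h : IsRadialProfile lam U) (hlam : 0 < lam)
    (hC : lam * ∫ r in (0 : ℝ)..1, r ^ 3 * Real.exp (U r) ≤ C) :
    LogRadialSystem C lam (U 0) (fun t => U (Real.exp t)) (fun t => scaledLaplacian U (Real.exp t))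
      (fun t => scaledHessianGap U (Real.exp t)) (fun t => laplacianFlux U (Real.exp t)) := by
  have hexp : ∀ t < 0, Real.exp t ∈ Ioo 0 1 := fun t ht =>
    ⟨Real.exp_pos t, Real.exp_lt_one_iff.2 ht⟩
  have hcont : ∀ {f : ℝ → ℝ}, ContinuousOn f (Icc (-1) 1) →
      ContinuousOn (fun t => f (Real.exp t)) (Iic 0) := fun hf =>
    hf.comp Real.continuous_exp.continuousOn mapsTo_exp_Iic
  have hlim : ∀ {f : ℝ → ℝ}, ContinuousOn f (Icc (-1) 1) →
      Tendsto (fun t => f (Real.exp t)) atBot (𝓝 (f 0)) := fun hf =>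
    (hf.continuousAt (Icc_mem_nhds (by norm_num) (by norm_num))).tendsto.comp
      Real.tendsto_exp_atBot
  exact
  { lam_pos := hlam
    continuousOn_V := hcont h.contDiffOn.continuousOn
    continuousOn_A := hcont h.continuousOn_scaledLaplacian
    continuousOn_B := hcont h.continuousOn_scaledHessianGap
    continuousOn_m := hcont h.continuousOn_laplacianFlux
    hasDerivAt_V := fun t ht => hasDerivAt_comp_exp (h.hasDerivAt_profile (hexp t ht))
    hasDerivAt_A := fun t ht => hasDerivAt_comp_exp (h.hasDerivAt_scaledLaplacian (hexp t ht))
    hasDerivAt_B := fun t ht => hasDerivAt_comp_exp (h.hasDerivAt_scaledHessianGap (hexp t ht))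
    hasDerivAt_m := fun t ht => hasDerivAt_comp_exp <|
      (h.hasDerivAt_laplacianFlux (hexp t ht)).congr_deriv <| by
        rw [Real.exp_add, ← Nat.cast_ofNat (n := 4), Real.exp_nat_mul]
        field_simp
    V_zero := by simpa using h.apply_one
    A_add_B_zero := by
      simp [scaledLaplacian, scaledHessianGap, h.derivWithin_one]
    tendsto_V := hlim h.contDiffOn.continuousOn
    tendsto_A := by simpa [scaledLaplacian] using hlim h.continuousOn_scaledLaplacian
    tendsto_B := by simpa [scaledHessianGap] using hlim h.continuousOn_scaledHessianGap
    tendsto_m := by simpa [laplacianFlux] using hlim h.continuousOn_laplacianFlux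
    m_le := fun t ht => (h.monotoneOn_laplacianFlux hlam.le
      ⟨(Real.exp_pos t).le, Real.exp_le_one_iff.2 ht⟩ (right_mem_Icc.2 zero_le_one)
      (Real.exp_le_one_iff.2 ht)).trans (h.laplacianFlux_one.trans_le hC) }

end IsRadialProfile

end RadialProfile

section MeanField

variable {ρ : ℝ} {u : EuclideanSpace ℝ (Fin 4) → ℝ} {e x z : EuclideanSpace ℝ (Fin 4)}

namespace IsMFSolution

lemma continuousOn_exp (h : IsMFSolution ρ u) :
    ContinuousOn (fun y => Real.exp (u y)) (closedBall 0 1) :=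
  Real.continuous_exp.comp_continuousOn h.1.continuousOn

lemma integral_exp_pos (h : IsMFSolution ρ u) : 0 < ∫ y in ball 0 1, Real.exp (u y) := by
  have : NeZero (volume.restrict (ball (0 : EuclideanSpace ℝ (Fin 4)) 1)) :=
    ⟨Measure.restrict_eq_zero.not.2 (measure_ball_pos _ _ one_pos).ne'⟩
  exact MeasureTheory.integral_exp_pos ((h.continuousOn_exp.integrableOn_compact
    (isCompact_closedBall 0 1)).mono_set ball_subset_closedBall)

lemma bilaplacian_eqOn (h : IsMFSolution ρ u) :
    EqOn (Δ (Δ u)) (fun x => ρ / (∫ y in ball 0 1, Real.exp (u y)) * Real.exp (u x))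
      (ball 0 1) := fun x hx => by
  have hux := h.1.contDiffAt (closedBall_mem_nhds_of_mem hx)
  rw [← lap_lap_eq_laplacian_laplacian hux, h.2.1 x hx, mul_div_right_comm]

lemma isBoggioSolution (h : IsMFSolution ρ u) (hρ : 0 < ρ) :
    IsBoggioSolution ((96 * bubbleMass (EuclideanSpace ℝ (Fin 4)))⁻¹ *
      (ρ / ∫ y in ball 0 1, Real.exp (u y))) u where
  pos := mul_pos (inv_pos.2 (mul_pos (by norm_num) bubbleMass_pos)) (div_pos hρ h.integral_exp_pos)
  continuousOn := h.1.continuousOn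
  eq_integral x hx := by
    rw [eq_integral_boggioKernel_mul_bilaplacian finrank_euclideanSpace_fin h.1 h.2.2
      (continuousOn_const.mul h.continuousOn_exp)
      h.bilaplacian_eqOn hx, mul_assoc, ← integral_const_mul (ρ / _)]
    simp only [Pi.mul_apply, mul_left_comm]

lemma eq_apply_norm_smul (h : IsMFSolution ρ u) (hρ : 0 < ρ) (he : ‖e‖ = 1)
    (hx : x ∈ closedBall 0 1) : u x = u (‖x‖ • e) := by
  have hxe : ‖x‖ = ‖‖x‖ • e‖ := by rw [norm_smul, he, norm_norm, mul_one]
  rcases (mem_closedBall_zero_iff.1 hx).lt_or_eq with hx' | hx'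
  · exact (h.isBoggioSolution hρ).eq_of_norm_eq (by simp) (mem_ball_zero_iff.2 hx') hxe
  · rw [(h.2.2 x hx').1, (h.2.2 _ (hxe.symm.trans hx')).1]

lemma derivWithin_radius_one (h : IsMFSolution ρ u) (he : ‖e‖ = 1)
    (hmaps : MapsTo (fun r : ℝ => r • e) (Icc (-1) 1) (closedBall 0 1)) :
    derivWithin (fun r : ℝ => u (r • e)) (Icc (-1) 1) 1 = 0 := by
  have hu := (h.1.differentiableOn (by norm_num) _
    (hmaps (right_mem_Icc.2 (by norm_num)))).hasFDerivWithinAt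
  rw [(h.2.2 _ (by simpa using he)).2] at hu
  have hline := ((hasDerivAt_id (1 : ℝ)).smul_const e).hasDerivWithinAt (s := Icc (-1) 1)
  exact (hu.comp_hasDerivWithinAt (1 : ℝ) hline hmaps).derivWithin
    (uniqueDiffOn_Icc (by norm_num) 1 (right_mem_Icc.2 (by norm_num)))

lemma isRadialProfile (h : IsMFSolution ρ u) (hρ : 0 < ρ) (he : ‖e‖ = 1) :
    IsRadialProfile (ρ / ∫ y in ball 0 1, Real.exp (u y)) (fun r => u (r • e)) := by
  have hnorm : ∀ r : ℝ, ‖r • e‖ = |r| := fun r => by rw [norm_smul, he, mul_one, Real.norm_eq_abs]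
  have hmaps : MapsTo (fun r : ℝ => r • e) (Icc (-1) 1) (closedBall 0 1) := fun r hr =>
    mem_closedBall_zero_iff.2 ((hnorm r).trans_le (abs_le.2 hr))
  have hsmooth : ContDiffOn ℝ 4 (fun r : ℝ => u (r • e)) (Icc (-1) 1) :=
    h.1.comp (contDiff_id.smul contDiff_const).contDiffOn hmaps
  refine ⟨hsmooth, fun r hr => ?_, (h.2.2 _ (by rwa [one_smul])).1,
    h.derivWithin_radius_one he hmaps⟩
  have hr' : ‖r • e‖ = r := (hnorm r).trans (abs_of_pos hr.1)
  have hball : r • e ∈ ball 0 1 := mem_ball_zero_iff.2 (hr'.trans_lt hr.2)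
  have hradial : u =ᶠ[𝓝 (r • e)] fun y => u (‖y‖ • e) := by
    filter_upwards [isOpen_ball.mem_nhds hball] with y hy
    exact h.eq_apply_norm_smul hρ he (ball_subset_closedBall hy)
  have hbilap := h.bilaplacian_eqOn hball
  rw [(laplacian_congr_nhds (laplacian_congr_nhds hradial)).eq_of_nhds,
    bilaplacian_radial (W := fun r => u (r • e)) finrank_euclideanSpace_fin
      (norm_pos_iff.1 (hr'.symm ▸ hr.1))
      (hr'.symm ▸ hsmooth.contDiffAt (Icc_mem_nhds (by linarith [hr.1]) hr.2)), hr'] at hbilap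
  exact hbilap

lemma mul_integral_profile (h : IsMFSolution ρ u) (hρ : 0 < ρ) (he : ‖e‖ = 1) :
    ρ / (∫ y in ball 0 1, Real.exp (u y)) * ∫ r in (0 : ℝ)..1, r ^ 3 * Real.exp (u (r • e)) =
      ρ / (4 * volume.real (ball (0 : EuclideanSpace ℝ (Fin 4)) 1)) := by
  have hpolar := setIntegral_ball_fun_norm (volume : Measure (EuclideanSpace ℝ (Fin 4)))
    zero_le_one fun r => Real.exp (u (r • e))
  rw [← setIntegral_congr_fun measurableSet_ball fun y hy => congrArg Real.exp
    (h.eq_apply_norm_smul hρ he (ball_subset_closedBall hy))] at hpolar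
  have hpos := h.integral_exp_pos
  simp only [finrank_euclideanSpace_fin, smul_eq_mul, nsmul_eq_mul] at hpolar
  have hvol : 0 < volume.real (ball (0 : EuclideanSpace ℝ (Fin 4)) 1) :=
    ENNReal.toReal_pos (measure_ball_pos _ _ one_pos).ne' measure_ball_lt_top.ne
  rw [div_mul_eq_mul_div, div_eq_div_iff hpos.ne' (by positivity), hpolar]
  push_cast
  ring

theorem logRadialSystem (h : IsMFSolution ρ u) (hρ : 0 < ρ) {Λ : ℝ} (hΛ : ρ ≤ Λ) (he : ‖e‖ = 1) :
    LogRadialSystem (Λ / (4 * volume.real (ball (0 : EuclideanSpace ℝ (Fin 4)) 1)))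
      (ρ / ∫ y in ball 0 1, Real.exp (u y)) (u 0) (fun t => u (Real.exp t • e))
      (fun t => scaledLaplacian (fun r => u (r • e)) (Real.exp t))
      (fun t => scaledHessianGap (fun r => u (r • e)) (Real.exp t))
      (fun t => laplacianFlux (fun r => u (r • e)) (Real.exp t)) := by
  have hsys := (h.isRadialProfile hρ he).logRadialSystem
    (C := Λ / (4 * volume.real (ball (0 : EuclideanSpace ℝ (Fin 4)) 1)))
    (div_pos hρ h.integral_exp_pos) ((h.mul_integral_profile hρ he).trans_le (by gcongr))
  rwa [zero_smul] at hsys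

lemma le_apply_zero (h : IsMFSolution ρ u) (hρ : 0 < ρ) (hx : x ∈ closedBall 0 1) :
    u x ≤ u 0 := by
  rcases eq_or_ne x 0 with rfl | hx₀
  · exact le_rfl
  have hpos : 0 < ‖x‖ := norm_pos_iff.2 hx₀
  have hle := (h.logRadialSystem hρ le_rfl (norm_smul_inv_norm (𝕜 := ℝ) hx₀)).V_le_N
    (Real.log_nonpos hpos.le (mem_closedBall_zero_iff.1 hx))
  rwa [Real.exp_log hpos, ← h.eq_apply_norm_smul hρ (norm_smul_inv_norm (𝕜 := ℝ) hx₀) hx] at hle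

end IsMFSolution

lemma brkt_zero_right (z : EuclideanSpace ℝ (Fin 4)) : brkt z 0 = 1 := by simp [brkt]

lemma integral_boggioG {b : ℝ} (hb : 0 < b) :
    ∫ v in (1 : ℝ)..b, (v ^ 2 - 1) / v ^ 3 = Real.log b + (1 / 2) * (b ^ 2)⁻¹ - 1 / 2 := by
  have hpos : ∀ v ∈ uIcc 1 b, v ≠ 0 := fun v hv => ((lt_min one_pos hb).trans_le hv.1).ne'
  have hcont : ContinuousOn (fun v : ℝ => (v ^ 2 - 1) / v ^ 3) (uIcc 1 b) :=
    .div (by fun_prop) (by fun_prop) fun v hv => pow_ne_zero 3 (hpos v hv)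
  rw [intervalIntegral.integral_eq_sub_of_hasDerivAt
    (f := fun v => Real.log v + (1 / 2) * (v ^ 2)⁻¹) (fun v hv => ?_) hcont.intervalIntegrable]
  · simp
  · have hv := hpos v hv
    refine ((Real.hasDerivAt_log hv).add
      (((hasDerivAt_pow 2 v).inv (pow_ne_zero 2 hv)).const_mul (1 / 2))).congr_deriv ?_
    push_cast
    field_simp
    ring

lemma boggioG_zero_right (hz : z ≠ 0) :
    64 * Real.pi ^ 2 * boggioG z 0 = -8 * Real.log ‖z‖ - 4 + 4 * ‖z‖ ^ 2 := by
  rw [boggioG, brkt_zero_right, sub_zero, integral_boggioG (by positivity), one_div ‖z‖,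
    Real.log_inv]
  have := Real.pi_ne_zero
  field_simp
  ring

lemma fderiv_regR_zero_right : fderiv ℝ (fun z => regR z 0) 0 = 0 := by
  have hreg : (fun z => regR z 0) = fun z : EuclideanSpace ℝ (Fin 4) =>
      1 / (8 * Real.pi ^ 2) * (‖z‖ ^ 2 * (1 / 2) - 1 / 2) := by
    funext z
    simp [regR, brkt_zero_right, div_eq_mul_inv]
  have hnorm := (hasStrictFDerivAt_norm_sq (0 : EuclideanSpace ℝ (Fin 4))).hasFDerivAt
  rw [hreg, (((hnorm.mul_const (1 / 2)).sub_const (1 / 2)).const_mul _).fderiv]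
  simp

end MeanField

section BlowUp

variable {ι : Type*} {l : Filter ι} {ρ : ι → ℝ} {u : ι → EuclideanSpace ℝ (Fin 4) → ℝ}

lemma tendsto_apply_zero_of_tendsto_sSup (hρ : ∀ i, 0 < ρ i) (hsol : ∀ i, IsMFSolution (ρ i) (u i))
    (hblow : Tendsto (fun i => sSup (u i '' closedBall 0 1)) l atTop) :
    Tendsto (fun i => u i 0) l atTop :=
  tendsto_atTop_mono (fun i => csSup_le ((nonempty_closedBall.2 zero_le_one).image _)
    (forall_mem_image.2 fun _ hx => (hsol i).le_apply_zero (hρ i) hx)) hblow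

lemma exists_pos_forall_le_norm {E : Type*} [NormedAddCommGroup E] {K : Set E} (hK : IsCompact K)
    (hK₀ : 0 ∉ K) : ∃ d > 0, ∀ z ∈ K, d ≤ ‖z‖ := by
  obtain ⟨d, hd, hball⟩ := Metric.isOpen_iff.1 hK.isClosed.isOpen_compl 0 hK₀
  exact ⟨d, hd, fun z hz => not_lt.1 fun h => hball (mem_ball_zero_iff.2 h) hz⟩

theorem mean_field_blowup_description_general {Λ : ℝ} (hρ : ∀ i, 0 < ρ i ∧ ρ i ≤ Λ)
    (hsol : ∀ i, IsMFSolution (ρ i) (u i))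
    (hblow : Tendsto (fun i => sSup (u i '' closedBall 0 1)) l atTop)
    {K : Set (EuclideanSpace ℝ (Fin 4))} (hK : IsCompact K) (hKs : K ⊆ closedBall 0 1 \ {0}) :
    TendstoUniformlyOn u (fun z => 64 * Real.pi ^ 2 * boggioG z 0) l K := by
  set e : EuclideanSpace ℝ (Fin 4) := EuclideanSpace.single 0 1
  have he : ‖e‖ = 1 := by simp [e]
  obtain ⟨d, hd, hdK⟩ := exists_pos_forall_le_norm hK fun h₀ => (hKs h₀).2 rfl
  have hpos : ∀ z ∈ K, 0 < ‖z‖ := fun z hz => hd.trans_le (hdK z hz)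
  have hlog : K ⊆ (fun z => Real.log ‖z‖) ⁻¹' Icc (- -Real.log d) 0 := fun z hz =>
    ⟨(neg_neg _).trans_le (Real.log_le_log hd (hdK z hz)),
      Real.log_nonpos (norm_nonneg z) (mem_closedBall_zero_iff.1 (hKs hz).1)⟩
  have hconv := ((LogRadialSystem.tendstoUniformlyOn
    (fun i => (hsol i).logRadialSystem (hρ i).1 (hρ i).2 he)
    (tendsto_apply_zero_of_tendsto_sSup (fun i => (hρ i).1) hsol hblow) (-Real.log d)).comp
      (fun z => Real.log ‖z‖)).mono hlog
  refine (hconv.congr (.of_forall fun i z hz => ?_)).congr_right fun z hz => ?_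
  · rw [(hsol i).eq_apply_norm_smul (hρ i).1 he (hKs hz).1]
    simp only [Function.comp_apply, Real.exp_log (hpos z hz)]
  · rw [boggioG_zero_right (norm_pos_iff.1 (hpos z hz)), Function.comp_apply,
      mul_comm 2 (Real.log _), Real.exp_mul, Real.exp_log (hpos z hz)]
    norm_num

end BlowUp

/-- Full blow-up description: along a subsequence, blowing-up solutions concentrate at
finitely many distinct interior points `x₁,…,x_m`, converge to `64π² ∑ⱼ G(·,xⱼ)` locally
uniformly away from these points, and the points satisfy the balancing condition
`∇ₓ(R(·,xⱼ) + ∑_{l≠j} G(·,x_l))(xⱼ) = 0`. -/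
theorem mean_field_blowup_description (Λ : ℝ) (hΛ : 0 < Λ)
    (ρ : ℕ → ℝ) (u : ℕ → EuclideanSpace ℝ (Fin 4) → ℝ)
    (hρ : ∀ k, 0 < ρ k ∧ ρ k ≤ Λ)
    (hsol : ∀ k, IsMFSolution (ρ k) (u k))
    (hblow : Tendsto
      (fun k => sSup ((u k) '' closedBall (0 : EuclideanSpace ℝ (Fin 4)) 1))
      atTop atTop) :
    ∃ φ : ℕ → ℕ, StrictMono φ ∧ ∃ m : ℕ, 0 < m ∧
      ∃ x : Fin m → EuclideanSpace ℝ (Fin 4),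
        (∀ j, x j ∈ ball (0 : EuclideanSpace ℝ (Fin 4)) 1) ∧
        Function.Injective x ∧
        (∀ K : Set (EuclideanSpace ℝ (Fin 4)), IsCompact K →
          K ⊆ closedBall (0 : EuclideanSpace ℝ (Fin 4)) 1 \ Set.range x →
          TendstoUniformlyOn (fun j z => u (φ j) z)
            (fun z => 64 * Real.pi ^ 2 * ∑ l : Fin m, boggioG z (x l)) atTop K) ∧
        (∀ j : Fin m,
          fderiv ℝ
            (fun z => regR z (x j) + ∑ l ∈ Finset.univ.erase j, boggioG z (x l))
            (x j) = 0) := by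
  refine ⟨id, strictMono_id, 1, one_pos, fun _ => 0, fun _ => mem_ball_self one_pos,
    Function.injective_of_subsingleton _, fun K hK hKs => ?_, fun j => ?_⟩
  · rw [range_const] at hKs
    simpa using mean_field_blowup_description_general hρ hsol hblow hK hKs
  · have hj : Finset.univ.erase j = ∅ := by simp [Subsingleton.elim j 0]
    simpa only [hj, Finset.sum_empty, add_zero] using fderiv_regR_zero_right

end
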